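/- Let h < h_star. There exists a constant c_h > 0 such that for all 0 < ε < (h_star − h)/2 and all ζ > 0, for all sufficiently large n and every x ∈ G_n with tx(B_{G_n}(x,2R_n)) = 0, one has P^{G_n}[ A_x^{G_n,h,c_h} ] ≥ η^+(h+ε) − ζ. As a consequence, liminf_{n→∞} (1/N_n)·E^{G_n}[ ∑_{x ∈ G_n} 1_{A_x^{G_n,h,c_h}} ] ≥ η^+(h) > 0. -/

import Mathlib

open MeasureTheory ProbabilityTheory Filter Set
open scoped ENNReal NNReal ENat Classical

namespace GFF

variable {V : Type*} {T : Type*}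

/-- Number of ordered adjacent pairs inside `U` (twice the number of edges of the induced
subgraph). -/
noncomputable def adjPairs (G : SimpleGraph V) (U : Set V) : ℕ :=
  Set.ncard {p : V × V | p.1 ∈ U ∧ p.2 ∈ U ∧ G.Adj p.1 p.2}

/-- `U` (assumed connected) induces a tree, i.e. has tree excess zero. -/
def TxZero (G : SimpleGraph V) (U : Set V) : Prop :=
  adjPairs G U = 2 * (Set.ncard U - 1)

/-- Closed ball of radius `R` for the graph distance. -/
def gball (G : SimpleGraph V) (x : V) (R : ℕ) : Set V := {y | G.dist x y ≤ R}

/-- Set of vertices within distance `R` of the set `A`. -/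
def sball (G : SimpleGraph V) (A : Set V) (R : ℕ) : Set V := {y | ∃ a ∈ A, G.dist a y ≤ R}

/-- Connected component containing `x` of the level set `{ω ≥ h}`. -/
def levelComp (G : SimpleGraph V) (h : ℝ) (ω : V → ℝ) (x : V) : Set V :=
  {y | ∃ p : G.Walk x y, ∀ v ∈ p.support, h ≤ ω v}

/-- `G` is `d`-regular. -/
def IsReg (G : SimpleGraph V) (d : ℕ) : Prop := ∀ v, Nat.card (G.neighborSet v) = d

/-- `G` is an infinite `d`-regular tree. -/
def IsRegTree (G : SimpleGraph V) (d : ℕ) : Prop :=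
  G.Connected ∧ G.IsAcyclic ∧ IsReg G d

/-- Transition matrix of SRW on a `d`-regular graph. -/
noncomputable def transP [Fintype V] (G : SimpleGraph V) (d : ℕ) : Matrix V V ℝ :=
  Matrix.of fun u v => if G.Adj u v then ((d : ℝ))⁻¹ else 0

/-- All non-zero eigenvalues of `I - P` are at least `β`. -/
def SpectralGapLB [Fintype V] (G : SimpleGraph V) (d : ℕ) (β : ℝ) : Prop :=
  ∀ (f : V → ℝ) (lam : ℝ),
    Matrix.mulVec ((1 : Matrix V V ℝ) - transP G d) f = lam • f → f ≠ 0 → lam = 0 ∨ β ≤ lam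

/-- `P_x[X̄_t = y]` for the continuous-time SRW with i.i.d. mean-one exponential holding
times (Poissonized jump chain). -/
noncomputable def heatK [Fintype V] (G : SimpleGraph V) (d : ℕ) (t : ℝ) (x y : V) : ℝ :=
  ∑' k : ℕ, Real.exp (-t) * t ^ k / (Nat.factorial k) * ((transP G d) ^ k) x y

/-- The zero-average Green function. -/
noncomputable def zGreen [Fintype V] (G : SimpleGraph V) (d Nn : ℕ) (x y : V) : ℝ :=
  ∫ t in Set.Ioi (0 : ℝ), (heatK G d t x y - 1 / (Nn : ℝ))

/-- Green function of SRW on the `d`-regular tree. -/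
noncomputable def treeGreen (G : SimpleGraph V) (d : ℕ) (x y : V) : ℝ :=
  (((d : ℝ) - 1) / ((d : ℝ) - 2)) * (((d : ℝ) - 1)⁻¹) ^ (G.dist x y)

/-- `μ` is the law of the centred Gaussian field with covariance `K`. -/
def IsGaussianField {I : Type*} (μ : Measure (I → ℝ)) (K : I → I → ℝ) : Prop :=
  IsProbabilityMeasure μ ∧
    ∀ c : I →₀ ℝ,
      μ.map (fun ω => ∑ i ∈ c.support, c i * ω i) =
        gaussianReal 0 (Real.toNNReal (∑ i ∈ c.support, ∑ j ∈ c.support, c i * c j * K i j))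

/-- One-step transition probability of SRW. -/
noncomputable def srwStep (G : SimpleGraph V) (d : ℕ) (u v : V) : ℝ≥0∞ :=
  if G.Adj u v then (d : ℝ≥0∞)⁻¹ else 0

/-- `W x` is the law of discrete-time SRW on `G` started at `x`. -/
def IsSRW [MeasurableSpace V] (G : SimpleGraph V) (d : ℕ) (W : V → Measure (ℕ → V)) : Prop :=
  (∀ x, IsProbabilityMeasure (W x)) ∧
    ∀ (x : V) (k : ℕ) (p : ℕ → V),
      W x {ω | ∀ i ≤ k, ω i = p i} =
        (if p 0 = x then 1 else 0) * ∏ i ∈ Finset.range k, srwStep G d (p i) (p (i + 1))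

/-- Entrance time of the set `A` (`⊤` if never entered). -/
noncomputable def hitTime (A : Set V) (ω : ℕ → V) : ℕ∞ :=
  sInf ((Nat.cast : ℕ → ℕ∞) '' {k | ω k ∈ A})

/-- Exit time of the set `U`. -/
noncomputable def exitTime (U : Set V) (ω : ℕ → V) : ℕ∞ := hitTime Uᶜ ω

/-- Position of the walk at the entrance time of `A`. -/
noncomputable def stopAt (A : Set V) (ω : ℕ → V) : V := ω (hitTime A ω).toNat

/-- `π` is a cover tree of `G` at `x`. -/
def IsCoverMap (Gt : SimpleGraph T) (G : SimpleGraph V) (o : T) (x : V) (π : T → V) : Prop :=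
  π o = x ∧ Function.Surjective π ∧ ∀ y : T, π '' (Gt.neighborSet y) = G.neighborSet (π y)

/-- `T_d^+`: the vertices of the tree whose geodesic to `o` avoids the fixed neighbour
`obar` of `o`. -/
def treePlus (Gt : SimpleGraph T) (o obar : T) : Set T :=
  {z | Gt.dist z obar = Gt.dist z o + 1}

/-- `S^+_{T_d}(o,R)`. -/
def spherePlus (Gt : SimpleGraph T) (o obar : T) (R : ℕ) : Set T :=
  {z | z ∈ treePlus Gt o obar ∧ Gt.dist o z = R}

/-- The critical value for level-set percolation on the tree (w.r.t. the law `μT`). -/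
noncomputable def hstar (Gt : SimpleGraph T) (o : T) (μT : Measure (T → ℝ)) : ℝ :=
  sInf {h : ℝ | μT {ω | (levelComp Gt h ω o).Infinite} = 0}

/-- The forward percolation probability `η⁺(h)`. -/
noncomputable def etaPlus (Gt : SimpleGraph T) (o obar : T) (μT : Measure (T → ℝ)) (h : ℝ) :
    ℝ :=
  (μT {ω | (levelComp Gt h ω o ∩ treePlus Gt o obar).Infinite}).toReal

/-- `s_n`. -/
noncomputable def sn (d Nn : ℕ) : ℕ :=
  max 1 ⌊(8 : ℝ) * Real.logb ((d : ℝ) - 1) (Real.logb ((d : ℝ) - 1) (Nn : ℝ))⌋₊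

/-- `c₀ = αβ/(d-1)`. -/
noncomputable def c0 (d : ℕ) (α β : ℝ) : ℝ := α * β / ((d : ℝ) - 1)

/-- `r_n`. -/
noncomputable def rn (d : ℕ) (α β : ℝ) (Nn : ℕ) : ℕ :=
  max 1 ⌊(c0 d α β / 18) * Real.logb ((d : ℝ) - 1) (Nn : ℝ)⌋₊

/-- `R_n`. -/
noncomputable def Rn (d : ℕ) (α β : ℝ) (Nn : ℕ) : ℕ :=
  max 1 ⌊(c0 d α β / 6) * Real.logb ((d : ℝ) - 1) (Nn : ℝ)⌋₊

/-- `F_A(x,s)`: the vertices of `B(A,s) ∖ A` connected to `x` within `B(A,s) ∖ A`. -/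
def Fset (G : SimpleGraph V) (A : Set V) (s : ℕ) (x : V) : Set V :=
  {z | ∃ p : G.Walk x z, ∀ v ∈ p.support, v ∈ sball G A s ∧ v ∉ A}

/-- Good vertex at the boundary of `A`. -/
def GoodVertex (G : SimpleGraph V) (A : Set V) (s : ℕ) (x : V) : Prop :=
  x ∉ A ∧ (∃! y, y ∈ A ∧ G.Adj x y) ∧
    TxZero G (Fset G A s x) ∧
    ∀ y : V, y ∉ A → (∃ a ∈ A, G.Adj y a) → y ≠ x →
      ∀ p : G.Walk y x, (∀ v ∈ p.support, v ∉ A) → ∃ v ∈ p.support, v ∉ sball G A s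

end GFF

/-!
The free field on the tree is a branching process: given the value `a` at a vertex, its `b = d - 1`
children carry independent values with mean `a / b`. Below `h_star`, monotonicity of the level sets
yields `δ > 0` such that every child of a vertex above level `h + ε` starts a path of any given
length with probability at least `δ`. Let every surviving vertex of the sphere of radius `r` carry a
mark with probability `t`, independently. As `x ↦ 1 - (1 - x) ^ b` is strictly concave, the
probability that some mark is reached is, up to a factor `1 - 1 / (t (1 + δ²) ^ r)`, the probability
to reach the sphere at all. With `t` a small negative power of `1 + δ²` this can only happen if
there are exponentially many survivors, so that `η⁺(h + ε)` bounds the probability of this growth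
from below.

If the ball around `x` is a tree, the Green function of the tree killed outside a ball, pushed
forward along the cover map, solves the Poisson equation on the graph up to an error which the
spectral gap controls. Hence the two covariances are exponentially close in `r`, and small
independent noises make the two Gaussian fields on the ball around `x` equal in law, at the cost of
lowering the level from `h + ε` to `h`.

For the average over all vertices, two distant vertices whose balls contain a cycle would give two
cycles in a larger ball, so these vertices all lie close to each other and are negligible in number.
Right continuity of `η⁺` then lets `ε` tend to `0`.
-/

namespace GFF

/-! ### The branching recursion -/

section BranchingRecursion

/-- The shape shared by all the survival probabilities below, as functions of the field value at
the root of a branching field: monotone with values in `[0, 1]`. -/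
structure IsSurvivalProfile (v : ℝ → ℝ) : Prop where
  mono : Monotone v
  nonneg : ∀ a, 0 ≤ v a
  le_one : ∀ a, v a ≤ 1

/-- The branching operator. In a field on the `b`-ary tree where a vertex with value `a` has
independent children with values `a / b + ξ`, `ξ ∼ ν`, it sends the probability `v` that a given
subtree is marked to the probability that the root is above level `h` and one of its `b` subtrees
is marked. -/
noncomputable def branchOp (b : ℕ) (ν : Measure ℝ) (h : ℝ) (v : ℝ → ℝ) : ℝ → ℝ :=
  fun a => if h ≤ a then 1 - (1 - ∫ x, v (a / b + x) ∂ν) ^ b else 0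

/-- Iterates of the branching operator, started from the probability that a root above level `h`
carries an independent mark of probability `t`. -/
noncomputable def branchIter (b : ℕ) (ν : Measure ℝ) (h t : ℝ) : ℕ → ℝ → ℝ
  | 0 => fun a => if h ≤ a then t else 0
  | l + 1 => branchOp b ν h (branchIter b ν h t l)

variable {b : ℕ} {ν : Measure ℝ} {v w p : ℝ → ℝ} {h h' t c δ : ℝ}

namespace IsSurvivalProfile

lemma comp_const_add (hv : IsSurvivalProfile v) (c : ℝ) : IsSurvivalProfile fun x => v (c + x) :=
  ⟨fun _ _ hab => hv.mono (by gcongr), fun _ => hv.nonneg _, fun _ => hv.le_one _⟩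

lemma integral_nonneg (hv : IsSurvivalProfile v) : 0 ≤ ∫ x, v x ∂ν :=
  MeasureTheory.integral_nonneg hv.nonneg

variable [IsProbabilityMeasure ν]

lemma integrable (hv : IsSurvivalProfile v) : Integrable v ν :=
  .of_bound hv.mono.measurable.aestronglyMeasurable 1 <| .of_forall fun x => by
    rw [Real.norm_of_nonneg (hv.nonneg x)]
    exact hv.le_one x

lemma integral_le_one (hv : IsSurvivalProfile v) : ∫ x, v x ∂ν ≤ 1 := by
  simpa using integral_mono (μ := ν) hv.integrable (integrable_const 1) hv.le_one

lemma one_sub_integral_mem_Icc (hv : IsSurvivalProfile v) : 1 - ∫ x, v x ∂ν ∈ Icc (0 : ℝ) 1 :=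
  ⟨sub_nonneg.2 hv.integral_le_one, sub_le_self _ hv.integral_nonneg⟩

lemma branchOp_le_branchOp (hv : IsSurvivalProfile v) (hw : IsSurvivalProfile w) (hvw : v ≤ w)
    (hh : h' ≤ h) {a a' : ℝ} (haa' : a ≤ a') : branchOp b ν h v a ≤ branchOp b ν h' w a' := by
  have hw' := (hw.comp_const_add (a' / b)).one_sub_integral_mem_Icc (ν := ν)
  unfold branchOp
  by_cases ha : h ≤ a
  · rw [if_pos ha, if_pos (hh.trans (ha.trans haa'))]
    have hle : ∫ x, v (a / b + x) ∂ν ≤ ∫ x, w (a' / b + x) ∂ν :=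
      integral_mono (hv.comp_const_add _).integrable (hw.comp_const_add _).integrable
        fun x => (hvw _).trans (hw.mono (by gcongr))
    gcongr
    exact hw'.1
  · rw [if_neg ha]
    split_ifs
    exacts [sub_nonneg.2 (pow_le_one₀ hw'.1 hw'.2), le_rfl]

lemma branchOp_le_one (hv : IsSurvivalProfile v) (a : ℝ) : branchOp b ν h v a ≤ 1 := by
  unfold branchOp
  split_ifs
  · exact sub_le_self _ (pow_nonneg (hv.comp_const_add _).one_sub_integral_mem_Icc.1 _)
  · exact zero_le_one

lemma branchOp_nonneg (hv : IsSurvivalProfile v) (a : ℝ) : 0 ≤ branchOp b ν h v a := by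
  have hv' := (hv.comp_const_add (a / b)).one_sub_integral_mem_Icc (ν := ν)
  unfold branchOp
  split_ifs
  exacts [sub_nonneg.2 (pow_le_one₀ hv'.1 hv'.2), le_rfl]

protected lemma branchOp (hv : IsSurvivalProfile v) (h : ℝ) :
    IsSurvivalProfile (branchOp b ν h v) :=
  ⟨fun _ _ hab => hv.branchOp_le_branchOp hv le_rfl le_rfl hab, hv.branchOp_nonneg,
    hv.branchOp_le_one⟩

end IsSurvivalProfile

variable [IsProbabilityMeasure ν]

lemma isSurvivalProfile_branchIter (h : ℝ) (ht0 : 0 ≤ t) (ht1 : t ≤ 1) (l : ℕ) :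
    IsSurvivalProfile (branchIter b ν h t l) := by
  induction l with
  | zero =>
    refine ⟨fun a a' haa' => ?_, fun a => ?_, fun a => ?_⟩ <;> simp only [branchIter] <;>
      split_ifs <;> linarith
  | succ l ih => exact ih.branchOp h

lemma branchIter_anti_level (hh : h' ≤ h) (ht0 : 0 ≤ t) (ht1 : t ≤ 1) (l : ℕ) :
    branchIter b ν h t l ≤ branchIter b ν h' t l := by
  induction l with
  | zero =>
    intro a
    simp only [branchIter]
    split_ifs <;> linarith
  | succ l ih =>
    exact fun a => (isSurvivalProfile_branchIter h ht0 ht1 l).branchOp_le_branchOp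
      (isSurvivalProfile_branchIter h' ht0 ht1 l) ih hh le_rfl

lemma branchIter_one_succ_le (h : ℝ) (l : ℕ) :
    branchIter b ν h 1 (l + 1) ≤ branchIter b ν h 1 l := by
  have hprofile := isSurvivalProfile_branchIter (b := b) (ν := ν) h zero_le_one le_rfl
  induction l with
  | zero =>
    intro a
    by_cases ha : h ≤ a
    · simpa [branchIter, ha] using (hprofile 1).le_one a
    · simp [branchIter, branchOp, ha]
  | succ l ih =>
    exact fun a => (hprofile _).branchOp_le_branchOp (hprofile _) ih le_rfl le_rfl

/-! ### Supermultiplicativity of the branching operator -/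

lemma mul_one_sub_pow_add_le {c x : ℝ} (hc0 : 0 ≤ c) (hc1 : c ≤ 1) (hx0 : 0 ≤ x) (hx1 : x ≤ 1)
    {k : ℕ} (hk : 2 ≤ k) :
    c * (1 - (1 - x) ^ k) + c * (1 - c) * x ^ 2 ≤ 1 - (1 - c * x) ^ k := by
  induction k, hk using Nat.le_induction with
  | base => exact le_of_eq (by ring)
  | succ k _ ih =>
    have hcx : 0 ≤ c * x := mul_nonneg hc0 hx0
    have hpow : (1 - x) ^ k ≤ (1 - c * x) ^ k :=
      pow_le_pow_left₀ (by linarith) (by nlinarith) _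
    rw [pow_succ (1 - x), pow_succ (1 - c * x)]
    nlinarith

-- Strict concavity of `x ↦ 1 - (1 - x) ^ b` on `[δ, 1]` makes the operator gain on scaling.
lemma IsSurvivalProfile.mul_branchOp_le (hb : 2 ≤ b) (hv : IsSurvivalProfile v)
    (hp : IsSurvivalProfile p) (hc0 : 0 ≤ c) (hc1 : c ≤ 1) (hδ : 0 ≤ δ)
    (hδp : ∀ a, h ≤ a → δ ≤ ∫ x, p (a / b + x) ∂ν) (hcp : ∀ a, c * p a ≤ v a) (a : ℝ) :
    (c + δ ^ 2 * c * (1 - c)) * branchOp b ν h p a ≤ branchOp b ν h v a := by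
  unfold branchOp
  by_cases ha : h ≤ a
  swap
  · simp [ha]
  rw [if_pos ha, if_pos ha]
  set A := ∫ x, p (a / b + x) ∂ν
  have hA := (hp.comp_const_add (a / b)).one_sub_integral_mem_Icc (ν := ν)
  have : 0 ≤ c * (1 - c) := mul_nonneg hc0 (by linarith)
  have hcA : c * A ≤ ∫ x, v (a / b + x) ∂ν := by
    rw [← integral_const_mul]
    exact integral_mono ((hp.comp_const_add _).integrable.const_mul c)
      (hv.comp_const_add _).integrable fun x => hcp _
  have hgain : δ ^ 2 * (c * (1 - c)) * (1 - (1 - A) ^ b) ≤ c * (1 - c) * A ^ 2 := by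
    calc δ ^ 2 * (c * (1 - c)) * (1 - (1 - A) ^ b)
        ≤ A ^ 2 * (c * (1 - c)) * 1 := by
          gcongr
          · exact sub_nonneg.2 (pow_le_one₀ hA.1 hA.2)
          · exact hδp a ha
          · exact sub_le_self _ (pow_nonneg hA.1 _)
      _ = c * (1 - c) * A ^ 2 := by ring
  calc (c + δ ^ 2 * c * (1 - c)) * (1 - (1 - A) ^ b)
      = c * (1 - (1 - A) ^ b) + δ ^ 2 * (c * (1 - c)) * (1 - (1 - A) ^ b) := by ring
    _ ≤ c * (1 - (1 - A) ^ b) + c * (1 - c) * A ^ 2 := by gcongr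
    _ ≤ 1 - (1 - c * A) ^ b :=
        mul_one_sub_pow_add_le hc0 hc1 (by linarith [hA.2]) (by linarith [hA.1]) hb
    _ ≤ 1 - (1 - ∫ x, v (a / b + x) ∂ν) ^ b := by
        gcongr
        exact (hv.comp_const_add _).one_sub_integral_mem_Icc.1

-- The logistic recursion `c ↦ c + κ c (1 - c)` approaches its fixed point `1` geometrically.
lemma one_sub_logistic_mul_le {c κ X : ℝ} (hc0 : 0 ≤ c) (hc1 : c ≤ 1) (hκ0 : 0 ≤ κ) (hκ1 : κ ≤ 1)
    (ht1 : t ≤ 1) (hcX : (1 - c) * X ≤ c * (1 - t)) :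
    (1 - (c + κ * c * (1 - c))) * (X * (1 + κ)) ≤ (c + κ * c * (1 - c)) * (1 - t) := by
  have hκc : 0 ≤ 1 - κ * c := by nlinarith
  have : 0 ≤ 1 - t := by linarith
  calc (1 - (c + κ * c * (1 - c))) * (X * (1 + κ))
      = ((1 - c) * X) * ((1 - κ * c) * (1 + κ)) := by ring
    _ ≤ (c * (1 - t)) * ((1 - κ * c) * (1 + κ)) := by gcongr
    _ ≤ (c * (1 - t)) * (1 + κ * (1 - c)) := by
        gcongr
        nlinarith [mul_nonneg (mul_nonneg hκ0 hκ0) hc0]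
    _ = (c + κ * c * (1 - c)) * (1 - t) := by ring

lemma exists_mul_le_of_branchOp (hb : 2 ≤ b) {v p : ℕ → ℝ → ℝ}
    (hv : ∀ k, IsSurvivalProfile (v k)) (hp : ∀ k, IsSurvivalProfile (p k))
    (hv_succ : ∀ k, v (k + 1) = branchOp b ν h (v k))
    (hp_succ : ∀ k, p (k + 1) = branchOp b ν h (p k))
    (hδ : 0 ≤ δ) (hδ1 : δ ≤ 1) (ht0 : 0 < t) (ht1 : t ≤ 1)
    (hδp : ∀ k a, h ≤ a → δ ≤ ∫ x, p k (a / b + x) ∂ν) (h0 : ∀ a, t * p 0 a ≤ v 0 a) (r : ℕ) :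
    ∃ c, 0 < c ∧ c ≤ 1 ∧ (1 - c) * (t * (1 + δ ^ 2) ^ r) ≤ c * (1 - t) ∧
      ∀ a, c * p r a ≤ v r a := by
  induction r with
  | zero => exact ⟨t, ht0, ht1, by simp [mul_comm], h0⟩
  | succ r ih =>
    obtain ⟨c, hc0, hc1, hc, hcp⟩ := ih
    have hκ0 : 0 ≤ δ ^ 2 := sq_nonneg δ
    have hκ1 : δ ^ 2 ≤ 1 := pow_le_one₀ hδ hδ1
    have hcc : 0 ≤ c * (1 - c) := mul_nonneg hc0.le (by linarith)
    refine ⟨c + δ ^ 2 * c * (1 - c), by nlinarith, by nlinarith, ?_, fun a => ?_⟩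
    · rw [pow_succ (1 + δ ^ 2), ← mul_assoc t]
      exact one_sub_logistic_mul_le hc0.le hc1 hκ0 hκ1 ht1 hc
    · rw [hv_succ, hp_succ]
      exact (hv r).mul_branchOp_le hb (hp r) hc0.le hc1 hδ (hδp r) hcp a

lemma one_sub_inv_mul_le_of_branchOp (hb : 2 ≤ b) {v p : ℕ → ℝ → ℝ}
    (hv : ∀ k, IsSurvivalProfile (v k)) (hp : ∀ k, IsSurvivalProfile (p k))
    (hv_succ : ∀ k, v (k + 1) = branchOp b ν h (v k))
    (hp_succ : ∀ k, p (k + 1) = branchOp b ν h (p k))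
    (hδ : 0 ≤ δ) (hδ1 : δ ≤ 1) (ht0 : 0 < t) (ht1 : t ≤ 1)
    (hδp : ∀ k a, h ≤ a → δ ≤ ∫ x, p k (a / b + x) ∂ν) (h0 : ∀ a, t * p 0 a ≤ v 0 a)
    (r : ℕ) (a : ℝ) :
    (1 - 1 / (t * (1 + δ ^ 2) ^ r)) * p r a ≤ v r a := by
  obtain ⟨c, hc0, hc1, hc, hcp⟩ :=
    exists_mul_le_of_branchOp hb hv hp hv_succ hp_succ hδ hδ1 ht0 ht1 hδp h0 r
  have hc' : 1 - 1 / (t * (1 + δ ^ 2) ^ r) ≤ c := by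
    rw [sub_le_comm, le_div_iff₀ (by positivity)]
    nlinarith
  exact (mul_le_mul_of_nonneg_right hc' ((hp r).nonneg a)).trans (hcp a)

end BranchingRecursion

/-! ### Finite-dimensional Gaussian fields -/

section GaussianVectors

variable {I J : Type*}

lemma IsGaussianField.comp_index {μ : Measure (J → ℝ)} {K : J → J → ℝ} (hμ : IsGaussianField μ K)
    (τ : I → J) :
    IsGaussianField (μ.map fun ω i => ω (τ i)) fun i i' => K (τ i) (τ i') := by
  have := hμ.1
  have hmeas : Measurable fun (ω : J → ℝ) (i : I) => ω (τ i) := by fun_prop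
  refine ⟨Measure.isProbabilityMeasure_map hmeas.aemeasurable, fun c => ?_⟩
  have hsum (g : J → ℝ) : ∑ j ∈ (c.mapDomain τ).support, c.mapDomain τ j * g j =
      ∑ i ∈ c.support, c i * g (τ i) :=
    Finsupp.sum_mapDomain_index (h := fun j a => a * g j) (by simp) fun _ _ _ => add_mul _ _ _
  have hvar : ∑ j ∈ (c.mapDomain τ).support, ∑ j' ∈ (c.mapDomain τ).support,
      c.mapDomain τ j * c.mapDomain τ j' * K j j' =
      ∑ i ∈ c.support, ∑ i' ∈ c.support, c i * c i' * K (τ i) (τ i') := by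
    simp_rw [mul_assoc, ← Finset.mul_sum, hsum]
  have hlaw := hμ.2 (c.mapDomain τ)
  rw [hvar] at hlaw
  rw [Measure.map_map (by fun_prop) hmeas, ← hlaw]
  exact congrArg (μ.map ·) (funext fun ω => (hsum ω).symm)

lemma IsGaussianField.map_eval {P : Measure (I → ℝ)} {K : I → I → ℝ} (hP : IsGaussianField P K)
    (i : I) : P.map (fun ω => ω i) = gaussianReal 0 (K i i).toNNReal := by
  simpa [Finsupp.support_single] using hP.2 (Finsupp.single i 1)

lemma IsGaussianField.measure_le_abs_apply_le {P : Measure (I → ℝ)} {K : I → I → ℝ}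
    (hP : IsGaussianField P K) {i : I} (hK : 0 ≤ K i i) {ε : ℝ} (hε : 0 < ε) :
    P {f | ε ≤ |f i|} ≤ ENNReal.ofReal (K i i / ε ^ 2) := by
  have htail := meas_ge_le_variance_div_sq (X := id)
    (memLp_id_gaussianReal (μ := 0) (v := (K i i).toNNReal) 2) hε
  rw [variance_id_gaussianReal, Real.coe_toNNReal _ hK] at htail
  simp only [id, integral_id_gaussianReal, sub_zero] at htail
  rwa [← hP.map_eval i, Measure.map_apply (by fun_prop)
    (measurableSet_le (by fun_prop) (by fun_prop))] at htail

lemma integral_cexp_gaussianReal (v : ℝ≥0) (s : ℝ) :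
    ∫ x : ℝ, Complex.exp (((s * x : ℝ) : ℂ) * Complex.I) ∂(gaussianReal 0 v) =
      Complex.exp (-((v * s ^ 2 : ℝ) : ℂ) / 2) := by
  have hchar := charFun_gaussianReal (μ := 0) (v := v) s
  rw [charFun_apply_real] at hchar
  push_cast
  rw [hchar]
  congr 1
  push_cast
  ring

variable [Fintype I]

/-- The quadratic form of a covariance kernel `K` on a finite set, i.e. the variance of
`∑ i, c i * ω i` under the centred Gaussian field with covariance `K`. -/
def covForm (K : I → I → ℝ) (c : I → ℝ) : ℝ := ∑ i, ∑ j, c i * c j * K i j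

variable {P P' : Measure (I → ℝ)} {K K' : I → I → ℝ}

lemma covForm_add (c : I → ℝ) : covForm (K + K') c = covForm K c + covForm K' c := by
  simp [covForm, mul_add, Finset.sum_add_distrib]

lemma covForm_smul (c : I → ℝ) (s : ℝ) : covForm K (s • c) = s ^ 2 * covForm K c := by
  simp only [covForm, Finset.mul_sum, Pi.smul_apply, smul_eq_mul]
  exact Finset.sum_congr rfl fun i _ => Finset.sum_congr rfl fun j _ => by ring

lemma covForm_const_mul (a : ℝ) (c : I → ℝ) :
    covForm (fun i j => a * K i j) c = a * covForm K c := by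
  simp only [covForm, Finset.mul_sum, mul_left_comm]

lemma IsGaussianField.map_sum (hP : IsGaussianField P K) (c : I → ℝ) :
    P.map (fun ω => ∑ i, c i * ω i) = gaussianReal 0 (covForm K c).toNNReal := by
  have hsum (c : I → ℝ) (g : I → ℝ) :
      ∑ i ∈ (Finsupp.equivFunOnFinite.symm c).support, c i * g i = ∑ i, c i * g i :=
    Finset.sum_subset (Finset.subset_univ _) fun i _ hi => by
      rw [Finsupp.notMem_support_iff.1 hi |> fun h => (h : c i = 0), zero_mul]
  simpa only [Finsupp.coe_equivFunOnFinite_symm, hsum, covForm, mul_assoc, ← Finset.mul_sum]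
    using hP.2 (Finsupp.equivFunOnFinite.symm c)

lemma isGaussianField_of_map_sum [IsProbabilityMeasure P]
    (h : ∀ c : I → ℝ, P.map (fun ω => ∑ i, c i * ω i) = gaussianReal 0 (covForm K c).toNNReal) :
    IsGaussianField P K := by
  refine ⟨inferInstance, fun c => ?_⟩
  have hsum (g : I → ℝ) : ∑ i ∈ c.support, c i * g i = ∑ i, c i * g i :=
    Finset.sum_subset (Finset.subset_univ _) fun i _ hi => by
      rw [Finsupp.notMem_support_iff.1 hi, zero_mul]
  simp_rw [hsum, mul_assoc, ← Finset.mul_sum, hsum]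
  simpa only [covForm, mul_assoc, ← Finset.mul_sum] using h c

lemma strongDual_pi_apply (L : StrongDual ℝ (I → ℝ)) (f : I → ℝ) :
    L f = ∑ j, L (Pi.single j 1) * f j := by
  conv_lhs => rw [pi_eq_sum_univ' f, map_sum]
  simp [mul_comm]

lemma IsGaussianField.eq_of_covForm_eq (hP : IsGaussianField P K) (hP' : IsGaussianField P' K')
    (hK : ∀ c, covForm K c = covForm K' c) : P = P' := by
  have := hP.1
  have := hP'.1
  refine Measure.ext_of_charFunDual (funext fun L => ?_)
  have hL : (L : (I → ℝ) → ℝ) = fun f => ∑ j, L (Pi.single j 1) * f j :=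
    funext (strongDual_pi_apply L)
  rw [charFunDual_eq_charFun_map_one, charFunDual_eq_charFun_map_one, hL, hP.map_sum,
    hP'.map_sum, hK]

lemma IsGaussianField.integral_cexp (hP : IsGaussianField P K) {c : I → ℝ} (hc : 0 ≤ covForm K c) :
    ∫ f, Complex.exp (((∑ j, c j * f j : ℝ) : ℂ) * Complex.I) ∂P =
      Complex.exp (-((covForm K c : ℝ) : ℂ) / 2) := by
  have hgauss := integral_cexp_gaussianReal (covForm K c).toNNReal 1
  rw [← hP.map_sum c, integral_map (Measurable.aemeasurable (by fun_prop))
    (Continuous.aestronglyMeasurable (by fun_prop)), Real.coe_toNNReal _ hc] at hgauss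
  simpa only [one_mul, one_pow, mul_one] using hgauss

lemma covForm_nonneg_of_integral_cexp [IsProbabilityMeasure P] {c : I → ℝ}
    (h : ∫ f, Complex.exp (((∑ j, c j * f j : ℝ) : ℂ) * Complex.I) ∂P =
      Complex.exp (-((covForm K c : ℝ) : ℂ) / 2)) : 0 ≤ covForm K c := by
  have hnorm : ‖Complex.exp (-((covForm K c : ℝ) : ℂ) / 2)‖ ≤ 1 := by
    rw [← h]
    refine (norm_integral_le_of_norm_le_const (C := 1) (.of_forall fun f =>
      (Complex.norm_exp_ofReal_mul_I _).le)).trans (by simp)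
  rw [show -((covForm K c : ℝ) : ℂ) / 2 = ((-covForm K c / 2 : ℝ) : ℂ) by push_cast; ring,
    Complex.norm_exp_ofReal, Real.exp_le_one_iff] at hnorm
  linarith

lemma isGaussianField_of_integral_cexp [IsProbabilityMeasure P]
    (h : ∀ c : I → ℝ, ∫ f, Complex.exp (((∑ j, c j * f j : ℝ) : ℂ) * Complex.I) ∂P =
      Complex.exp (-((covForm K c : ℝ) : ℂ) / 2)) : IsGaussianField P K := by
  refine isGaussianField_of_map_sum fun c => ?_
  have hmeas : Measurable fun f : I → ℝ => ∑ i, c i * f i := by fun_prop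
  have := Measure.isProbabilityMeasure_map (μ := P) hmeas.aemeasurable
  refine Measure.ext_of_charFun (funext fun s => ?_)
  have hs := h (s • c)
  rw [covForm_smul] at hs
  rw [charFun_apply_real, charFun_gaussianReal, integral_map hmeas.aemeasurable
    (Continuous.aestronglyMeasurable (by fun_prop))]
  have hsum (f : I → ℝ) : ∑ j, (s • c) j * f j = s * ∑ j, c j * f j := by
    simp only [Pi.smul_apply, smul_eq_mul, mul_assoc, Finset.mul_sum]
  have hnonneg : (((covForm K c).toNNReal : ℝ) : ℂ) = covForm K c :=
    congrArg _ (Real.coe_toNNReal _ (covForm_nonneg_of_integral_cexp (h c)))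
  simp_rw [hsum, Complex.ofReal_mul s] at hs
  rw [hs, hnonneg]
  congr 1
  push_cast
  ring

lemma IsGaussianField.conv (hP : IsGaussianField P K) (hP' : IsGaussianField P' K')
    (hK : ∀ c, 0 ≤ covForm K c) (hK' : ∀ c, 0 ≤ covForm K' c) :
    IsGaussianField (P.conv P') (K + K') := by
  have := hP.1
  have := hP'.1
  refine isGaussianField_of_integral_cexp fun c => ?_
  let L : StrongDual ℝ (I → ℝ) := ∑ j, c j • ContinuousLinearMap.proj j
  have hL (f : I → ℝ) : L f = ∑ j, c j * f j := by simp [L]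
  have hconv := charFunDual_conv (μ := P) (ν := P') L
  simp_rw [charFunDual_apply, hL] at hconv
  rw [hconv, hP.integral_cexp (hK c), hP'.integral_cexp (hK' c), ← Complex.exp_add, covForm_add]
  congr 1
  push_cast
  ring

lemma IsGaussianField.measure_exists_le_abs_le (hP : IsGaussianField P K) {w : ℝ}
    (hK : ∀ j, 0 ≤ K j j) (hw : ∀ j, K j j ≤ w) {ε : ℝ} (hε : 0 < ε) :
    P {f | ∃ j, ε ≤ |f j|} ≤ ENNReal.ofReal (Fintype.card I * (w / ε ^ 2)) := by
  rw [ofPred_exists]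
  calc P (⋃ j, {f | ε ≤ |f j|}) ≤ ∑ j, P {f | ε ≤ |f j|} := measure_iUnion_fintype_le _ _
    _ ≤ ∑ _j : I, ENNReal.ofReal (w / ε ^ 2) :=
        Finset.sum_le_sum fun j _ => (hP.measure_le_abs_apply_le (hK j) hε).trans
          (ENNReal.ofReal_le_ofReal (by have := hw j; gcongr))
    _ = ENNReal.ofReal (Fintype.card I * (w / ε ^ 2)) := by
        rw [Finset.sum_const, Finset.card_univ, nsmul_eq_mul,
          ENNReal.ofReal_mul (Nat.cast_nonneg _), ENNReal.ofReal_natCast]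

lemma covForm_eq_dotProduct (c : I → ℝ) : covForm K c = c ⬝ᵥ Matrix.mulVec (Matrix.of K) c := by
  simp only [covForm, dotProduct, Matrix.mulVec, Matrix.of_apply, Finset.mul_sum]
  exact Finset.sum_congr rfl fun i _ => Finset.sum_congr rfl fun j _ => by ring

end GaussianVectors

lemma exists_isGaussianField {I : Type*} [Finite I] {K : I → I → ℝ}
    (hK : (Matrix.of K).PosSemidef) : ∃ P : Measure (I → ℝ), IsGaussianField P K := by
  cases nonempty_fintype I
  have hmeas : Measurable fun x : EuclideanSpace ℝ I => (fun j => x j : I → ℝ) := by fun_prop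
  have := Measure.isProbabilityMeasure_map
    (μ := multivariateGaussian (0 : EuclideanSpace ℝ I) (Matrix.of K)) hmeas.aemeasurable
  refine ⟨_, isGaussianField_of_integral_cexp
    (P := (multivariateGaussian 0 (Matrix.of K)).map fun x j => x j) fun c => ?_⟩
  have hchar := charFun_multivariateGaussian (μ := (0 : EuclideanSpace ℝ I)) hK (WithLp.toLp 2 c)
  have hinner (x : EuclideanSpace ℝ I) : inner ℝ x (WithLp.toLp 2 c) = ∑ j, c j * x j := by
    simp [PiLp.inner_apply]
  rw [charFun_apply] at hchar
  simp_rw [hinner] at hchar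
  rw [integral_map hmeas.aemeasurable (Continuous.aestronglyMeasurable (by fun_prop)), hchar,
    covForm_eq_dotProduct]
  simp [neg_div]

/-! ### The branching Gaussian field on a finite `b`-ary tree -/

section BranchingField

/-- The vertices of the rooted `b`-ary tree of depth `l`, coded as words of length at most `l`;
`cons i w` is the vertex `w` of the subtree attached to the `i`-th child of the root. -/
inductive Word (b : ℕ) : ℕ → Type
  | root {l : ℕ} : Word b l
  | cons {l : ℕ} (i : Fin b) (w : Word b l) : Word b (l + 1)

/-- The innovations driving a branching field on `Word b l`: each child of the root receives a
real increment together with the innovations of its own subtree. -/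
def Noise (b : ℕ) : ℕ → Type
  | 0 => Unit
  | l + 1 => Fin b → ℝ × Noise b l

variable {b l : ℕ}

namespace Word

instance instUniqueZero : Unique (Word b 0) where
  default := root
  uniq | root => rfl

@[simp] lemma default_eq_root : (default : Word b 0) = root := rfl

/-- A nonempty word is a letter followed by a shorter word. -/
def succEquiv : Word b (l + 1) ≃ Option (Fin b × Word b l) where
  toFun | root => none | cons i w => some (i, w)
  invFun | none => root | some (i, w) => cons i w
  left_inv | root => rfl | cons _ _ => rfl
  right_inv | none => rfl | some _ => rfl

noncomputable instance instFintype : ∀ l, Fintype (Word b l)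
  | 0 => Unique.fintype
  | l + 1 => haveI := instFintype l; .ofEquiv _ succEquiv.symm

lemma sum_zero {M : Type*} [AddCommMonoid M] (f : Word b 0 → M) : ∑ w, f w = f root := by
  rw [Fintype.sum_unique]
  rfl

lemma sum_succ {M : Type*} [AddCommMonoid M] (f : Word b (l + 1) → M) :
    ∑ w, f w = f root + ∑ i, ∑ w, f (cons i w) := by
  rw [← succEquiv.symm.sum_comp, Fintype.sum_option, Fintype.sum_prod_type]
  rfl

lemma card_add_one_le (hb : 2 ≤ b) : ∀ l, Fintype.card (Word b l) + 1 ≤ 2 * b ^ l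
  | 0 => by simp
  | l + 1 => by
    have ih := card_add_one_le hb l
    rw [Fintype.card_congr succEquiv, Fintype.card_option, Fintype.card_prod, Fintype.card_fin,
      pow_succ]
    nlinarith

/-- The distance of a vertex to the root. -/
def depth : ∀ {l}, Word b l → ℕ
  | _, root => 0
  | _, cons _ w => depth w + 1

lemma depth_le : ∀ {l} (w : Word b l), w.depth ≤ l
  | _, root => Nat.zero_le _
  | _, cons _ w => Nat.succ_le_succ w.depth_le

/-- The graph distance between two vertices of the `b`-ary tree. -/
def treeDist : ∀ {l}, Word b l → Word b l → ℕ
  | _, root, w => w.depth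
  | _, cons _ w, root => w.depth + 1
  | _, cons i w, cons i' w' => if i = i' then treeDist w w' else w.depth + 1 + (w'.depth + 1)

/-- A leaf of the tree survives at level `h` in the configuration `f` if all the values of `f`
on the path from the root to this leaf are at least `h`; a vertex of depth less than `l` is not a
leaf and does not survive. -/
def Survives (h : ℝ) : ∀ {l}, (Word b l → ℝ) → Word b l → Prop
  | 0, f, root => h ≤ f root
  | _ + 1, _, root => False
  | _ + 1, f, cons i w => h ≤ f root ∧ Survives h (fun w' => f (cons i w')) w

lemma Survives.mono {h h' : ℝ} : ∀ {l} {f g : Word b l → ℝ},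
    (∀ w, h ≤ f w → h' ≤ g w) → ∀ {w}, Survives h f w → Survives h' g w
  | 0, _, _, hfg, root, hw => hfg root hw
  | _ + 1, _, _, hfg, cons _ _, hw => ⟨hfg root hw.1, hw.2.mono fun _ => hfg _⟩

/-- The number of leaves that survive at level `h`. -/
noncomputable def survivorCount (h : ℝ) (f : Word b l → ℝ) : ℕ := {w | Survives h f w}.ncard

lemma survivorCount_eq_sum (h : ℝ) (f : Word b l → ℝ) :
    survivorCount h f = ∑ w, if Survives h f w then 1 else 0 := by
  rw [survivorCount, Set.ncard_eq_toFinset_card']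
  simp

lemma survivorCount_zero (h : ℝ) (f : Word b 0 → ℝ) :
    survivorCount h f = if h ≤ f root then 1 else 0 := by
  rw [survivorCount_eq_sum, sum_zero]
  rfl

lemma survivorCount_succ (h : ℝ) (f : Word b (l + 1) → ℝ) :
    survivorCount h f =
      if h ≤ f root then ∑ i, survivorCount h (fun w => f (cons i w)) else 0 := by
  simp_rw [survivorCount_eq_sum, sum_succ, Survives]
  by_cases hf : h ≤ f root <;> simp [hf]

lemma survivorCount_mono {h h' : ℝ} {f g : Word b l → ℝ} (hfg : ∀ w, h ≤ f w → h' ≤ g w) :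
    survivorCount h f ≤ survivorCount h' g :=
  Set.ncard_le_ncard (fun _ hw => hw.mono hfg) (Set.toFinite _)

lemma one_le_survivorCount {h : ℝ} {f : Word b l → ℝ} :
    1 ≤ survivorCount h f ↔ ∃ w, Survives h f w :=
  Set.ncard_pos (Set.toFinite _)

lemma measurable_survivorCount (h : ℝ) : ∀ l, Measurable (survivorCount (b := b) (l := l) h)
  | 0 => by
    simp_rw [funext (survivorCount_zero (b := b) h)]
    exact .ite (measurableSet_le (by fun_prop) (by fun_prop)) (by fun_prop) (by fun_prop)
  | l + 1 => by
    simp_rw [funext (survivorCount_succ (b := b) (l := l) h)]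
    exact .ite (measurableSet_le (by fun_prop) (by fun_prop))
      (Finset.measurable_sum _ fun i _ => (measurable_survivorCount h l).comp (by fun_prop))
      (by fun_prop)

/-- The coefficient of the root value in the conditional mean of `∑ w, c w * f w`, where `f` is a
branching field. -/
noncomputable def rootCoeff (c : Word b l → ℝ) : ℝ := ∑ w, c w * ((b : ℝ)⁻¹) ^ w.depth

lemma rootCoeff_zero (c : Word b 0 → ℝ) : rootCoeff c = c root := by
  simp [rootCoeff, depth]

lemma rootCoeff_succ (c : Word b (l + 1) → ℝ) :
    rootCoeff c = c root + (b : ℝ)⁻¹ * ∑ i, rootCoeff fun w => c (cons i w) := by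
  simp only [rootCoeff, sum_succ, depth, pow_zero, mul_one, pow_succ, Finset.mul_sum]
  exact congrArg _ <| Finset.sum_congr rfl fun i _ => Finset.sum_congr rfl fun w _ => by ring

/-- The conditional variance of `∑ w, c w * f w` given the root value, where `f` is a branching
field with innovations of variance `s`. -/
noncomputable def innovationVar (s : ℝ) : ∀ {l}, (Word b l → ℝ) → ℝ
  | 0, _ => 0
  | _ + 1, c => ∑ i,
      (innovationVar s (fun w => c (cons i w)) + s * rootCoeff (fun w => c (cons i w)) ^ 2)

end Word

namespace Noise

noncomputable instance instMeasurableSpace : ∀ l, MeasurableSpace (Noise b l)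
  | 0 => inferInstanceAs (MeasurableSpace Unit)
  | l + 1 =>
    haveI := instMeasurableSpace l
    inferInstanceAs (MeasurableSpace (Fin b → ℝ × Noise b l))

/-- The law of independent innovations with distribution `ν`. -/
noncomputable def law (b : ℕ) (ν : Measure ℝ) : ∀ l, Measure (Noise b l)
  | 0 => (Measure.dirac () : Measure Unit)
  | l + 1 => (Measure.pi fun _ => ν.prod (law b ν l) : Measure (Fin b → ℝ × Noise b l))

instance instIsProbabilityMeasureLaw (ν : Measure ℝ) [IsProbabilityMeasure ν] :
    ∀ l, IsProbabilityMeasure (law b ν l)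
  | 0 => inferInstanceAs (IsProbabilityMeasure (Measure.dirac () : Measure Unit))
  | l + 1 =>
    haveI := instIsProbabilityMeasureLaw ν l
    inferInstanceAs (IsProbabilityMeasure
      (Measure.pi fun _ => ν.prod (law b ν l) : Measure (Fin b → ℝ × Noise b l)))

lemma integral_law_zero {E : Type*} [NormedAddCommGroup E] [NormedSpace ℝ E] [CompleteSpace E]
    (ν : Measure ℝ) (c : E) : ∫ _, c ∂law b ν 0 = c :=
  integral_dirac (fun _ : Unit => c) ()

lemma integral_law_succ {𝕜 : Type*} [RCLike 𝕜] (ν : Measure ℝ) [IsProbabilityMeasure ν]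
    (F : Fin b → ℝ × Noise b l → 𝕜) :
    ∫ ω : Noise b (l + 1), ∏ i, F i (ω i) ∂law b ν (l + 1) =
      ∏ i, ∫ p, F i p ∂ν.prod (law b ν l) :=
  integral_fintype_prod_eq_prod (μ := fun _ => ν.prod (law b ν l)) F

end Noise

/-- The branching field with root value `a`: a child of a vertex with value `a'` has value
`a' / b` plus its innovation. -/
noncomputable def branchField : ∀ {l}, ℝ → Noise b l → Word b l → ℝ
  | _, a, _, .root => a
  | _ + 1, a, ω, .cons i w => branchField (a / b + (ω i).1) (ω i).2 w

open Word

lemma branchField_root (a : ℝ) (ω : Noise b l) : branchField a ω root = a := by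
  cases l <;> rfl

lemma measurable_branchField :
    ∀ l, Measurable fun p : ℝ × Noise b l => branchField p.1 p.2
  | 0 => measurable_pi_lambda _ fun | root => measurable_fst
  | l + 1 => measurable_pi_lambda _ fun
    | root => measurable_fst
    | cons i w => by
      have hshift : Measurable fun p : ℝ × (Fin b → ℝ × Noise b l) =>
          (p.1 / b + (p.2 i).1, (p.2 i).2) := by fun_prop
      exact (measurable_pi_apply w).comp ((measurable_branchField l).comp hshift)

lemma measurable_branchField_const_add (a : ℝ) (l : ℕ) :
    Measurable fun p : ℝ × Noise b l => branchField (a + p.1) p.2 :=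
  (measurable_branchField l).comp (f := fun p : ℝ × Noise b l => (a + p.1, p.2)) (by fun_prop)

section GeneratingFunction

variable {ν ρ : Measure ℝ} [IsProbabilityMeasure ν] [IsProbabilityMeasure ρ] {h t : ℝ}

lemma integral_pow_survivorCount_const_add (ht0 : 0 ≤ t) (ht1 : t ≤ 1)
    (ih : ∀ a, ∫ ω, (1 - t) ^ survivorCount h (branchField a ω) ∂Noise.law b ν l =
      1 - branchIter b ν h t l a) (a : ℝ) :
    ∫ p : ℝ × Noise b l, (1 - t) ^ survivorCount h (branchField (a + p.1) p.2)
        ∂ρ.prod (Noise.law b ν l) =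
      1 - ∫ x, branchIter b ν h t l (a + x) ∂ρ := by
  have hmeas : Measurable fun p : ℝ × Noise b l =>
      (1 - t) ^ survivorCount h (branchField (a + p.1) p.2) :=
    (measurable_of_countable fun m : ℕ => (1 - t) ^ m).comp
      ((measurable_survivorCount h l).comp (measurable_branchField_const_add a l))
  have hint : Integrable _ (ρ.prod (Noise.law b ν l)) :=
    .of_bound hmeas.aestronglyMeasurable 1 <| .of_forall fun p => by
      rw [Real.norm_of_nonneg (pow_nonneg (by linarith) _)]
      exact pow_le_one₀ (by linarith) (by linarith)
  rw [integral_prod _ hint]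
  simp_rw [ih]
  rw [integral_sub (integrable_const _)
    ((isSurvivalProfile_branchIter h ht0 ht1 l).comp_const_add a).integrable]
  simp

-- Thinning the surviving leaves with probability `t` turns their number into a survival event.
lemma integral_pow_survivorCount_branchField (ht0 : 0 ≤ t) (ht1 : t ≤ 1) : ∀ l (a : ℝ),
    ∫ ω, (1 - t) ^ survivorCount h (branchField a ω) ∂Noise.law b ν l =
      1 - branchIter b ν h t l a
  | 0, a => by
    rw [← Noise.integral_law_zero ν (1 - branchIter b ν h t 0 a)]
    refine integral_congr_ae (.of_forall fun ω => ?_)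
    simp only [survivorCount_zero, branchField_root, branchIter]
    split_ifs <;> simp
  | l + 1, a => by
    simp_rw [survivorCount_succ, branchField_root]
    by_cases ha : h ≤ a
    · simp_rw [if_pos ha, ← Finset.prod_pow_eq_pow_sum]
      have hprod := Noise.integral_law_succ ν fun (_ : Fin b) (p : ℝ × Noise b l) =>
        (1 - t) ^ survivorCount h (branchField (a / b + p.1) p.2)
      rw [integral_pow_survivorCount_const_add ht0 ht1
        (integral_pow_survivorCount_branchField ht0 ht1 l)] at hprod
      refine hprod.trans ?_
      simp [branchIter, branchOp, ha]
    · simp [branchIter, branchOp, ha]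

end GeneratingFunction

section CharacteristicFunction

variable {s : ℝ≥0}

lemma integral_cexp_branchField_const_add (σ2 : ℝ≥0) {c : Word b l → ℝ}
    (ih : ∀ a, ∫ ω, Complex.exp (((∑ w, c w * branchField a ω w : ℝ) : ℂ) * Complex.I)
        ∂Noise.law b (gaussianReal 0 s) l =
      Complex.exp (((a * rootCoeff c : ℝ) : ℂ) * Complex.I - ((innovationVar s c : ℝ) : ℂ) / 2))
    (a : ℝ) :
    ∫ p : ℝ × Noise b l,
        Complex.exp (((∑ w, c w * branchField (a + p.1) p.2 w : ℝ) : ℂ) * Complex.I)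
        ∂(gaussianReal 0 σ2).prod (Noise.law b (gaussianReal 0 s) l) =
      Complex.exp (((a * rootCoeff c : ℝ) : ℂ) * Complex.I -
        ((innovationVar s c + σ2 * rootCoeff c ^ 2 : ℝ) : ℂ) / 2) := by
  have hcont : Continuous fun f : Word b l → ℝ =>
      Complex.exp (((∑ w, c w * f w : ℝ) : ℂ) * Complex.I) := by fun_prop
  have hint : Integrable (fun p : ℝ × Noise b l =>
      Complex.exp (((∑ w, c w * branchField (a + p.1) p.2 w : ℝ) : ℂ) * Complex.I))
      ((gaussianReal 0 σ2).prod (Noise.law b (gaussianReal 0 s) l)) :=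
    .of_bound
      (hcont.measurable.comp (measurable_branchField_const_add a l)).aestronglyMeasurable 1
      (.of_forall fun p => (Complex.norm_exp_ofReal_mul_I _).le)
  have hsplit (x : ℝ) : Complex.exp ((((a + x) * rootCoeff c : ℝ) : ℂ) * Complex.I -
      ((innovationVar s c : ℝ) : ℂ) / 2) =
      Complex.exp (((a * rootCoeff c : ℝ) : ℂ) * Complex.I - ((innovationVar s c : ℝ) : ℂ) / 2) *
        Complex.exp (((rootCoeff c * x : ℝ) : ℂ) * Complex.I) := by
    rw [← Complex.exp_add]
    congr 1
    push_cast
    ring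
  rw [integral_prod _ hint]
  simp_rw [ih, hsplit]
  rw [integral_const_mul, integral_cexp_gaussianReal, ← Complex.exp_add]
  congr 1
  push_cast
  ring

lemma integral_cexp_branchField : ∀ {l} (c : Word b l → ℝ) (a : ℝ),
    ∫ ω, Complex.exp (((∑ w, c w * branchField a ω w : ℝ) : ℂ) * Complex.I)
        ∂Noise.law b (gaussianReal 0 s) l =
      Complex.exp (((a * rootCoeff c : ℝ) : ℂ) * Complex.I - ((innovationVar s c : ℝ) : ℂ) / 2)
  | 0, c, a => by
    simp_rw [sum_zero, branchField_root, Noise.integral_law_zero, rootCoeff_zero, innovationVar]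
    simp [mul_comm]
  | l + 1, c, a => by
    have hfactor (ω : Noise b (l + 1)) :
        Complex.exp (((∑ w, c w * branchField a ω w : ℝ) : ℂ) * Complex.I) =
          Complex.exp (((c root * a : ℝ) : ℂ) * Complex.I) *
            ∏ i, Complex.exp (((∑ w, c (cons i w) * branchField (a / b + (ω i).1) (ω i).2 w : ℝ) :
              ℂ) * Complex.I) := by
      rw [sum_succ, ← Complex.exp_sum, ← Complex.exp_add, ← Finset.sum_mul, ← add_mul]
      push_cast
      rfl
    simp_rw [hfactor]
    rw [integral_const_mul]
    have hprod := Noise.integral_law_succ (gaussianReal 0 s)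
      fun (i : Fin b) (p : ℝ × Noise b l) => Complex.exp
        (((∑ w, c (cons i w) * branchField (a / b + p.1) p.2 w : ℝ) : ℂ) * Complex.I)
    simp_rw [integral_cexp_branchField_const_add s (integral_cexp_branchField _)] at hprod
    rw [hprod, ← Complex.exp_sum, ← Complex.exp_add, rootCoeff_succ, innovationVar]
    congr 1
    push_cast
    rw [Finset.sum_sub_distrib, ← Finset.sum_mul, ← Finset.sum_div, ← Finset.mul_sum]
    ring

end CharacteristicFunction

/-- The law of the branching field whose root value has variance `σ2` and whose innovations have
variance `s`. -/
noncomputable def branchLaw (b : ℕ) (σ2 s : ℝ≥0) (l : ℕ) : Measure (Word b l → ℝ) :=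
  ((gaussianReal 0 σ2).prod (Noise.law b (gaussianReal 0 s) l)).map fun p => branchField p.1 p.2

instance instIsProbabilityMeasureBranchLaw (σ2 s : ℝ≥0) (l : ℕ) :
    IsProbabilityMeasure (branchLaw b σ2 s l) :=
  Measure.isProbabilityMeasure_map (measurable_branchField l).aemeasurable

lemma integral_pow_survivorCount_branchLaw (σ2 s : ℝ≥0) (h : ℝ) {t : ℝ} (ht0 : 0 ≤ t)
    (ht1 : t ≤ 1) (l : ℕ) :
    ∫ f, (1 - t) ^ survivorCount h f ∂branchLaw b σ2 s l =
      1 - ∫ a, branchIter b (gaussianReal 0 s) h t l a ∂gaussianReal 0 σ2 := by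
  have hmeas : Measurable fun f : Word b l → ℝ => (1 - t) ^ survivorCount h f :=
    (measurable_of_countable fun m : ℕ => (1 - t) ^ m).comp (measurable_survivorCount h l)
  rw [branchLaw, integral_map (measurable_branchField l).aemeasurable hmeas.aestronglyMeasurable]
  simpa only [zero_add] using integral_pow_survivorCount_const_add ht0 ht1
    (integral_pow_survivorCount_branchField ht0 ht1 l) 0

/-! ### The covariance of the branching field -/

namespace Word

lemma innovationVar_nonneg {s : ℝ} (hs : 0 ≤ s) : ∀ {l} (c : Word b l → ℝ), 0 ≤ innovationVar s c
  | 0, _ => le_rfl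
  | _ + 1, _ => Finset.sum_nonneg fun _ _ =>
    add_nonneg (innovationVar_nonneg hs _) (mul_nonneg hs (sq_nonneg _))

lemma innovationVar_mul (r s : ℝ) : ∀ {l} (c : Word b l → ℝ),
    innovationVar (r * s) c = r * innovationVar s c
  | 0, _ => (mul_zero r).symm
  | _ + 1, c => by
    simp only [innovationVar, innovationVar_mul r s, Finset.mul_sum, mul_add, mul_assoc]

lemma covForm_treeDist_of_subtrees (c : Word b (l + 1) → ℝ)
    (ih : ∀ i, covForm (fun w w' => ((b : ℝ)⁻¹) ^ treeDist w w') (fun w => c (cons i w)) =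
      rootCoeff (fun w => c (cons i w)) ^ 2 +
        innovationVar (1 - ((b : ℝ)⁻¹) ^ 2) fun w => c (cons i w)) (i i' : Fin b) :
    ∑ w, ∑ w', c (cons i w) * c (cons i' w') * ((b : ℝ)⁻¹) ^ treeDist (cons i w) (cons i' w') =
      ((b : ℝ)⁻¹) ^ 2 * (rootCoeff (fun w => c (cons i w)) * rootCoeff fun w => c (cons i' w)) +
        if i = i' then innovationVar (1 - ((b : ℝ)⁻¹) ^ 2) (fun w => c (cons i w)) +
          (1 - ((b : ℝ)⁻¹) ^ 2) * rootCoeff (fun w => c (cons i w)) ^ 2 else 0 := by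
  by_cases hi : i = i'
  · subst hi
    simp only [treeDist, if_true]
    exact (ih i).trans (by ring)
  · rw [if_neg hi, add_zero, rootCoeff, rootCoeff, Finset.sum_mul_sum, Finset.mul_sum]
    simp only [treeDist, if_neg hi, Finset.mul_sum]
    exact Finset.sum_congr rfl fun w _ => Finset.sum_congr rfl fun w' _ => by ring

lemma covForm_treeDist : ∀ {l} (c : Word b l → ℝ),
    covForm (fun w w' => ((b : ℝ)⁻¹) ^ treeDist w w') c =
      rootCoeff c ^ 2 + innovationVar (1 - ((b : ℝ)⁻¹) ^ 2) c
  | 0, c => by simp [covForm, treeDist, depth, rootCoeff_zero, innovationVar, sq]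
  | l + 1, c => by
    have hroot_left : ∑ w, c root * c w * ((b : ℝ)⁻¹) ^ treeDist root w = c root * rootCoeff c := by
      simp only [rootCoeff, treeDist, Finset.mul_sum, mul_assoc]
    have hroot_right (i : Fin b) :
        ∑ w, c (cons i w) * c root * ((b : ℝ)⁻¹) ^ treeDist (cons i w) root =
          c root * ((b : ℝ)⁻¹) * rootCoeff fun w => c (cons i w) := by
      simp only [rootCoeff, treeDist, Finset.mul_sum]
      exact Finset.sum_congr rfl fun w _ => by ring
    have hblock := covForm_treeDist_of_subtrees c fun i => covForm_treeDist fun w => c (cons i w)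
    rw [covForm, sum_succ, hroot_left]
    simp_rw [sum_succ (M := ℝ) (l := l) (fun w' => _ * c w' * _), Finset.sum_add_distrib,
      hroot_right]
    have hswap (i : Fin b) : ∑ w, ∑ i', ∑ w', c (cons i w) * c (cons i' w') *
        ((b : ℝ)⁻¹) ^ treeDist (cons i w) (cons i' w') =
        ∑ i', ∑ w, ∑ w', c (cons i w) * c (cons i' w') *
          ((b : ℝ)⁻¹) ^ treeDist (cons i w) (cons i' w') := Finset.sum_comm
    simp_rw [hswap, hblock, Finset.sum_add_distrib, Finset.sum_ite_eq, Finset.mem_univ, if_true,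
      ← Finset.mul_sum, ← Finset.sum_mul, rootCoeff_succ, innovationVar, Finset.sum_add_distrib,
      ← Finset.mul_sum]
    ring

end Word

lemma isGaussianField_branchLaw {σ2 s : ℝ≥0} (hs : (s : ℝ) = σ2 * (1 - ((b : ℝ)⁻¹) ^ 2)) (l : ℕ) :
    IsGaussianField (branchLaw b σ2 s l) fun w w' => σ2 * ((b : ℝ)⁻¹) ^ treeDist w w' := by
  refine isGaussianField_of_integral_cexp fun c => ?_
  have hvar : covForm (fun w w' => (σ2 : ℝ) * ((b : ℝ)⁻¹) ^ treeDist w w') c =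
      innovationVar s c + σ2 * rootCoeff c ^ 2 := by
    rw [covForm_const_mul, covForm_treeDist, hs, innovationVar_mul]
    ring
  rw [branchLaw, integral_map (measurable_branchField l).aemeasurable
    (Continuous.aestronglyMeasurable (by fun_prop)), hvar]
  have hroot := integral_cexp_branchField_const_add σ2 (integral_cexp_branchField (s := s) c) 0
  simp only [zero_add, zero_mul, Complex.ofReal_zero, zero_sub] at hroot
  rw [hroot, neg_div]

end BranchingField

/-! ### Subtrees of a regular tree -/

open Word

section RegularTree

variable {T : Type*} {Gt : SimpleGraph T} {b l : ℕ} {ch : T → T → Fin b → T} {q w : T}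

lemma dist_eq_add_one_of_isTree (hG : Gt.IsTree) {u q w v : T} (hq : Gt.Adj w q)
    (hv : Gt.Adj w v) (hvq : v ≠ q) (huw : Gt.dist u w = Gt.dist u q + 1) :
    Gt.dist u v = Gt.dist u w + 1 := by
  refine (hG.dist_eq_dist_add_one_of_adj u hv).resolve_left fun hcloser => hvq ?_
  obtain ⟨p, hp⟩ := hG.connected.exists_walk_length_eq_dist u q
  obtain ⟨p', hp'⟩ := hG.connected.exists_walk_length_eq_dist u v
  have hpath : (p.concat hq.symm).IsPath :=
    SimpleGraph.Walk.isPath_of_length_eq_dist _ (by rw [SimpleGraph.Walk.length_concat, hp, huw])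
  have hpath' : (p'.concat hv.symm).IsPath :=
    SimpleGraph.Walk.isPath_of_length_eq_dist _
      (by rw [SimpleGraph.Walk.length_concat, hp', hcloser])
  have heq : p.concat hq.symm = p'.concat hv.symm :=
    congrArg Subtype.val ((hG.isAcyclic.subsingleton_path _ _).elim ⟨_, hpath⟩ ⟨_, hpath'⟩)
  simpa using (congrArg SimpleGraph.Walk.penultimate heq).symm

lemma length_eq_dist_of_isPath (hG : Gt.IsTree) {u v : T} {p : Gt.Walk u v} (hp : p.IsPath) :
    p.length = Gt.dist u v := by
  obtain ⟨p', hp', hlen⟩ := hG.connected.exists_path_of_dist u v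
  rw [← hlen, show p = p' from
    congrArg Subtype.val ((hG.isAcyclic.subsingleton_path _ _).elim ⟨p, hp⟩ ⟨p', hp'⟩)]

/-- `ch q w` enumerates the neighbours of `w` other than `q`, i.e. the children of `w` in the tree
rooted at `q`, for all adjacent `w` and `q`. -/
def IsChildEnum (Gt : SimpleGraph T) (ch : T → T → Fin b → T) : Prop :=
  ∀ ⦃q w⦄, Gt.Adj w q → BijOn (ch q w) univ (Gt.neighborSet w \ {q})

namespace IsChildEnum

lemma adj (hch : IsChildEnum Gt ch) (hq : Gt.Adj w q) (i : Fin b) : Gt.Adj w (ch q w i) :=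
  ((hch hq).mapsTo (mem_univ i)).1

lemma ne (hch : IsChildEnum Gt ch) (hq : Gt.Adj w q) (i : Fin b) : ch q w i ≠ q :=
  ((hch hq).mapsTo (mem_univ i)).2

lemma injective (hch : IsChildEnum Gt ch) (hq : Gt.Adj w q) : Function.Injective (ch q w) :=
  injOn_univ.1 (hch hq).injOn

lemma exists_eq (hch : IsChildEnum Gt ch) (hq : Gt.Adj w q) {v : T} (hv : Gt.Adj w v)
    (hvq : v ≠ q) : ∃ i, ch q w i = v := by
  obtain ⟨i, -, hi⟩ := (hch hq).surjOn ⟨hv, hvq⟩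
  exact ⟨i, hi⟩

end IsChildEnum

lemma exists_isChildEnum (hreg : IsReg Gt (b + 1)) :
    ∃ ch : T → T → Fin b → T, IsChildEnum Gt ch := by
  have hchildren (q w : T) : ∃ c : Fin b → T, Gt.Adj w q →
      BijOn c univ (Gt.neighborSet w \ {q}) := by
    by_cases hq : Gt.Adj w q
    · have hcard : Nat.card (Gt.neighborSet w \ {q} : Set T) = b := by
        rw [Nat.card_coe_set_eq,
          Set.ncard_sdiff_singleton_of_mem (show q ∈ Gt.neighborSet w from hq),
          ← Nat.card_coe_set_eq, hreg w, Nat.add_sub_cancel]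
      have : Finite (Gt.neighborSet w) := Nat.finite_of_card_ne_zero (by rw [hreg w]; omega)
      have : Finite (Gt.neighborSet w \ {q} : Set T) :=
        ((toFinite (Gt.neighborSet w)).subset sdiff_subset).to_subtype
      let e := (Finite.equivFinOfCardEq hcard).symm
      refine ⟨fun i => e i, fun _ => ⟨fun i _ => (e i).2,
        (Subtype.val_injective.comp e.injective).injOn, fun v hv => ?_⟩⟩
      exact ⟨e.symm ⟨v, hv⟩, mem_univ _, by simp⟩
    · exact ⟨fun _ => w, fun h => absurd h hq⟩
  choose ch hch using hchildren
  exact ⟨ch, fun q w => hch q w⟩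

/-- The vertex of the tree reached from `w` by following the children prescribed by a word, where
`q` is the parent of `w`. -/
def wordVertex (ch : T → T → Fin b → T) : ∀ {l}, T → T → Word b l → T
  | _, _, w, .root => w
  | _ + 1, q, w, .cons i x => wordVertex ch w (ch q w i) x

lemma wordVertex_root (q w : T) : wordVertex ch q w (root : Word b l) = w := by
  cases l <;> rfl

lemma dist_wordVertex_of_dist_eq (hG : Gt.IsTree) (hch : IsChildEnum Gt ch) {u : T} :
    ∀ {l q w}, Gt.Adj w q → Gt.dist u w = Gt.dist u q + 1 → ∀ x : Word b l,
      Gt.dist u (wordVertex ch q w x) = Gt.dist u w + x.depth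
  | _, q, w, _, _, root => by rw [wordVertex_root]; rfl
  | _ + 1, q, w, hq, hu, cons i x => by
    have hchild := dist_eq_add_one_of_isTree hG hq (hch.adj hq i) (hch.ne hq i) hu
    have ih := dist_wordVertex_of_dist_eq hG hch (hch.adj hq i).symm hchild x
    rw [wordVertex, depth]
    omega

lemma dist_parent_wordVertex (hG : Gt.IsTree) (hch : IsChildEnum Gt ch) (hq : Gt.Adj w q)
    (x : Word b l) : Gt.dist q (wordVertex ch q w x) = x.depth + 1 := by
  have hqw : Gt.dist q w = 1 := SimpleGraph.dist_eq_one_iff_adj.2 hq.symm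
  rw [dist_wordVertex_of_dist_eq hG hch hq (by simp [hqw]), hqw, add_comm]

lemma dist_wordVertex (hG : Gt.IsTree) (hch : IsChildEnum Gt ch) (hq : Gt.Adj w q) :
    ∀ {l} (x : Word b l), Gt.dist w (wordVertex ch q w x) = x.depth
  | _, root => by rw [wordVertex_root, SimpleGraph.dist_self]; rfl
  | _ + 1, cons i x => dist_parent_wordVertex hG hch (hch.adj hq i).symm x

lemma dist_wordVertex_wordVertex (hG : Gt.IsTree) (hch : IsChildEnum Gt ch) :
    ∀ {l q w}, Gt.Adj w q → ∀ x y : Word b l,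
      Gt.dist (wordVertex ch q w x) (wordVertex ch q w y) = x.treeDist y
  | _, q, w, hq, root, y => by rw [wordVertex_root, dist_wordVertex hG hch hq]; rfl
  | _ + 1, q, w, hq, cons i x, root => by
    rw [wordVertex_root, SimpleGraph.dist_comm, dist_wordVertex hG hch hq]
    rfl
  | _ + 1, q, w, hq, cons i x, cons i' y => by
    have hi := hch.adj hq i
    simp only [wordVertex, treeDist]
    split_ifs with h
    · subst h
      exact dist_wordVertex_wordVertex hG hch hi.symm x y
    · set u := wordVertex ch w (ch q w i) x
      have huw : Gt.dist u w = x.depth + 1 := by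
        rw [SimpleGraph.dist_comm, dist_parent_wordVertex hG hch hi.symm]
      have hui : Gt.dist u (ch q w i) = x.depth := by
        rw [SimpleGraph.dist_comm, dist_wordVertex hG hch hi.symm]
      have hui' := dist_eq_add_one_of_isTree hG hi (hch.adj hq i')
        (fun heq => h (hch.injective hq heq).symm) (by rw [huw, hui])
      rw [dist_wordVertex_of_dist_eq hG hch (hch.adj hq i').symm hui' y, hui', huw]
      omega

lemma Word.eq_of_treeDist_eq_zero : ∀ {l} {x y : Word b l}, x.treeDist y = 0 → x = y
  | _, root, root, _ => rfl
  | _ + 1, root, cons _ _, h => absurd h (Nat.succ_ne_zero _)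
  | _ + 1, cons _ _, root, h => absurd h (Nat.succ_ne_zero _)
  | _ + 1, cons i x, cons i' y, h => by
    rw [treeDist] at h
    split_ifs at h with hi
    rw [hi, eq_of_treeDist_eq_zero h]

lemma wordVertex_injective (hG : Gt.IsTree) (hch : IsChildEnum Gt ch) (hq : Gt.Adj w q) :
    Function.Injective (wordVertex ch q w : Word b l → T) := fun x y hxy =>
  Word.eq_of_treeDist_eq_zero <| by
    rw [← dist_wordVertex_wordVertex hG hch hq, hxy, SimpleGraph.dist_self]

lemma mem_levelComp_of_adj {G : SimpleGraph T} {h : ℝ} {ω : T → ℝ} {x y z : T} (hxy : G.Adj x y)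
    (hx : h ≤ ω x) (hz : z ∈ levelComp G h ω y) : z ∈ levelComp G h ω x := by
  obtain ⟨p, hp⟩ := hz
  refine ⟨.cons hxy p, fun v hv => ?_⟩
  obtain rfl | hv := List.mem_cons.1 hv
  exacts [hx, hp v hv]

lemma mem_levelComp_of_survives (hch : IsChildEnum Gt ch) {h : ℝ} {ω : T → ℝ} :
    ∀ {l q w}, Gt.Adj w q → ∀ {x : Word b l}, Survives h (fun x => ω (wordVertex ch q w x)) x →
      wordVertex ch q w x ∈ levelComp Gt h ω w ∧ x.depth = l
  | 0, q, w, _, root, hx => by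
    refine ⟨⟨(.nil : Gt.Walk w w), fun v hv => ?_⟩, rfl⟩
    rwa [List.mem_singleton.1 hv]
  | _ + 1, q, w, hq, cons i x, hx => by
    obtain ⟨hmem, hdepth⟩ := mem_levelComp_of_survives hch (hch.adj hq i).symm hx.2
    exact ⟨mem_levelComp_of_adj (hch.adj hq i) hx.1 hmem, congrArg (· + 1) hdepth⟩

lemma exists_survives_of_isPath (hG : Gt.IsTree) (hch : IsChildEnum Gt ch) {h : ℝ} {ω : T → ℝ} :
    ∀ {l q w z}, Gt.Adj w q → Gt.dist q z = Gt.dist w z + 1 → l ≤ Gt.dist w z →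
      ∀ p : Gt.Walk w z, p.IsPath → (∀ v ∈ p.support, h ≤ ω v) →
        ∃ x : Word b l, Survives h (fun x => ω (wordVertex ch q w x)) x
  | 0, q, w, z, _, _, _, p, _, hp => ⟨root, hp w p.start_mem_support⟩
  | _ + 1, q, w, _, _, _, hl, .nil, _, _ => absurd hl (by simp)
  | l + 1, q, w, z, hq, hqz, hl, .cons (v := v) hadj p, hpath, hp => by
    have hlen := length_eq_dist_of_isPath hG hpath
    have hlen' := length_eq_dist_of_isPath hG hpath.of_cons
    rw [SimpleGraph.Walk.length_cons] at hlen
    have hvq : v ≠ q := by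
      rintro rfl
      omega
    obtain ⟨i, rfl⟩ := hch.exists_eq hq hadj hvq
    have hdist : Gt.dist w z = Gt.dist (ch q w i) z + 1 := by omega
    obtain ⟨x, hx⟩ := exists_survives_of_isPath (l := l) hG hch hadj.symm hdist (by omega) p
      hpath.of_cons fun u hu => hp u (List.mem_cons_of_mem _ hu)
    exact ⟨cons i x, hp w (SimpleGraph.Walk.start_mem_support _), hx⟩

lemma exists_survives_of_mem_levelComp (hG : Gt.IsTree) (hch : IsChildEnum Gt ch) {h : ℝ}
    {ω : T → ℝ} {z : T} (hq : Gt.Adj w q) (hqz : Gt.dist q z = Gt.dist w z + 1)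
    (hl : l ≤ Gt.dist w z) (hz : z ∈ levelComp Gt h ω w) :
    ∃ x : Word b l, Survives h (fun x => ω (wordVertex ch q w x)) x := by
  obtain ⟨p, hp⟩ := hz
  exact exists_survives_of_isPath hG hch hq hqz hl p.bypass p.bypass_isPath
    fun v hv => hp v (p.support_bypass_subset_support hv)

end RegularTree

/-! ### Level sets of the free field on the regular tree -/

lemma exists_adj_dist_eq {V : Type*} {G : SimpleGraph V} (hc : G.Connected) {u v : V} {j : ℕ}
    (h : G.dist u v = j + 1) : ∃ w, G.Adj v w ∧ G.dist u w = j := by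
  obtain ⟨p, hp⟩ := hc.exists_walk_length_eq_dist v u
  rw [SimpleGraph.dist_comm, h] at hp
  cases p with
  | nil => simp at hp
  | @cons _ w _ hadj p =>
    have hle := SimpleGraph.dist_le p
    have htri := hc.dist_triangle (u := u) (v := w) (w := v)
    rw [SimpleGraph.dist_eq_one_iff_adj.2 hadj.symm] at htri
    rw [SimpleGraph.Walk.length_cons] at hp
    rw [SimpleGraph.dist_comm] at hle
    exact ⟨w, hadj, by omega⟩

lemma finite_gball {V : Type*} {G : SimpleGraph V} (hc : G.Connected) {d : ℕ} (hd : 1 ≤ d)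
    (hreg : IsReg G d) (x : V) (r : ℕ) : (gball G x r).Finite := by
  induction r with
  | zero =>
    refine (finite_singleton x).subset fun y hy => ?_
    exact ((hc.dist_eq_zero_iff).1 (Nat.le_zero.1 hy)).symm
  | succ r ih =>
    have hnbr (v : V) : (G.neighborSet v).Finite :=
      finite_of_ncard_pos (by rw [show (G.neighborSet v).ncard = d from hreg v]; exact hd)
    refine (ih.union (ih.biUnion fun v _ => hnbr v)).subset fun y hy => ?_
    rcases Nat.le_succ_iff.1 (show G.dist x y ≤ r + 1 from hy) with hle | heq
    · exact .inl hle
    · obtain ⟨w, hadj, hw⟩ := exists_adj_dist_eq hc heq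
      exact .inr (mem_biUnion hw.le hadj.symm)

/-- The variance of the free field on the `(b + 1)`-regular tree. -/
noncomputable def treeVar (b : ℕ) : ℝ≥0 := Real.toNNReal ((b : ℝ) / ((b : ℝ) - 1))

/-- The conditional variance, given the value at the parent, of the free field at a vertex of the
`(b + 1)`-regular tree. -/
noncomputable def treeCondVar (b : ℕ) : ℝ≥0 :=
  Real.toNNReal ((b : ℝ) / ((b : ℝ) - 1) * (1 - ((b : ℝ)⁻¹) ^ 2))

/-- The probability that the field on the words of length at most `r` has a survivor of level `h`
carrying a mark, when the survivors are marked independently with probability `t`. -/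
noncomputable def reachProb (b : ℕ) (t : ℝ) (r : ℕ) (h : ℝ) : ℝ :=
  ∫ a, branchIter b (gaussianReal 0 (treeCondVar b)) h t r a ∂gaussianReal 0 (treeVar b)

section Variances

variable {b : ℕ}

lemma div_sub_one_pos (hb : 2 ≤ b) : 0 < (b : ℝ) / ((b : ℝ) - 1) := by
  have : (2 : ℝ) ≤ b := by exact_mod_cast hb
  exact div_pos (by linarith) (by linarith)

lemma one_sub_inv_sq_pos (hb : 2 ≤ b) : 0 < 1 - ((b : ℝ)⁻¹) ^ 2 := by
  have : (2 : ℝ) ≤ b := by exact_mod_cast hb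
  exact sub_pos.2 (pow_lt_one₀ (by positivity) (inv_lt_one_of_one_lt₀ (by linarith)) two_ne_zero)

lemma coe_treeVar (hb : 2 ≤ b) : (treeVar b : ℝ) = b / (b - 1) :=
  Real.coe_toNNReal _ (div_sub_one_pos hb).le

lemma coe_treeCondVar (hb : 2 ≤ b) : (treeCondVar b : ℝ) = treeVar b * (1 - ((b : ℝ)⁻¹) ^ 2) := by
  rw [coe_treeVar hb]
  exact Real.coe_toNNReal _ (mul_pos (div_sub_one_pos hb) (one_sub_inv_sq_pos hb)).le

lemma treeVar_ne_zero (hb : 2 ≤ b) : treeVar b ≠ 0 :=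
  (Real.toNNReal_pos.2 (div_sub_one_pos hb)).ne'

lemma treeCondVar_ne_zero (hb : 2 ≤ b) : treeCondVar b ≠ 0 :=
  (Real.toNNReal_pos.2 (mul_pos (div_sub_one_pos hb) (one_sub_inv_sq_pos hb))).ne'

end Variances

lemma measurableSet_one_le_survivorCount {b l : ℕ} (h : ℝ) :
    MeasurableSet {f : Word b l → ℝ | 1 ≤ survivorCount h f} :=
  measurableSet_le measurable_const (measurable_survivorCount h l)

lemma measureReal_branchLaw_one_le_survivorCount (b : ℕ) (h : ℝ) (l : ℕ) :
    (branchLaw b (treeVar b) (treeCondVar b) l).real {f | 1 ≤ survivorCount h f} =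
      reachProb b 1 l h := by
  set A : Set (Word b l → ℝ) := {f | 1 ≤ survivorCount h f}
  have hmark (f : Word b l → ℝ) : (1 - (1 : ℝ)) ^ survivorCount h f = 1 - A.indicator 1 f := by
    by_cases hf : f ∈ A
    · have : survivorCount h f ≠ 0 := Nat.one_le_iff_ne_zero.1 hf
      rw [indicator_of_mem hf, sub_self, zero_pow this, Pi.one_apply, sub_self]
    · rw [indicator_of_notMem hf, show survivorCount h f = 0 from Nat.lt_one_iff.1 (not_le.1 hf),
        pow_zero, sub_zero]
  have hgen := integral_pow_survivorCount_branchLaw (b := b) (treeVar b) (treeCondVar b) h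
    zero_le_one le_rfl l
  simp_rw [hmark] at hgen
  rw [integral_sub (integrable_const _)
      ((integrable_const 1).indicator (measurableSet_one_le_survivorCount h)),
    integral_indicator_one (measurableSet_one_le_survivorCount h), integral_const, probReal_univ,
    one_smul] at hgen
  exact sub_right_injective hgen

section TreeField

variable {T : Type*} {Gt : SimpleGraph T} {b : ℕ} {ch : T → T → Fin b → T} {q w : T}
  {μT : Measure (T → ℝ)}

lemma treeGreen_wordVertex (hb : 2 ≤ b) (hG : Gt.IsTree) (hch : IsChildEnum Gt ch)
    (hq : Gt.Adj w q) {l : ℕ} (x y : Word b l) :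
    treeGreen Gt (b + 1) (wordVertex ch q w x) (wordVertex ch q w y) =
      treeVar b * ((b : ℝ)⁻¹) ^ x.treeDist y := by
  rw [treeGreen, dist_wordVertex_wordVertex hG hch hq, coe_treeVar hb]
  push_cast
  rw [add_sub_cancel_right, show (b : ℝ) + 1 - 2 = b - 1 by ring]

lemma map_wordVertex_eq_branchLaw (hb : 2 ≤ b) (hG : Gt.IsTree) (hch : IsChildEnum Gt ch)
    (hq : Gt.Adj w q) (hμT : IsGaussianField μT (treeGreen Gt (b + 1))) (l : ℕ) :
    μT.map (fun ω x => ω (wordVertex ch q w x)) = branchLaw b (treeVar b) (treeCondVar b) l :=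
  (hμT.comp_index _).eq_of_covForm_eq (isGaussianField_branchLaw (coe_treeCondVar hb) l)
    fun c => by simp_rw [covForm, treeGreen_wordVertex hb hG hch hq]

/-- The event that the part of the level set component of `w` away from its neighbour `q` reaches
distance `r` from `w`. -/
def reachEvent (Gt : SimpleGraph T) (q w : T) (h : ℝ) (r : ℕ) : Set (T → ℝ) :=
  {ω | ∃ z ∈ levelComp Gt h ω w ∩ treePlus Gt w q, r ≤ Gt.dist w z}

lemma reachEvent_eq_preimage (hG : Gt.IsTree) (hch : IsChildEnum Gt ch) (hq : Gt.Adj w q) (h : ℝ)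
    (r : ℕ) :
    reachEvent Gt q w h r =
      (fun ω (x : Word b r) => ω (wordVertex ch q w x)) ⁻¹' {f | 1 ≤ survivorCount h f} := by
  ext ω
  rw [mem_preimage, mem_ofPred_eq, one_le_survivorCount]
  constructor
  · rintro ⟨z, ⟨hz, hzq⟩, hr⟩
    have hqz : Gt.dist q z = Gt.dist w z + 1 := by
      rw [SimpleGraph.dist_comm, SimpleGraph.dist_comm (u := w)]
      exact hzq
    exact exists_survives_of_mem_levelComp hG hch hq hqz hr hz
  · rintro ⟨x, hx⟩
    obtain ⟨hmem, hdepth⟩ := mem_levelComp_of_survives hch hq hx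
    refine ⟨_, ⟨hmem, ?_⟩, ?_⟩
    · change Gt.dist _ _ = Gt.dist _ _ + 1
      rw [SimpleGraph.dist_comm, dist_parent_wordVertex hG hch hq, SimpleGraph.dist_comm,
        dist_wordVertex hG hch hq]
    · rw [dist_wordVertex hG hch hq, hdepth]

lemma measurableSet_reachEvent (hG : Gt.IsTree) (hch : IsChildEnum Gt ch) (hq : Gt.Adj w q)
    (h : ℝ) (r : ℕ) : MeasurableSet (reachEvent Gt q w h r) := by
  rw [reachEvent_eq_preimage hG hch hq]
  exact (measurableSet_one_le_survivorCount h).preimage (by fun_prop)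

lemma measureReal_reachEvent (hb : 2 ≤ b) (hG : Gt.IsTree) (hch : IsChildEnum Gt ch)
    (hq : Gt.Adj w q) (hμT : IsGaussianField μT (treeGreen Gt (b + 1))) (h : ℝ) (r : ℕ) :
    μT.real (reachEvent Gt q w h r) = reachProb b 1 r h := by
  rw [reachEvent_eq_preimage hG hch hq, ← measureReal_branchLaw_one_le_survivorCount,
    ← map_wordVertex_eq_branchLaw hb hG hch hq hμT,
    map_measureReal_apply (by fun_prop) (measurableSet_one_le_survivorCount h)]

lemma setOf_infinite_eq_iInter_reachEvent (hc : Gt.Connected) (hreg : IsReg Gt (b + 1)) (h : ℝ) :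
    {ω | (levelComp Gt h ω w ∩ treePlus Gt w q).Infinite} = ⋂ r, reachEvent Gt q w h r := by
  ext ω
  rw [mem_iInter, mem_ofPred_eq]
  constructor
  · intro hinf r
    obtain ⟨z, hz, hzr⟩ := (hinf.sdiff (finite_gball hc (by omega) hreg w r)).nonempty
    exact ⟨z, hz, (not_le.1 hzr).le⟩
  · intro hr hfin
    obtain ⟨M, hM⟩ := (hfin.image fun z => Gt.dist w z).bddAbove
    obtain ⟨z, hz, hzM⟩ := hr (M + 1)
    exact absurd (hM (mem_image_of_mem _ hz)) (not_le.2 hzM)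

lemma tendsto_reachProb_etaPlus (hb : 2 ≤ b) (ht : IsRegTree Gt (b + 1)) (hq : Gt.Adj w q)
    (hμT : IsGaussianField μT (treeGreen Gt (b + 1))) (h : ℝ) :
    Tendsto (fun r => reachProb b 1 r h) atTop (nhds (etaPlus Gt w q μT h)) := by
  have := hμT.1
  have hG : Gt.IsTree := ⟨ht.1, ht.2.1⟩
  obtain ⟨ch, hch⟩ := exists_isChildEnum ht.2.2
  rw [etaPlus, setOf_infinite_eq_iInter_reachEvent ht.1 ht.2.2]
  have hlim := tendsto_measure_iInter_atTop (μ := μT) (s := reachEvent Gt q w h)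
    (fun r => (measurableSet_reachEvent hG hch hq h r).nullMeasurableSet)
    (fun r s hrs ω ⟨z, hz, hzs⟩ => ⟨z, hz, hrs.trans hzs⟩) ⟨0, measure_ne_top _ _⟩
  exact ((ENNReal.tendsto_toReal (measure_ne_top _ _)).comp hlim).congr
    (measureReal_reachEvent hb hG hch hq hμT h)

lemma treePlus_union_treePlus (hG : Gt.IsTree) {q' : T} (hq : Gt.Adj w q) (hq' : Gt.Adj w q')
    (hne : q' ≠ q) : treePlus Gt w q ∪ treePlus Gt w q' = univ :=
  eq_univ_of_forall fun z => (hG.dist_eq_dist_add_one_of_adj z hq).symm.imp id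
    (dist_eq_add_one_of_isTree hG hq hq' hne)

lemma measure_infinite_levelComp_eq_zero_iff (hb : 2 ≤ b) (ht : IsRegTree Gt (b + 1))
    (hq : Gt.Adj w q) (hμT : IsGaussianField μT (treeGreen Gt (b + 1))) (h : ℝ) :
    μT {ω | (levelComp Gt h ω w).Infinite} = 0 ↔ etaPlus Gt w q μT h = 0 := by
  have := hμT.1
  have hG : Gt.IsTree := ⟨ht.1, ht.2.1⟩
  constructor
  · intro hzero
    have hnull : μT {ω | (levelComp Gt h ω w ∩ treePlus Gt w q).Infinite} = 0 :=
      measure_mono_null (fun ω hω => Infinite.mono inter_subset_left hω) hzero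
    rw [etaPlus, hnull, ENNReal.toReal_zero]
  · intro hzero
    obtain ⟨ch, hch⟩ := exists_isChildEnum ht.2.2
    let i : Fin b := ⟨0, by omega⟩
    have hq' := hch.adj hq i
    have hzero' : etaPlus Gt w (ch q w i) μT h = 0 :=
      (tendsto_nhds_unique (tendsto_reachProb_etaPlus hb ht hq' hμT h)
        (tendsto_reachProb_etaPlus hb ht hq hμT h)).trans hzero
    have hnull {q} (hq0 : etaPlus Gt w q μT h = 0) :
        μT {ω | (levelComp Gt h ω w ∩ treePlus Gt w q).Infinite} = 0 :=
      ((ENNReal.toReal_eq_zero_iff _).1 hq0).resolve_right (measure_ne_top _ _)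
    refine measure_mono_null (fun ω hω => ?_) (measure_union_null (hnull hzero) (hnull hzero'))
    rw [mem_union, mem_ofPred_eq, mem_ofPred_eq, ← infinite_union, ← inter_union_distrib_left,
      treePlus_union_treePlus hG hq hq' (hch.ne hq i), inter_univ]
    exact hω

end TreeField

/-! ### Growth of the supercritical level sets -/

namespace IsSurvivalProfile

variable {v p : ℝ → ℝ} {ν : Measure ℝ} [IsProbabilityMeasure ν]

lemma mul_measureReal_Ici_le (hv : IsSurvivalProfile v) {c M : ℝ} (hM : c ≤ v M) :
    c * ν.real (Ici M) ≤ ∫ x, v x ∂ν := by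
  rw [mul_comm, ← smul_eq_mul, ← integral_indicator_const _ measurableSet_Ici]
  refine integral_mono ((integrable_const _).indicator measurableSet_Ici) hv.integrable
    (indicator_le' (fun x hx => hM.trans (hv.mono hx)) fun x _ => hv.nonneg x)

lemma integral_le_add (hv : IsSurvivalProfile v) (M : ℝ) :
    ∫ x, v x ∂ν ≤ v M + ν.real (Ioi M) := by
  have hint : Integrable ((Ioi M).indicator (1 : ℝ → ℝ)) ν :=
    (integrable_const 1).indicator measurableSet_Ioi
  calc ∫ x, v x ∂ν ≤ ∫ x, (v M + (Ioi M).indicator (1 : ℝ → ℝ) x) ∂ν := by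
        refine integral_mono hv.integrable ((integrable_const _).add hint) fun x => ?_
        rcases le_or_gt x M with hx | hx
        · rw [indicator_of_notMem (notMem_Ioi.2 hx), add_zero]
          exact hv.mono hx
        · rw [indicator_of_mem (mem_Ioi.2 hx)]
          exact (hv.le_one x).trans (le_add_of_nonneg_left (hv.nonneg M))
    _ = v M + ν.real (Ioi M) := by
        rw [integral_add (integrable_const _) hint, integral_indicator_one measurableSet_Ioi]
        simp

lemma integral_sub_le (hv : IsSurvivalProfile v) (hp : IsSurvivalProfile p) {e : ℝ} (he : 0 ≤ e)
    (hpv : ∀ a, (1 - e) * p a ≤ v a) : ∫ x, p x ∂ν - e ≤ ∫ x, v x ∂ν := by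
  have hle := integral_mono (μ := ν) (hp.integrable.const_mul _) hv.integrable hpv
  rw [integral_const_mul] at hle
  nlinarith [hp.integral_le_one (ν := ν)]

lemma tendsto_integral {ι : Type*} {l : Filter ι} [l.IsCountablyGenerated] {f : ι → ℝ → ℝ}
    (hf : ∀ i, IsSurvivalProfile (f i)) (hlim : ∀ᵐ x ∂ν, Tendsto (f · x) l (nhds (v x))) :
    Tendsto (fun i => ∫ x, f i x ∂ν) l (nhds (∫ x, v x ∂ν)) := by
  refine tendsto_integral_filter_of_dominated_convergence (fun _ => 1)
    (.of_forall fun i => (hf i).integrable.aestronglyMeasurable)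
    (.of_forall fun i => .of_forall fun x => ?_) (integrable_const _) hlim
  rw [Real.norm_of_nonneg ((hf i).nonneg x)]
  exact (hf i).le_one x

end IsSurvivalProfile

section BranchIter

variable {b : ℕ} {ν : Measure ℝ} [IsProbabilityMeasure ν] {h t : ℝ}

lemma half_le_branchIter (hb : 2 ≤ b) (hν : 3 / 4 ≤ ν.real (Ici (h - h / b))) (r : ℕ) :
    ∀ a, h ≤ a → 1 / 2 ≤ branchIter b ν h 1 r a := by
  induction r with
  | zero =>
    intro a ha
    simp only [branchIter]
    rw [if_pos ha]
    norm_num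
  | succ r ih =>
    intro a ha
    have hv := (isSurvivalProfile_branchIter (b := b) (ν := ν) h zero_le_one le_rfl
      r).comp_const_add (a / b)
    have hle : h / b ≤ a / b := by gcongr
    have hint := hv.mul_measureReal_Ici_le (ν := ν) (M := h - h / b) (ih _ (by linarith))
    obtain ⟨hq0, hq1⟩ := hv.one_sub_integral_mem_Icc (ν := ν)
    have hpow := pow_le_pow_of_le_one hq0 hq1 hb
    rw [branchIter, branchOp, if_pos ha]
    nlinarith

lemma continuousAt_branchIter [NullSingletonClass ν] (ht0 : 0 ≤ t) (ht1 : t ≤ 1) (r : ℕ) :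
    ∀ a, a ≠ h → ContinuousAt (fun h' => branchIter b ν h' t r a) h := by
  have hlevel {a : ℝ} (ha : a ≠ h) : ∀ᶠ h' in nhds h, (h' ≤ a ↔ h ≤ a) := by
    rcases ha.lt_or_gt with ha | ha
    · filter_upwards [eventually_gt_nhds ha] with h' hh'
      exact iff_of_false hh'.not_ge ha.not_ge
    · filter_upwards [eventually_le_nhds ha] with h' hh'
      exact iff_of_true hh' ha.le
  induction r with
  | zero =>
    intro a ha
    refine tendsto_const_nhds.congr' ?_
    filter_upwards [hlevel ha] with h' hh'
    simp only [branchIter, hh']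
  | succ r ih =>
    intro a ha
    have hlim : Tendsto (fun h' => ∫ x, branchIter b ν h' t r (a / b + x) ∂ν) (nhds h)
        (nhds (∫ x, branchIter b ν h t r (a / b + x) ∂ν)) := by
      refine IsSurvivalProfile.tendsto_integral
        (fun h' => (isSurvivalProfile_branchIter h' ht0 ht1 r).comp_const_add _) ?_
      filter_upwards [(countable_singleton (h - a / b)).ae_notMem ν] with x hx
      exact ih _ fun heq => hx (eq_sub_of_add_eq' heq)
    have hop : Tendsto (fun h' => if h ≤ a then
        1 - (1 - ∫ x, branchIter b ν h' t r (a / b + x) ∂ν) ^ b else 0) (nhds h)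
        (nhds (branchIter b ν h t (r + 1) a)) := by
      rw [show branchIter b ν h t (r + 1) a = if h ≤ a then
        1 - (1 - ∫ x, branchIter b ν h t r (a / b + x) ∂ν) ^ b else 0 from rfl]
      split_ifs
      exacts [((hlim.const_sub 1).pow b).const_sub 1, tendsto_const_nhds]
    refine hop.congr' ?_
    filter_upwards [hlevel ha] with h' hh'
    simp only [branchIter, branchOp, hh']

end BranchIter

-- Marking each of `Z` points independently with probability `t`, a marked point exists with
-- probability at most `t * x` unless `x ≤ Z`.
lemma one_sub_integral_pow_sub_le_measureReal {Ω : Type*} [MeasurableSpace Ω] {P : Measure Ω}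
    [IsProbabilityMeasure P] {Z : Ω → ℕ} (hZ : Measurable Z) {t x : ℝ} (ht0 : 0 ≤ t) (ht1 : t ≤ 1)
    (hx : 0 ≤ x) : 1 - ∫ ω, (1 - t) ^ Z ω ∂P - t * x ≤ P.real {ω | x ≤ Z ω} := by
  have hA : MeasurableSet {ω | x ≤ Z ω} :=
    measurableSet_le measurable_const ((measurable_of_countable _).comp hZ)
  have hpow0 (ω : Ω) : 0 ≤ (1 - t) ^ Z ω := pow_nonneg (sub_nonneg.2 ht1) _
  have hpow : Integrable (fun ω => (1 - t) ^ Z ω) P := by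
    refine .of_bound ((measurable_of_countable fun m : ℕ => (1 - t) ^ m).comp
      hZ).aestronglyMeasurable 1 (.of_forall fun ω => ?_)
    rw [Real.norm_of_nonneg (hpow0 ω)]
    exact pow_le_one₀ (sub_nonneg.2 ht1) (by linarith)
  have hind : Integrable ({ω | x ≤ Z ω}.indicator (1 : Ω → ℝ)) P :=
    (integrable_const 1).indicator hA
  have hpt (ω : Ω) : 1 - t * x - {ω | x ≤ Z ω}.indicator 1 ω ≤ (1 - t) ^ Z ω := by
    by_cases hω : x ≤ Z ω
    · rw [indicator_of_mem (show ω ∈ {ω | x ≤ Z ω} from hω), Pi.one_apply]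
      nlinarith [hpow0 ω]
    · rw [indicator_of_notMem (show ω ∉ {ω | x ≤ Z ω} from hω)]
      have hbern := one_add_mul_le_pow (a := -t) (by linarith) (Z ω)
      rw [← sub_eq_add_neg] at hbern
      nlinarith
  have hle : ∫ ω, (1 - t * x - {ω | x ≤ Z ω}.indicator 1 ω) ∂P ≤ ∫ ω, (1 - t) ^ Z ω ∂P :=
    integral_mono ((integrable_const (1 - t * x)).sub hind) hpow hpt
  rw [integral_sub (integrable_const _) hind, integral_indicator_one hA, integral_const,
    probReal_univ, one_smul] at hle
  linarith

section ReachProb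

variable {b : ℕ} {h h' t δ : ℝ}

lemma reachProb_anti_level (hh : h' ≤ h) (ht0 : 0 ≤ t) (ht1 : t ≤ 1) (r : ℕ) :
    reachProb b t r h ≤ reachProb b t r h' :=
  integral_mono (isSurvivalProfile_branchIter h ht0 ht1 r).integrable
    (isSurvivalProfile_branchIter h' ht0 ht1 r).integrable (branchIter_anti_level hh ht0 ht1 r)

lemma reachProb_le_one (ht0 : 0 ≤ t) (ht1 : t ≤ 1) (r : ℕ) : reachProb b t r h ≤ 1 :=
  (isSurvivalProfile_branchIter h ht0 ht1 r).integral_le_one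

lemma antitone_reachProb_one (h : ℝ) : Antitone fun r => reachProb b 1 r h :=
  antitone_nat_of_succ_le fun r =>
    integral_mono (isSurvivalProfile_branchIter h zero_le_one le_rfl _).integrable
      (isSurvivalProfile_branchIter h zero_le_one le_rfl _).integrable (branchIter_one_succ_le h r)

lemma measureReal_gaussianReal_Ici_pos {s : ℝ≥0} (hs : s ≠ 0) (c : ℝ) :
    0 < (gaussianReal 0 s).real (Ici c) :=
  ENNReal.toReal_pos (fun hzero => by simpa using gaussianReal_absolutelyContinuous' 0 hs hzero)
    (measure_ne_top _ _)

lemma continuous_reachProb (hb : 2 ≤ b) (ht0 : 0 ≤ t) (ht1 : t ≤ 1) (r : ℕ) :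
    Continuous (reachProb b t r) := by
  have := nullSingletonClass_gaussianReal (μ := 0) (treeVar_ne_zero hb)
  have := nullSingletonClass_gaussianReal (μ := 0) (treeCondVar_ne_zero hb)
  refine continuous_iff_continuousAt.2 fun h => IsSurvivalProfile.tendsto_integral
    (fun h' => isSurvivalProfile_branchIter h' ht0 ht1 r) ?_
  filter_upwards [(countable_singleton h).ae_notMem (gaussianReal 0 (treeVar b))] with a ha
  exact continuousAt_branchIter ht0 ht1 r a ha

lemma exists_pos_forall_le_reachProb (hb : 2 ≤ b) :
    ∃ h c : ℝ, 0 < c ∧ ∀ r, c ≤ reachProb b 1 r h := by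
  have hb' : (2 : ℝ) ≤ b := by exact_mod_cast hb
  have hlim := (ENNReal.tendsto_toReal (measure_ne_top _ univ)).comp
    (tendsto_measure_Ici_atBot (gaussianReal 0 (treeCondVar b)))
  rw [measure_univ] at hlim
  obtain ⟨m, hm⟩ := (hlim.eventually_const_le (u := 3 / 4) (by norm_num)).exists
  have hlevel : m * (b / (b - 1)) - m * (b / (b - 1)) / b = m := by
    field_simp [show (b : ℝ) - 1 ≠ 0 by linarith]
  refine ⟨m * (b / (b - 1)), 1 / 2 * (gaussianReal 0 (treeVar b)).real (Ici (m * (b / (b - 1)))),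
    mul_pos one_half_pos (measureReal_gaussianReal_Ici_pos (treeVar_ne_zero hb) _), fun r => ?_⟩
  exact (isSurvivalProfile_branchIter _ zero_le_one le_rfl r).mul_measureReal_Ici_le
    (half_le_branchIter hb (by rw [hlevel]; exact hm) r _ le_rfl)

/-- Given that the parent of a vertex has value at least `h`, the vertex starts with probability at
least `δ` a path of any given length in the level set above `h`. -/
def HasSurvivalBound (b : ℕ) (h δ : ℝ) : Prop :=
  ∀ r a, h ≤ a → δ ≤ ∫ x, branchIter b (gaussianReal 0 (treeCondVar b)) h 1 r (a / b + x)
    ∂gaussianReal 0 (treeCondVar b)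

lemma exists_hasSurvivalBound {h h₁ c : ℝ} (hb : 2 ≤ b) (hc : 0 < c)
    (hc' : ∀ r, c ≤ reachProb b 1 r h₁) :
    ∃ δ : ℝ, 0 < δ ∧ δ ≤ 1 ∧ ∀ h' ∈ Icc h h₁, HasSurvivalBound b h' δ := by
  set ν := gaussianReal 0 (treeCondVar b)
  have hlim := (ENNReal.tendsto_toReal (measure_ne_top _ _)).comp
    (tendsto_measure_Iic_atTop (gaussianReal 0 (treeVar b)))
  rw [measure_univ] at hlim
  obtain ⟨M, hM⟩ := (hlim.eventually_const_le (u := 1 - c / 2)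
    (by rw [ENNReal.toReal_one]; linarith)).exists
  have hIoi : (gaussianReal 0 (treeVar b)).real (Ioi M) ≤ c / 2 := by
    rw [← compl_Iic, probReal_compl_eq_one_sub measurableSet_Iic]
    exact sub_le_comm.1 hM
  have hpos : 0 < ν.real (Ici (M - h / b)) :=
    measureReal_gaussianReal_Ici_pos (treeCondVar_ne_zero hb) _
  have hc1 : c ≤ 1 := (hc' 0).trans (reachProb_le_one zero_le_one le_rfl 0)
  refine ⟨c / 2 * ν.real (Ici (M - h / b)), mul_pos (half_pos hc) hpos,
    mul_le_one₀ (by linarith) hpos.le measureReal_le_one, fun h' ⟨hh', hh₁⟩ r a ha => ?_⟩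
  have hM' : c / 2 ≤ branchIter b ν h' 1 r M := by
    have hle := (isSurvivalProfile_branchIter (b := b) (ν := ν) h₁ zero_le_one le_rfl
      r).integral_le_add (ν := gaussianReal 0 (treeVar b)) M
    have hanti := branchIter_anti_level (b := b) (ν := ν) hh₁ zero_le_one le_rfl r M
    linarith [hle.trans' (hc' r)]
  have hdiv : h / b ≤ a / b := div_le_div_of_nonneg_right (hh'.trans ha) b.cast_nonneg
  have hmono : ν.real (Ici (M - h / b)) ≤ ν.real (Ici (M - a / b)) :=
    measureReal_mono (Ici_subset_Ici.2 (by linarith))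
  exact (mul_le_mul_of_nonneg_left hmono (half_pos hc).le).trans
    (((isSurvivalProfile_branchIter h' zero_le_one le_rfl r).comp_const_add
      (a / b)).mul_measureReal_Ici_le (by rwa [add_sub_cancel]))

lemma HasSurvivalBound.reachProb_one_sub_le_reachProb (hδ : HasSurvivalBound b h δ) (hb : 2 ≤ b)
    (hδ0 : 0 < δ) (hδ1 : δ ≤ 1) (ht0 : 0 < t) (ht1 : t ≤ 1) (r : ℕ) :
    reachProb b 1 r h - 1 / (t * (1 + δ ^ 2) ^ r) ≤ reachProb b t r h := by
  refine (isSurvivalProfile_branchIter h ht0.le ht1 r).integral_sub_le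
    (isSurvivalProfile_branchIter h zero_le_one le_rfl r) (by positivity) ?_
  refine one_sub_inv_mul_le_of_branchOp (v := fun k => branchIter b _ h t k)
    (p := fun k => branchIter b _ h 1 k) hb
    (fun k => isSurvivalProfile_branchIter h ht0.le ht1 k)
    (fun k => isSurvivalProfile_branchIter h zero_le_one le_rfl k) (fun _ => rfl) (fun _ => rfl)
    hδ0.le hδ1 ht0 ht1 hδ (fun a => ?_) r
  simp only [branchIter]
  split_ifs <;> simp

lemma HasSurvivalBound.reachProb_sub_le_reachProb_add (hδ : HasSurvivalBound b h δ) (hb : 2 ≤ b)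
    (hδ0 : 0 < δ) (hδ1 : δ ≤ 1) (l r : ℕ) :
    reachProb b 1 r h - 1 / (δ * (1 + δ ^ 2) ^ r) ≤ reachProb b 1 (l + r) h := by
  set ν := gaussianReal 0 (treeCondVar b)
  have hprofile := isSurvivalProfile_branchIter (b := b) (ν := ν) h zero_le_one le_rfl
  refine (hprofile (l + r)).integral_sub_le (hprofile r) (by positivity) ?_
  refine one_sub_inv_mul_le_of_branchOp (v := fun k => branchIter b ν h 1 (l + k))
    (p := fun k => branchIter b ν h 1 k) hb (fun k => hprofile _) hprofile (fun _ => rfl)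
    (fun _ => rfl) hδ0.le hδ1 hδ0 hδ1 hδ (fun a => ?_) r
  by_cases ha : h ≤ a
  · rw [show branchIter b ν h 1 0 a = 1 from if_pos ha, mul_one]
    cases l with
    | zero => exact hδ1.trans_eq (if_pos ha).symm
    | succ l =>
      obtain ⟨hq0, hq1⟩ := ((hprofile l).comp_const_add (a / b)).one_sub_integral_mem_Icc (ν := ν)
      have hpow := pow_le_of_le_one hq0 hq1 (show b ≠ 0 by omega)
      rw [add_zero, branchIter, branchOp, if_pos ha]
      linarith [hδ l a ha]
  · rw [show branchIter b ν h 1 0 a = 0 from if_neg ha, mul_zero]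
    exact (hprofile _).nonneg a

lemma HasSurvivalBound.reachProb_sub_le_measureReal (hδ : HasSurvivalBound b h δ) (hb : 2 ≤ b)
    (hδ0 : 0 < δ) (hδ1 : δ ≤ 1) (r : ℕ) {x : ℝ} (ht0 : 0 < t) (ht1 : t ≤ 1) (hx : 0 ≤ x) :
    reachProb b 1 r h - 1 / (t * (1 + δ ^ 2) ^ r) - t * x ≤
      (branchLaw b (treeVar b) (treeCondVar b) r).real {f | x ≤ survivorCount h f} := by
  have hgen := integral_pow_survivorCount_branchLaw (b := b) (treeVar b) (treeCondVar b) h ht0.le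
    ht1 r
  have hmarked := hδ.reachProb_one_sub_le_reachProb hb hδ0 hδ1 ht0 ht1 r
  have hcount := one_sub_integral_pow_sub_le_measureReal
    (P := branchLaw b (treeVar b) (treeCondVar b) r) (measurable_survivorCount h r) ht0.le ht1 hx
  rw [hgen, sub_sub_cancel] at hcount
  exact (sub_le_sub_right hmarked _).trans hcount

end ReachProb

section Supercritical

variable {T : Type*} {Gt : SimpleGraph T} {b : ℕ} {q w : T} {μT : Measure (T → ℝ)} {h δ : ℝ}

lemma etaPlus_le_reachProb (hb : 2 ≤ b) (ht : IsRegTree Gt (b + 1)) (hq : Gt.Adj w q)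
    (hμT : IsGaussianField μT (treeGreen Gt (b + 1))) (h : ℝ) (r : ℕ) :
    etaPlus Gt w q μT h ≤ reachProb b 1 r h :=
  (antitone_reachProb_one h).le_of_tendsto (tendsto_reachProb_etaPlus hb ht hq hμT h) r

lemma bddBelow_setOf_measure_infinite_levelComp_eq_zero (hb : 2 ≤ b) (ht : IsRegTree Gt (b + 1))
    (hq : Gt.Adj w q) (hμT : IsGaussianField μT (treeGreen Gt (b + 1))) :
    BddBelow {h : ℝ | μT {ω | (levelComp Gt h ω w).Infinite} = 0} := by
  obtain ⟨h₀, c, hc, hcr⟩ := exists_pos_forall_le_reachProb hb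
  refine ⟨h₀, fun h hh => le_of_not_gt fun hlt => hc.not_ge ?_⟩
  rw [← (measure_infinite_levelComp_eq_zero_iff hb ht hq hμT h).1 hh]
  exact ge_of_tendsto' (tendsto_reachProb_etaPlus hb ht hq hμT h) fun r =>
    (hcr r).trans (reachProb_anti_level hlt.le zero_le_one le_rfl r)

lemma etaPlus_pos (hb : 2 ≤ b) (ht : IsRegTree Gt (b + 1)) (hq : Gt.Adj w q)
    (hμT : IsGaussianField μT (treeGreen Gt (b + 1))) (hh : h < hstar Gt w μT) :
    0 < etaPlus Gt w q μT h := by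
  refine ENNReal.toReal_nonneg.lt_of_ne' fun hzero => hh.not_ge ?_
  exact csInf_le (bddBelow_setOf_measure_infinite_levelComp_eq_zero hb ht hq hμT)
    ((measure_infinite_levelComp_eq_zero_iff hb ht hq hμT h).2 hzero)

lemma exists_hasSurvivalBound_of_lt_hstar (hb : 2 ≤ b) (ht : IsRegTree Gt (b + 1))
    (hq : Gt.Adj w q) (hμT : IsGaussianField μT (treeGreen Gt (b + 1))) (hh : h < hstar Gt w μT) :
    ∃ δ : ℝ, 0 < δ ∧ δ ≤ 1 ∧
      ∀ h' ∈ Icc h ((h + hstar Gt w μT) / 2), HasSurvivalBound b h' δ :=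
  exists_hasSurvivalBound hb
    (etaPlus_pos hb ht hq hμT (show (h + hstar Gt w μT) / 2 < hstar Gt w μT by linarith))
    (etaPlus_le_reachProb hb ht hq hμT _)

lemma HasSurvivalBound.reachProb_sub_le_etaPlus (hδ : HasSurvivalBound b h δ) (hb : 2 ≤ b)
    (hδ0 : 0 < δ) (hδ1 : δ ≤ 1) (ht : IsRegTree Gt (b + 1)) (hq : Gt.Adj w q)
    (hμT : IsGaussianField μT (treeGreen Gt (b + 1))) (r : ℕ) :
    reachProb b 1 r h - 1 / (δ * (1 + δ ^ 2) ^ r) ≤ etaPlus Gt w q μT h :=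
  ge_of_tendsto' ((tendsto_reachProb_etaPlus hb ht hq hμT h).comp (tendsto_add_atTop_nat r))
    fun l => hδ.reachProb_sub_le_reachProb_add hb hδ0 hδ1 l r

lemma eventually_etaPlus_sub_le_etaPlus (hb : 2 ≤ b) (ht : IsRegTree Gt (b + 1))
    (hq : Gt.Adj w q) (hμT : IsGaussianField μT (treeGreen Gt (b + 1))) (hh : h < hstar Gt w μT)
    {ζ : ℝ} (hζ : 0 < ζ) :
    ∀ᶠ h' in nhdsWithin h (Ioi h), etaPlus Gt w q μT h - ζ ≤ etaPlus Gt w q μT h' := by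
  obtain ⟨δ, hδ0, hδ1, hδ⟩ := exists_hasSurvivalBound_of_lt_hstar hb ht hq hμT hh
  have hdecay : Tendsto (fun r : ℕ => 1 / (δ * (1 + δ ^ 2) ^ r)) atTop (nhds 0) := by
    simp_rw [one_div]
    exact ((tendsto_pow_atTop_atTop_of_one_lt (by nlinarith)).const_mul_atTop
      hδ0).inv_tendsto_atTop
  obtain ⟨r, hr⟩ := (hdecay.eventually_lt_const (half_pos hζ)).exists
  have hcont := ((continuous_reachProb hb zero_le_one le_rfl r).tendsto h).eventually_const_lt
    (sub_lt_self _ (half_pos hζ))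
  filter_upwards [hcont.filter_mono nhdsWithin_le_nhds, self_mem_nhdsWithin,
    (eventually_le_nhds (show h < (h + hstar Gt w μT) / 2 by linarith)).filter_mono
      nhdsWithin_le_nhds] with h' hclose hlt hle
  have happrox := (hδ h' ⟨hlt.le, hle⟩).reachProb_sub_le_etaPlus hb hδ0 hδ1 ht hq hμT r
  linarith [etaPlus_le_reachProb hb ht hq hμT h r]

end Supercritical

/-! ### Gaussian fields with close covariances -/

section Thickening

open Metric

variable {E : Type*} [NormedAddCommGroup E] [SecondCountableTopology E] [MeasurableSpace E]
  [BorelSpace E] {P Q : Measure E}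

lemma conv_thickening_apply (ε : ℝ) (A : Set E) :
    (P.conv Q) (thickening ε A) = (P.prod Q) {p | p.1 + p.2 ∈ thickening ε A} := by
  rw [Measure.conv, Measure.map_apply (by fun_prop) isOpen_thickening.measurableSet]
  rfl

variable [IsProbabilityMeasure P] [IsProbabilityMeasure Q]

lemma measure_le_conv_thickening_add (ε : ℝ) (A : Set E) :
    P A ≤ (P.conv Q) (thickening ε A) + Q {w | ε ≤ ‖w‖} := by
  calc P A = (P.prod Q) (A ×ˢ univ) := by rw [Measure.prod_prod, measure_univ, mul_one]
    _ ≤ (P.prod Q) ({p | p.1 + p.2 ∈ thickening ε A} ∪ univ ×ˢ {w | ε ≤ ‖w‖}) := by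
        refine measure_mono fun p hp => or_iff_not_imp_right.2 fun hw => ?_
        have hsmall : ‖p.2‖ < ε := not_le.1 fun hle => hw ⟨trivial, hle⟩
        exact mem_thickening_iff.2 ⟨p.1, hp.1, by simpa using hsmall⟩
    _ ≤ (P.prod Q) {p | p.1 + p.2 ∈ thickening ε A} + (P.prod Q) (univ ×ˢ {w | ε ≤ ‖w‖}) :=
        measure_union_le _ _
    _ = (P.conv Q) (thickening ε A) + Q {w | ε ≤ ‖w‖} := by
        rw [conv_thickening_apply, Measure.prod_prod, measure_univ, one_mul]

lemma conv_thickening_le (ε : ℝ) (A : Set E) :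
    (P.conv Q) (thickening ε A) ≤ P (thickening (2 * ε) A) + Q {w | ε ≤ ‖w‖} := by
  calc (P.conv Q) (thickening ε A) = (P.prod Q) {p | p.1 + p.2 ∈ thickening ε A} :=
        conv_thickening_apply ε A
    _ ≤ (P.prod Q) (thickening (2 * ε) A ×ˢ univ ∪ univ ×ˢ {w | ε ≤ ‖w‖}) := by
        refine measure_mono fun p hp => or_iff_not_imp_right.2 fun hw => ⟨?_, trivial⟩
        have hsmall : ‖p.2‖ < ε := not_le.1 fun hle => hw ⟨trivial, hle⟩
        rw [two_mul]
        exact thickening_thickening_subset _ _ _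
          (mem_thickening_iff.2 ⟨p.1 + p.2, hp, by simpa using hsmall⟩)
    _ ≤ (P.prod Q) (thickening (2 * ε) A ×ˢ univ) + (P.prod Q) (univ ×ˢ {w | ε ≤ ‖w‖}) :=
        measure_union_le _ _
    _ = P (thickening (2 * ε) A) + Q {w | ε ≤ ‖w‖} := by
        simp only [Measure.prod_prod, measure_univ, one_mul, mul_one]

end Thickening

section Comparison

lemma posSemidef_single {I : Type*} {a : ℝ} (ha : 0 ≤ a) :
    (Matrix.of fun i : I => (Pi.single i a : I → ℝ)).PosSemidef := by
  have hdiag : (Matrix.of fun i : I => (Pi.single i a : I → ℝ)) = Matrix.diagonal fun _ => a := by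
    ext i j
    simp [Matrix.diagonal_apply, Pi.single_apply, eq_comm]
  rw [hdiag]
  exact Matrix.PosSemidef.diagonal fun _ => ha

variable {I : Type*} [Fintype I] {K K' : I → I → ℝ}

lemma abs_covForm_le {δ : ℝ} (hK : ∀ i j, |K i j| ≤ δ) (c : I → ℝ) :
    |covForm K c| ≤ Fintype.card I * δ * ∑ i, c i ^ 2 := by
  calc |covForm K c| ≤ ∑ i, ∑ j, |c i * c j * K i j| :=
        (Finset.abs_sum_le_sum_abs _ _).trans
          (Finset.sum_le_sum fun i _ => Finset.abs_sum_le_sum_abs _ _)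
    _ ≤ ∑ i, ∑ j, (c i ^ 2 + c j ^ 2) / 2 * δ := by
        refine Finset.sum_le_sum fun i _ => Finset.sum_le_sum fun j _ => ?_
        rw [abs_mul]
        refine mul_le_mul ?_ (hK i j) (abs_nonneg _) (by positivity)
        rw [abs_mul]
        nlinarith [sq_nonneg (|c i| - |c j|), sq_abs (c i), sq_abs (c j)]
    _ = Fintype.card I * δ * ∑ i, c i ^ 2 := by
        simp only [← Finset.sum_mul, ← Finset.sum_div, Finset.sum_add_distrib, Finset.sum_const,
          Finset.card_univ, nsmul_eq_mul, ← Finset.mul_sum]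
        ring

lemma covForm_single (a : ℝ) (c : I → ℝ) :
    covForm (fun i => Pi.single i a) c = a * ∑ i, c i ^ 2 := by
  simp only [covForm, Pi.single_apply, mul_ite, mul_zero, Finset.sum_ite_eq',
    Finset.mem_univ, if_true, Finset.mul_sum]
  exact Finset.sum_congr rfl fun i _ => by ring

lemma posSemidef_of_covForm_nonneg (hsymm : ∀ i j, K i j = K j i) (hK : ∀ c, 0 ≤ covForm K c) :
    (Matrix.of K).PosSemidef := by
  refine Matrix.PosSemidef.of_dotProduct_mulVec_nonneg ?_ fun c => ?_
  · ext i j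
    simp [hsymm i j]
  · rw [star_trivial, ← covForm_eq_dotProduct]
    exact hK c

lemma covForm_nonneg_of_posSemidef (hK : (Matrix.of K).PosSemidef) (c : I → ℝ) :
    0 ≤ covForm K c := by
  rw [covForm_eq_dotProduct]
  simpa using hK.dotProduct_mulVec_nonneg c

lemma posSemidef_sub_add_single (hK : (Matrix.of K).PosSemidef)
    (hK' : (Matrix.of K').PosSemidef) {δ : ℝ} (hδ : ∀ i j, |K i j - K' i j| ≤ δ) :
    (Matrix.of (K' - K + fun i => Pi.single i (Fintype.card I * δ))).PosSemidef := by
  have hsymm {M : I → I → ℝ} (hM : (Matrix.of M).PosSemidef) (i j : I) : M i j = M j i := by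
    simpa using (hM.isHermitian.apply i j).symm
  refine posSemidef_of_covForm_nonneg (fun i j => ?_) fun c => ?_
  · simp only [Pi.add_apply, Pi.sub_apply, hsymm hK i j, hsymm hK' i j, Pi.single_apply,
      eq_comm]
  · rw [covForm_add, covForm_single]
    have hbound := abs_covForm_le (K := K' - K) (fun i j => by simpa [abs_sub_comm] using hδ i j) c
    linarith [neg_abs_le (covForm (K' - K) c)]

lemma IsGaussianField.measure_le_norm_le {P : Measure (I → ℝ)} (hP : IsGaussianField P K)
    (hK : (Matrix.of K).PosSemidef) {w : ℝ} (hw : ∀ j, K j j ≤ w) {ε : ℝ} (hε : 0 < ε) :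
    P {f | ε ≤ ‖f‖} ≤ ENNReal.ofReal (Fintype.card I * (w / ε ^ 2)) := by
  refine (measure_mono fun f hf => ?_).trans
    (hP.measure_exists_le_abs_le (fun j => hK.diag_nonneg) hw hε)
  by_contra! hlt
  exact ((pi_norm_lt_iff hε).2 fun j => not_le.1 fun hj => hlt ⟨j, hj⟩).not_ge hf

-- Small independent noises of covariance `|I| δ` and `K' - K + |I| δ` turn the two fields into
-- fields with the same law.
lemma IsGaussianField.measure_le_measure_thickening_add {P P' : Measure (I → ℝ)}
    (hP : IsGaussianField P K) (hP' : IsGaussianField P' K') (hK : (Matrix.of K).PosSemidef)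
    (hK' : (Matrix.of K').PosSemidef) {δ : ℝ} (hδ0 : 0 ≤ δ) (hδ : ∀ i j, |K i j - K' i j| ≤ δ)
    (A : Set (I → ℝ)) {ε : ℝ} (hε : 0 < ε) :
    P' A ≤ P (Metric.thickening (2 * ε) A) +
      ENNReal.ofReal (2 * (Fintype.card I * ((Fintype.card I + 1) * δ / ε ^ 2))) := by
  set κ : ℝ := Fintype.card I * ((Fintype.card I + 1) * δ / ε ^ 2)
  have hκ : 0 ≤ κ := by positivity
  have hDpsd := posSemidef_single (I := I) (show 0 ≤ Fintype.card I * δ by positivity)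
  have hCpsd := posSemidef_sub_add_single hK hK' hδ
  obtain ⟨Q, hQ⟩ := exists_isGaussianField hCpsd
  obtain ⟨Q', hQ'⟩ := exists_isGaussianField hDpsd
  have := hP.1
  have := hP'.1
  have := hQ.1
  have := hQ'.1
  have hlaw : P'.conv Q' = P.conv Q := by
    refine (hP'.conv hQ' (covForm_nonneg_of_posSemidef hK')
      (covForm_nonneg_of_posSemidef hDpsd)).eq_of_covForm_eq (hP.conv hQ
      (covForm_nonneg_of_posSemidef hK) (covForm_nonneg_of_posSemidef hCpsd)) fun c => ?_
    rw [← add_assoc, add_sub_cancel]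
  have hnoise := hQ.measure_le_norm_le hCpsd (w := (Fintype.card I + 1) * δ) (fun j => by
    have := (neg_le_abs _).trans (hδ j j)
    simp only [Pi.add_apply, Pi.sub_apply, Pi.single_eq_same]
    linarith) hε
  have hnoise' := hQ'.measure_le_norm_le hDpsd (w := (Fintype.card I + 1) * δ)
    (fun j => by rw [Pi.single_eq_same]; linarith) hε
  calc P' A ≤ (P.conv Q) (Metric.thickening ε A) + Q' {w | ε ≤ ‖w‖} := by
        rw [← hlaw]
        exact measure_le_conv_thickening_add ε A
    _ ≤ P (Metric.thickening (2 * ε) A) + ENNReal.ofReal κ + ENNReal.ofReal κ :=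
        add_le_add ((conv_thickening_le ε A).trans (add_le_add_right hnoise _)) hnoise'
    _ = P (Metric.thickening (2 * ε) A) + ENNReal.ofReal (2 * κ) := by
        rw [add_assoc, ← ENNReal.ofReal_add hκ hκ, ← two_mul κ]

end Comparison

/-! ### The zero-average Green function under a spectral gap -/

section Spectral

variable {V : Type*} [Fintype V]

/-- The functions `v i` form an orthonormal basis of eigenvectors of `M`, with eigenvalues
`p i`. -/
structure IsEigenbasis (M : Matrix V V ℝ) (v : V → V → ℝ) (p : V → ℝ) : Prop where
  sum_apply_mul_apply : ∀ x y, ∑ i, v i x * v i y = if x = y then 1 else 0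
  sum_mul : ∀ i j, ∑ x, v i x * v j x = if i = j then 1 else 0
  sum_mul_apply : ∀ i x, ∑ y, M x y * v i y = p i * v i x

lemma exists_isEigenbasis {M : Matrix V V ℝ} (hM : M.IsHermitian) :
    ∃ v p, IsEigenbasis M v p := by
  set e := hM.eigenvectorBasis
  have horth (i j : V) : ∑ x, e i x * e j x = if i = j then 1 else 0 := by
    rw [← orthonormal_iff_ite.1 e.orthonormal i j, PiLp.inner_apply]
    simp [mul_comm]
  have hright : (Matrix.of fun i x => e i x) * (Matrix.of fun i x => e i x).transpose = 1 := by
    ext i j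
    simp only [Matrix.mul_apply, Matrix.transpose_apply, Matrix.of_apply, Matrix.one_apply]
    exact horth i j
  have hleft := mul_eq_one_comm.1 hright
  refine ⟨fun i x => e i x, hM.eigenvalues, fun x y => ?_, horth, fun i x => ?_⟩
  · simpa only [Matrix.mul_apply, Matrix.transpose_apply, Matrix.of_apply, Matrix.one_apply] using
      congrFun (congrFun hleft x) y
  · simpa [Matrix.mulVec, dotProduct] using congrFun (hM.mulVec_eigenvectorBasis i) x

namespace IsEigenbasis

variable {M : Matrix V V ℝ} {v : V → V → ℝ} {p : V → ℝ}

lemma pow_apply (hv : IsEigenbasis M v p) (k : ℕ) (x y : V) :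
    (M ^ k) x y = ∑ i, p i ^ k * (v i x * v i y) := by
  induction k generalizing x with
  | zero => simp [Matrix.one_apply, hv.sum_apply_mul_apply]
  | succ k ih =>
    simp_rw [pow_succ', Matrix.mul_apply, ih, Finset.mul_sum]
    rw [Finset.sum_comm]
    refine Finset.sum_congr rfl fun i _ => ?_
    calc ∑ z, M x z * (p i ^ k * (v i z * v i y))
        = (∑ z, M x z * v i z) * (p i ^ k * v i y) := by
          rw [Finset.sum_mul]
          exact Finset.sum_congr rfl fun z _ => by ring
      _ = p i * p i ^ k * (v i x * v i y) := by
          rw [hv.sum_mul_apply]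
          ring

lemma ne_zero (hv : IsEigenbasis M v p) (i : V) : v i ≠ 0 := fun hzero => by
  simpa [hzero] using hv.sum_mul i i

lemma sum_sq_sum_mul (hv : IsEigenbasis M v p) (a : V → ℝ) :
    ∑ x, (∑ i, a i * v i x) ^ 2 = ∑ i, a i ^ 2 := by
  simp_rw [sq, Finset.sum_mul_sum]
  rw [Finset.sum_comm]
  refine Finset.sum_congr rfl fun i _ => ?_
  rw [Finset.sum_comm]
  calc ∑ j, ∑ x, a i * v i x * (a j * v j x) = ∑ j, a i * a j * ∑ x, v i x * v j x := by
        simp_rw [Finset.mul_sum]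
        exact Finset.sum_congr rfl fun j _ => Finset.sum_congr rfl fun x _ => by ring
    _ = a i * a i := by simp [hv.sum_mul]

end IsEigenbasis

lemma covForm_sum_mul_nonneg {I : Type*} [Fintype I] {a : V → ℝ} (ha : ∀ l, 0 ≤ a l)
    (v : V → I → ℝ) (c : I → ℝ) : 0 ≤ covForm (fun i j => ∑ l, a l * (v l i * v l j)) c := by
  have hsquares : covForm (fun i j => ∑ l, a l * (v l i * v l j)) c =
      ∑ l, a l * (∑ i, c i * v l i) ^ 2 := by
    simp_rw [covForm, sq, Finset.sum_mul_sum, Finset.mul_sum]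
    rw [Finset.sum_comm_cycle]
    exact Finset.sum_congr rfl fun l _ => Finset.sum_congr rfl fun i _ =>
      Finset.sum_congr rfl fun j _ => by ring
  rw [hsquares]
  exact Finset.sum_nonneg fun l _ => mul_nonneg (ha l) (sq_nonneg _)

end Spectral

lemma IsReg.degree_eq {V : Type*} {G : SimpleGraph V} {d : ℕ} (hreg : IsReg G d) (x : V)
    [Fintype (G.neighborSet x)] : G.degree x = d := by
  rw [← hreg x, Nat.card_eq_fintype_card, SimpleGraph.card_neighborSet_eq_degree]

section TransitionMatrix

variable {V : Type*} [Fintype V] {G : SimpleGraph V} {d : ℕ} {β : ℝ} {f : V → ℝ}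

lemma isHermitian_transP (G : SimpleGraph V) (d : ℕ) : (transP G d).IsHermitian := by
  ext x y
  simp [transP, SimpleGraph.adj_comm]

lemma sum_transP_mul (x : V) (f : V → ℝ) :
    ∑ y, transP G d x y * f y = (d : ℝ)⁻¹ * ∑ y ∈ G.neighborFinset x, f y := by
  rw [Finset.mul_sum, SimpleGraph.neighborFinset_eq_filter, Finset.sum_filter]
  exact Finset.sum_congr rfl fun y _ => by simp [transP]

lemma IsReg.sum_transP (hreg : IsReg G d) (hd : d ≠ 0) (y : V) : ∑ x, transP G d x y = 1 := by
  have hsymm (x : V) : transP G d x y = transP G d y x * 1 := by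
    simp [transP, SimpleGraph.adj_comm]
  simp_rw [hsymm, sum_transP_mul]
  simp [hreg.degree_eq, hd]

lemma IsReg.apply_eq_of_transP_fixed (hreg : IsReg G d) (hd : d ≠ 0) (hc : G.Connected)
    (hf : ∀ x, ∑ y, transP G d x y * f y = f x) (x y : V) : f x = f y := by
  have hlap : (G.lapMatrix ℝ).mulVec f = 0 := by
    ext z
    have hz := hf z
    rw [sum_transP_mul, inv_mul_eq_iff_eq_mul₀ (Nat.cast_ne_zero.2 hd)] at hz
    simp [SimpleGraph.lapMatrix_mulVec_apply, hreg.degree_eq, hz]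
  exact (SimpleGraph.lapMatrix_mulVec_eq_zero_iff_forall_reachable G).1 hlap x y
    (hc.preconnected x y)

lemma IsReg.sum_eq_zero_of_transP_eigen (hreg : IsReg G d) (hd : d ≠ 0) {p : ℝ} (hp : p ≠ 1)
    (hf : ∀ x, ∑ y, transP G d x y * f y = p * f x) : ∑ x, f x = 0 := by
  have hsum : p * ∑ x, f x = ∑ x, f x := by
    simp_rw [Finset.mul_sum, ← hf]
    rw [Finset.sum_comm]
    simp_rw [← Finset.sum_mul, hreg.sum_transP hd, one_mul]
  exact (mul_eq_zero.1 (show (p - 1) * ∑ x, f x = 0 by linarith)).resolve_left (sub_ne_zero.2 hp)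

end TransitionMatrix

namespace IsEigenbasis

variable {V : Type*} [Fintype V] {G : SimpleGraph V} {d : ℕ} {β : ℝ} {v : V → V → ℝ} {p : V → ℝ}

lemma eq_one_or_le (hv : IsEigenbasis (transP G d) v p) (hgap : SpectralGapLB G d β) (i : V) :
    p i = 1 ∨ β ≤ 1 - p i := by
  refine (hgap (v i) (1 - p i) ?_ (hv.ne_zero i)).imp_left fun h => (sub_eq_zero.1 h).symm
  ext x
  simp only [Matrix.sub_mulVec, Matrix.one_mulVec, Pi.sub_apply, Pi.smul_apply, smul_eq_mul,
    sub_mul, one_mul]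
  exact congrArg _ (hv.sum_mul_apply i x)

lemma heatK_eq (hv : IsEigenbasis (transP G d) v p) (t : ℝ) (x y : V) :
    heatK G d t x y = ∑ i, Real.exp (-(1 - p i) * t) * (v i x * v i y) := by
  have hterm (i : V) : HasSum (fun k : ℕ => Real.exp (-t) * t ^ k / (Nat.factorial k) *
      (p i ^ k * (v i x * v i y))) (Real.exp (-(1 - p i) * t) * (v i x * v i y)) := by
    have hexp := (NormedSpace.expSeries_div_hasSum_exp (t * p i)).mul_left
      (Real.exp (-t) * (v i x * v i y))
    rw [← Real.exp_eq_exp_ℝ, mul_right_comm, ← Real.exp_add,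
      show -t + t * p i = -(1 - p i) * t by ring] at hexp
    refine hexp.congr_fun fun k => ?_
    ring
  rw [heatK, ← (hasSum_sum fun i _ => hterm i).tsum_eq]
  simp_rw [hv.pow_apply, Finset.mul_sum]

lemma sum_ite_eq_one (hv : IsEigenbasis (transP G d) v p) (hreg : IsReg G d) (hd : d ≠ 0)
    (hc : G.Connected) (x y : V) :
    ∑ i, (if p i = 1 then v i x * v i y else 0) = 1 / (Fintype.card V : ℝ) := by
  have hcard : (Fintype.card V : ℝ) ≠ 0 := by
    have : Nonempty V := ⟨x⟩
    exact_mod_cast Fintype.card_ne_zero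
  have hterm (i : V) : ∑ u, v i x * v i u =
      Fintype.card V * if p i = 1 then v i x * v i y else 0 := by
    rw [← Finset.mul_sum]
    split_ifs with hi
    · have hconst (u : V) : v i u = v i y := hreg.apply_eq_of_transP_fixed hd hc
        (fun z => by rw [hv.sum_mul_apply, hi, one_mul]) u y
      simp_rw [hconst, Finset.sum_const, Finset.card_univ, nsmul_eq_mul]
      ring
    · rw [hreg.sum_eq_zero_of_transP_eigen hd hi (hv.sum_mul_apply i)]
      simp
  rw [eq_div_iff hcard, mul_comm, Finset.mul_sum]
  simp_rw [← hterm]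
  rw [Finset.sum_comm]
  simp [hv.sum_apply_mul_apply]

-- With the convention `0⁻¹ = 0` the constant eigenfunctions do not contribute.
lemma zGreen_eq (hv : IsEigenbasis (transP G d) v p) (hreg : IsReg G d) (hd : d ≠ 0)
    (hc : G.Connected) (hgap : SpectralGapLB G d β) (hβ : 0 < β) (x y : V) :
    zGreen G d (Fintype.card V) x y = ∑ i, (1 - p i)⁻¹ * (v i x * v i y) := by
  have hheat (t : ℝ) : heatK G d t x y - 1 / (Fintype.card V : ℝ) =
      ∑ i, (if p i = 1 then 0 else Real.exp (-(1 - p i) * t) * (v i x * v i y)) := by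
    rw [hv.heatK_eq, ← hv.sum_ite_eq_one hreg hd hc x y, ← Finset.sum_sub_distrib]
    refine Finset.sum_congr rfl fun i _ => ?_
    split_ifs with hi <;> simp [hi]
  have hneg {i : V} (hi : p i ≠ 1) : -(1 - p i) < 0 :=
    neg_neg_of_pos (hβ.trans_le ((hv.eq_one_or_le hgap i).resolve_left hi))
  simp_rw [zGreen, hheat]
  rw [integral_finsetSum _ fun i _ => ?_]
  · refine Finset.sum_congr rfl fun i _ => ?_
    split_ifs with hi
    · simp [hi]
    · rw [integral_mul_const, integral_exp_mul_Ioi (hneg hi), mul_zero, Real.exp_zero,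
        neg_div_neg_eq, one_div]
  · split_ifs with hi
    · exact integrable_zero _ _ _
    · exact (integrableOn_exp_mul_Ioi (hneg hi) 0).mul_const _

end IsEigenbasis

section ZeroAverageGreen

variable {V : Type*} [Fintype V] {G : SimpleGraph V} {d : ℕ} {β : ℝ}

lemma posSemidef_zGreen (hreg : IsReg G d) (hd : d ≠ 0) (hc : G.Connected)
    (hgap : SpectralGapLB G d β) (hβ : 0 < β) :
    (Matrix.of (zGreen G d (Fintype.card V))).PosSemidef := by
  obtain ⟨v, p, hv⟩ := exists_isEigenbasis (isHermitian_transP G d)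
  have hgreen : zGreen G d (Fintype.card V) = fun x y => ∑ i, (1 - p i)⁻¹ * (v i x * v i y) := by
    ext x y
    exact hv.zGreen_eq hreg hd hc hgap hβ x y
  rw [hgreen]
  refine posSemidef_of_covForm_nonneg (fun x y => by simp only [mul_comm (v _ x)])
    (covForm_sum_mul_nonneg (fun i => inv_nonneg.2 ?_) v)
  rcases hv.eq_one_or_le hgap i with hi | hi
  · simp [hi]
  · exact hβ.le.trans hi

lemma zGreen_sub_sum_transP_mul_zGreen (hreg : IsReg G d) (hd : d ≠ 0) (hc : G.Connected)
    (hgap : SpectralGapLB G d β) (hβ : 0 < β) (x y : V) :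
    zGreen G d (Fintype.card V) x y - ∑ z, transP G d y z * zGreen G d (Fintype.card V) x z =
      (if x = y then 1 else 0) - 1 / (Fintype.card V : ℝ) := by
  obtain ⟨v, p, hv⟩ := exists_isEigenbasis (isHermitian_transP G d)
  simp_rw [hv.zGreen_eq hreg hd hc hgap hβ, ← hv.sum_ite_eq_one hreg hd hc x y,
    ← hv.sum_apply_mul_apply x y, Finset.mul_sum]
  rw [Finset.sum_comm, ← Finset.sum_sub_distrib, ← Finset.sum_sub_distrib]
  refine Finset.sum_congr rfl fun i _ => ?_
  have heigen : ∑ z, transP G d y z * ((1 - p i)⁻¹ * (v i x * v i z)) =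
      (1 - p i)⁻¹ * v i x * (p i * v i y) := by
    rw [← hv.sum_mul_apply, Finset.mul_sum]
    exact Finset.sum_congr rfl fun z _ => by ring
  rw [heigen]
  split_ifs with hi
  · simp [hi]
  · field_simp [sub_ne_zero.2 (Ne.symm hi)]
    ring

lemma sum_zGreen_sq_le (hreg : IsReg G d) (hd : d ≠ 0) (hc : G.Connected)
    (hgap : SpectralGapLB G d β) (hβ : 0 < β) (x : V) :
    ∑ y, zGreen G d (Fintype.card V) x y ^ 2 ≤ β⁻¹ ^ 2 := by
  obtain ⟨v, p, hv⟩ := exists_isEigenbasis (isHermitian_transP G d)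
  have hinv (i : V) : (1 - p i)⁻¹ ^ 2 ≤ β⁻¹ ^ 2 := by
    rcases hv.eq_one_or_le hgap i with hi | hi
    · simp [hi, sq_nonneg]
    · have := hβ.trans_le hi
      gcongr
  calc ∑ y, zGreen G d (Fintype.card V) x y ^ 2
      = ∑ y, (∑ i, (1 - p i)⁻¹ * v i x * v i y) ^ 2 := by
        simp_rw [hv.zGreen_eq hreg hd hc hgap hβ, mul_assoc]
    _ = ∑ i, (1 - p i)⁻¹ ^ 2 * (v i x * v i x) := by
        rw [hv.sum_sq_sum_mul]
        exact Finset.sum_congr rfl fun i _ => by ring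
    _ ≤ ∑ i, β⁻¹ ^ 2 * (v i x * v i x) :=
        Finset.sum_le_sum fun i _ => mul_le_mul_of_nonneg_right (hinv i) (mul_self_nonneg _)
    _ = β⁻¹ ^ 2 := by rw [← Finset.mul_sum, hv.sum_apply_mul_apply, if_pos rfl, mul_one]

-- Testing the weak form of `(1 - P) A = δ_z - ν` against the Green function at `y`.
lemma abs_zGreen_sub_le (hreg : IsReg G d) (hd : d ≠ 0) (hc : G.Connected)
    (hgap : SpectralGapLB G d β) (hβ : 0 < β) {z : V} {A ν : V → ℝ}
    (hA : ∀ f : V → ℝ, ∑ u, A u * (f u - ∑ w, transP G d u w * f w) = f z - ∑ u, ν u * f u)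
    (y : V) :
    |zGreen G d (Fintype.card V) y z - A y| ≤
      β⁻¹ * √(∑ u, ν u ^ 2) + |∑ u, A u| / (Fintype.card V : ℝ) := by
  set g := zGreen G d (Fintype.card V)
  have hAg := hA (g y)
  simp_rw [g, zGreen_sub_sum_transP_mul_zGreen hreg hd hc hgap hβ, mul_sub, mul_ite, mul_one,
    mul_zero, Finset.sum_sub_distrib, Finset.sum_ite_eq, Finset.mem_univ, if_true,
    ← Finset.sum_mul] at hAg
  have herror : g y z - A y = ∑ u, ν u * g y u - (∑ u, A u) * (1 / Fintype.card V) := by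
    linarith
  have hcauchy : |∑ u, ν u * g y u| ≤ β⁻¹ * √(∑ u, ν u ^ 2) := by
    refine (Real.abs_le_sqrt (Finset.sum_mul_sq_le_sq_mul_sq _ _ _)).trans ?_
    rw [Real.sqrt_mul (Finset.sum_nonneg fun u _ => sq_nonneg _), mul_comm]
    gcongr
    exact Real.sqrt_le_iff.2 ⟨(inv_pos.2 hβ).le, sum_zGreen_sq_le hreg hd hc hgap hβ y⟩
  calc |g y z - A y| ≤ |∑ u, ν u * g y u| + |(∑ u, A u) * (1 / Fintype.card V)| := by
        rw [herror]
        exact abs_sub _ _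
    _ ≤ β⁻¹ * √(∑ u, ν u ^ 2) + |∑ u, A u| / (Fintype.card V : ℝ) := by
        rw [abs_mul, abs_of_nonneg (a := 1 / (Fintype.card V : ℝ)) (by positivity), mul_one_div]
        gcongr

lemma mul_card_sub_one_le_card (hreg : IsReg G d) (hd : d ≠ 0) (hc : G.Connected)
    (hgap : SpectralGapLB G d β) : β * (Fintype.card V - 1 : ℝ) ≤ Fintype.card V := by
  obtain ⟨v, p, hv⟩ := exists_isEigenbasis (isHermitian_transP G d)
  obtain ⟨x⟩ := hc.nonempty
  have hcard : 0 < (Fintype.card V : ℝ) := by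
    have : Nonempty V := ⟨x⟩
    exact_mod_cast Fintype.card_pos
  have hterm (i : V) : β * (v i x * v i x - if p i = 1 then v i x * v i x else 0) ≤
      v i x * v i x - p i ^ 1 * (v i x * v i x) := by
    split_ifs with hi
    · simp [hi]
    · nlinarith [(hv.eq_one_or_le hgap i).resolve_left hi, mul_self_nonneg (v i x)]
  have hle := Finset.sum_le_sum fun i (_ : i ∈ Finset.univ) => hterm i
  rw [← Finset.mul_sum, Finset.sum_sub_distrib, Finset.sum_sub_distrib,
    hv.sum_ite_eq_one hreg hd hc, ← hv.pow_apply, pow_one, hv.sum_apply_mul_apply] at hle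
  simp only [transP, if_true, Matrix.of_apply, SimpleGraph.irrefl, if_false, sub_zero] at hle
  calc β * (Fintype.card V - 1 : ℝ) = β * (1 - 1 / Fintype.card V) * Fintype.card V := by
        field_simp
    _ ≤ Fintype.card V := mul_le_of_le_one_left hcard.le hle

end ZeroAverageGreen

/-! ### Green functions of a graph and of its cover tree -/

lemma sum_mul_sum_neighborFinset_comm {T : Type*} {Gt : SimpleGraph T} [Gt.LocallyFinite]
    {B : Finset T} {a : T → ℝ} (haB : ∀ w v, Gt.Adj w v → a w ≠ 0 → w ∈ B ∧ v ∈ B) (g : T → ℝ) :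
    ∑ w ∈ B, a w * ∑ v ∈ Gt.neighborFinset w, g v =
      ∑ v ∈ B, g v * ∑ w ∈ Gt.neighborFinset v, a w := by
  have hleft (w : T) : a w * ∑ v ∈ Gt.neighborFinset w, g v =
      ∑ v ∈ B, if Gt.Adj w v then a w * g v else 0 := by
    rw [Finset.mul_sum, ← Finset.sum_filter]
    refine (Finset.sum_subset (fun v => by simp) fun v hv hv' => ?_).symm
    rw [SimpleGraph.mem_neighborFinset] at hv
    have hzero : a w = 0 := by
      by_contra hne
      exact hv' (Finset.mem_filter.2 ⟨(haB w v hv hne).2, hv⟩)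
    rw [hzero, zero_mul]
  have hright (v : T) : g v * ∑ w ∈ Gt.neighborFinset v, a w =
      ∑ w ∈ B, if Gt.Adj w v then a w * g v else 0 := by
    rw [Finset.mul_sum, ← Finset.sum_filter]
    simp_rw [mul_comm (g v)]
    refine (Finset.sum_subset (fun w => by simp [SimpleGraph.adj_comm]) fun w hw hw' => ?_).symm
    rw [SimpleGraph.mem_neighborFinset] at hw
    have hzero : a w = 0 := by
      by_contra hne
      exact hw' (Finset.mem_filter.2 ⟨(haB w v hw.symm hne).1, hw.symm⟩)
    rw [hzero, zero_mul]
  simp_rw [hleft, hright]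
  exact Finset.sum_comm

section RadialFunctions

variable {T : Type*} {Gt : SimpleGraph T} [Gt.LocallyFinite] {z v : T}

lemma sum_neighborFinset_dist_self (z : T) (φ : ℕ → ℝ) :
    ∑ u ∈ Gt.neighborFinset z, φ (Gt.dist z u) = Gt.degree z * φ 1 := by
  rw [← SimpleGraph.card_neighborFinset_eq_degree, ← nsmul_eq_mul, ← Finset.sum_const]
  refine Finset.sum_congr rfl fun u hu => ?_
  rw [SimpleGraph.dist_eq_one_iff_adj.2 ((Gt.mem_neighborFinset z u).1 hu)]

lemma sum_neighborFinset_dist (hG : Gt.IsTree) {j : ℕ} (hv : Gt.dist z v = j + 1) (φ : ℕ → ℝ) :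
    ∑ u ∈ Gt.neighborFinset v, φ (Gt.dist z u) = φ j + (Gt.degree v - 1) * φ (j + 2) := by
  obtain ⟨q, hq, hqj⟩ := exists_adj_dist_eq hG.connected hv
  have hq' : q ∈ Gt.neighborFinset v := (Gt.mem_neighborFinset v q).2 hq
  have hfar : ∀ u ∈ (Gt.neighborFinset v).erase q, φ (Gt.dist z u) = φ (j + 2) := by
    intro u hu
    rw [Finset.mem_erase, SimpleGraph.mem_neighborFinset] at hu
    rw [dist_eq_add_one_of_isTree hG hq hu.2 hu.1 (by rw [hv, hqj]), hv]
  rw [← Finset.add_sum_erase _ _ hq', hqj, Finset.sum_congr rfl hfar, Finset.sum_const,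
    Finset.card_erase_of_mem hq', SimpleGraph.card_neighborFinset_eq_degree, nsmul_eq_mul,
    Nat.cast_sub (by rw [← SimpleGraph.card_neighborFinset_eq_degree]
                     exact Finset.card_pos.2 ⟨q, hq'⟩), Nat.cast_one]

end RadialFunctions

/-- The radial profile of the Green function of the `(b + 1)`-regular tree killed on the sphere of
radius `m + 1`. -/
noncomputable def truncGreen (b m j : ℕ) : ℝ :=
  if j ≤ m then (b : ℝ) / (b - 1) * ((b : ℝ)⁻¹ ^ j - (b : ℝ)⁻¹ ^ (m + 1)) else 0

/-- The radial profile of the uniform probability on the sphere of radius `m + 1` of the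
`(b + 1)`-regular tree. -/
noncomputable def sphereWeight (b m j : ℕ) : ℝ :=
  if j = m + 1 then (((b : ℝ) + 1) * b ^ m)⁻¹ else 0

section TruncatedGreen

variable {b m j : ℕ}

lemma truncGreen_of_le (h : j ≤ m + 1) :
    truncGreen b m j = (b : ℝ) / (b - 1) * ((b : ℝ)⁻¹ ^ j - (b : ℝ)⁻¹ ^ (m + 1)) := by
  rcases Nat.le_succ_iff.1 h with h | rfl
  · exact if_pos h
  · simp [truncGreen]

lemma truncGreen_of_lt (h : m < j) : truncGreen b m j = 0 := if_neg h.not_ge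

lemma truncGreen_nonneg (hb : 2 ≤ b) : 0 ≤ truncGreen b m j := by
  rcases le_or_gt j m with h | h
  · have hpow : (b : ℝ)⁻¹ ^ (m + 1) ≤ (b : ℝ)⁻¹ ^ j :=
      pow_le_pow_of_le_one (by positivity) (Nat.cast_inv_le_one b) (by omega)
    rw [truncGreen, if_pos h]
    exact mul_nonneg (div_sub_one_pos hb).le (sub_nonneg.2 hpow)
  · exact (truncGreen_of_lt h).ge

lemma truncGreen_zero_sub (hb : 2 ≤ b) : truncGreen b m 0 - truncGreen b m 1 = 1 := by
  have hb' : (2 : ℝ) ≤ b := by exact_mod_cast hb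
  have hb1 : (b : ℝ) - 1 ≠ 0 := by linarith
  rw [truncGreen_of_le (by omega), truncGreen_of_le (by omega)]
  field_simp
  ring

lemma truncGreen_succ_sub (hb : 2 ≤ b) :
    truncGreen b m (j + 1) - ((b : ℝ) + 1)⁻¹ * (truncGreen b m j + b * truncGreen b m (j + 2)) =
      -sphereWeight b m (j + 1) := by
  have hb' : (2 : ℝ) ≤ b := by exact_mod_cast hb
  have hb1 : (b : ℝ) - 1 ≠ 0 := by linarith
  rcases lt_trichotomy j m with h | rfl | h
  · rw [truncGreen_of_le (by omega), truncGreen_of_le (by omega), truncGreen_of_le (by omega),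
      sphereWeight, if_neg (by omega)]
    simp only [inv_pow, pow_succ]
    field_simp
    ring
  · rw [truncGreen_of_lt (by omega), truncGreen_of_le (by omega), truncGreen_of_lt (by omega),
      sphereWeight, if_pos rfl]
    simp only [inv_pow]
    field_simp
    ring
  · simp [truncGreen_of_lt (show m < j + 1 by omega), truncGreen_of_lt h,
      truncGreen_of_lt (show m < j + 2 by omega), sphereWeight, h.ne']

end TruncatedGreen

section TreeGreenIdentity

variable {T : Type*} {Gt : SimpleGraph T} [Gt.LocallyFinite] {b m : ℕ} {z : T} {B : Finset T}

lemma truncGreen_sub_average (hb : 2 ≤ b) (ht : IsRegTree Gt (b + 1)) (z v : T) :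
    truncGreen b m (Gt.dist z v) -
        ((b : ℝ) + 1)⁻¹ * ∑ u ∈ Gt.neighborFinset v, truncGreen b m (Gt.dist z u) =
      (if v = z then 1 else 0) - sphereWeight b m (Gt.dist z v) := by
  have hb1 : (b : ℝ) + 1 ≠ 0 := by positivity
  rcases eq_or_ne v z with rfl | hne
  · rw [sum_neighborFinset_dist_self, SimpleGraph.dist_self, ht.2.2.degree_eq, Nat.cast_add_one,
      inv_mul_cancel_left₀ hb1, truncGreen_zero_sub hb]
    simp [sphereWeight]
  · obtain ⟨j, hj⟩ := Nat.exists_eq_succ_of_ne_zero (ht.1.pos_dist_of_ne hne.symm).ne'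
    rw [sum_neighborFinset_dist ⟨ht.1, ht.2.1⟩ hj, ht.2.2.degree_eq, hj, Nat.cast_add_one,
      add_sub_cancel_right, if_neg hne, zero_sub]
    exact truncGreen_succ_sub hb

lemma sum_truncGreen_mul_sub_average (hb : 2 ≤ b) (ht : IsRegTree Gt (b + 1))
    (hB : ∀ w, w ∈ B ↔ Gt.dist z w ≤ m + 1) (g : T → ℝ) :
    ∑ w ∈ B, truncGreen b m (Gt.dist z w) *
        (g w - ((b : ℝ) + 1)⁻¹ * ∑ v ∈ Gt.neighborFinset w, g v) =
      g z - ∑ w ∈ B, sphereWeight b m (Gt.dist z w) * g w := by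
  have hsupp (w v : T) (hadj : Gt.Adj w v) (hw : truncGreen b m (Gt.dist z w) ≠ 0) :
      w ∈ B ∧ v ∈ B := by
    have hwm : Gt.dist z w ≤ m := not_lt.1 fun h => hw (truncGreen_of_lt h)
    have htri := ht.1.dist_triangle (u := z) (v := w) (w := v)
    rw [SimpleGraph.dist_eq_one_iff_adj.2 hadj] at htri
    exact ⟨(hB w).2 (by omega), (hB v).2 (by omega)⟩
  have hz : z ∈ B := (hB z).2 (by simp)
  calc _ = ∑ w ∈ B, truncGreen b m (Gt.dist z w) * g w - ((b : ℝ) + 1)⁻¹ *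
          ∑ w ∈ B, truncGreen b m (Gt.dist z w) * ∑ v ∈ Gt.neighborFinset w, g v := by
        rw [Finset.mul_sum, ← Finset.sum_sub_distrib]
        exact Finset.sum_congr rfl fun w _ => by ring
    _ = ∑ w ∈ B, ((if w = z then 1 else 0) - sphereWeight b m (Gt.dist z w)) * g w := by
        rw [sum_mul_sum_neighborFinset_comm hsupp, Finset.mul_sum, ← Finset.sum_sub_distrib]
        refine Finset.sum_congr rfl fun w _ => ?_
        rw [← truncGreen_sub_average hb ht]
        ring
    _ = _ := by simp [sub_mul, hz]

lemma sum_sphereWeight (hb : 2 ≤ b) (ht : IsRegTree Gt (b + 1))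
    (hB : ∀ w, w ∈ B ↔ Gt.dist z w ≤ m + 1) :
    ∑ w ∈ B, sphereWeight b m (Gt.dist z w) = 1 := by
  have hconst := sum_truncGreen_mul_sub_average hb ht hB fun _ => 1
  have hb1 : (b : ℝ) + 1 ≠ 0 := by positivity
  simp only [Finset.sum_const, SimpleGraph.card_neighborFinset_eq_degree, ht.2.2.degree_eq,
    nsmul_eq_mul, Nat.cast_add_one, mul_one, inv_mul_cancel₀ hb1, sub_self, mul_zero] at hconst
  linarith

lemma sum_sphereWeight_sq_le (hb : 2 ≤ b) (ht : IsRegTree Gt (b + 1))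
    (hB : ∀ w, w ∈ B ↔ Gt.dist z w ≤ m + 1) :
    ∑ w ∈ B, sphereWeight b m (Gt.dist z w) ^ 2 ≤ (b : ℝ)⁻¹ ^ (m + 1) := by
  have hweight (j : ℕ) : sphereWeight b m j ^ 2 ≤ (b : ℝ)⁻¹ ^ (m + 1) * sphereWeight b m j := by
    unfold sphereWeight
    split_ifs
    · rw [sq]
      gcongr
      rw [inv_pow, pow_succ, mul_comm]
      gcongr
      linarith
    · simp
  calc _ ≤ ∑ w ∈ B, (b : ℝ)⁻¹ ^ (m + 1) * sphereWeight b m (Gt.dist z w) :=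
        Finset.sum_le_sum fun w _ => hweight _
    _ = _ := by rw [← Finset.mul_sum, sum_sphereWeight hb ht hB, mul_one]

-- Test the identity against a multiple `g` of the distance to `z` for which `g - P g ≥ 1`.
lemma sum_truncGreen_le (hb : 2 ≤ b) (ht : IsRegTree Gt (b + 1))
    (hB : ∀ w, w ∈ B ↔ Gt.dist z w ≤ m + 1) :
    ∑ w ∈ B, truncGreen b m (Gt.dist z w) ≤ 3 * (m + 1) := by
  have hb' : (2 : ℝ) ≤ b := by exact_mod_cast hb
  have hb1 : (b : ℝ) - 1 ≠ 0 := by linarith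
  set c : ℝ := ((b : ℝ) + 1) / (b - 1)
  have hc1 : 1 ≤ c := by rw [le_div_iff₀ (by linarith)]; linarith
  have hc3 : c ≤ 3 := by rw [div_le_iff₀ (by linarith)]; linarith
  let g : T → ℝ := fun w => -(c * Gt.dist z w)
  have hg (w : T) : 1 ≤ g w - ((b : ℝ) + 1)⁻¹ * ∑ v ∈ Gt.neighborFinset w, g v := by
    rcases eq_or_ne w z with rfl | hne
    · rw [sum_neighborFinset_dist_self w fun j => -(c * j), ht.2.2.degree_eq, Nat.cast_add_one,
        inv_mul_cancel_left₀ (by positivity)]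
      simpa [g] using hc1
    · obtain ⟨j, hj⟩ := Nat.exists_eq_succ_of_ne_zero (ht.1.pos_dist_of_ne hne.symm).ne'
      rw [sum_neighborFinset_dist ⟨ht.1, ht.2.1⟩ hj fun j => -(c * j), ht.2.2.degree_eq]
      refine le_of_eq ?_
      simp only [g, hj, c]
      push_cast
      field_simp
      ring
  have hsphere : ∑ w ∈ B, sphereWeight b m (Gt.dist z w) * g w = -(c * (m + 1)) := by
    have hradius (w : T) : sphereWeight b m (Gt.dist z w) * g w =
        sphereWeight b m (Gt.dist z w) * -(c * (m + 1)) := by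
      unfold sphereWeight
      split_ifs with h <;> simp [g, h]
    simp_rw [hradius]
    rw [← Finset.sum_mul, sum_sphereWeight hb ht hB, one_mul]
  calc _ ≤ ∑ w ∈ B, truncGreen b m (Gt.dist z w) *
          (g w - ((b : ℝ) + 1)⁻¹ * ∑ v ∈ Gt.neighborFinset w, g v) :=
        Finset.sum_le_sum fun w _ => le_mul_of_one_le_right (truncGreen_nonneg hb) (hg w)
    _ = c * (m + 1) := by
        rw [sum_truncGreen_mul_sub_average hb ht hB, hsphere]
        simp [g]
    _ ≤ _ := by gcongr

end TreeGreenIdentity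

/-- The image under `π` of the measure with density `a` on the finite set `B`. -/
noncomputable def pushSum {T V : Type*} (π : T → V) (B : Finset T) (a : T → ℝ) (u : V) : ℝ :=
  ∑ w ∈ B with π w = u, a w

section PushSum

variable {T V : Type*} {π : T → V} {B : Finset T} {a : T → ℝ}

lemma sum_pushSum_mul [Fintype V] (f : V → ℝ) :
    ∑ u, pushSum π B a u * f u = ∑ w ∈ B, a w * f (π w) := by
  rw [← Finset.sum_fiberwise B π]
  refine Finset.sum_congr rfl fun u _ => ?_
  rw [pushSum, Finset.sum_mul]
  exact Finset.sum_congr rfl fun w hw => by rw [(Finset.mem_filter.1 hw).2]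

lemma pushSum_apply (hinj : InjOn π B) {w : T} (hw : w ∈ B) : pushSum π B a (π w) = a w := by
  rw [pushSum, show ({w' ∈ B | π w' = π w} : Finset T) = {w} from ?_, Finset.sum_singleton]
  ext w'
  rw [Finset.mem_filter, Finset.mem_singleton]
  exact ⟨fun h => hinj h.1 hw h.2, fun h => by simp [h, hw]⟩

lemma sum_pushSum_sq [Fintype V] (hinj : InjOn π B) :
    ∑ u, pushSum π B a u ^ 2 = ∑ w ∈ B, a w ^ 2 := by
  simp_rw [sq]
  rw [sum_pushSum_mul]
  exact Finset.sum_congr rfl fun w hw => by rw [pushSum_apply hinj hw]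

end PushSum

section CoverTree

variable {T V : Type*} {Gt : SimpleGraph T} {G : SimpleGraph V} {o : T} {x : V} {π : T → V} {b : ℕ}

lemma IsCoverMap.adj (hπ : IsCoverMap Gt G o x π) {v w : T} (h : Gt.Adj v w) :
    G.Adj (π v) (π w) := by
  have hw : π w ∈ G.neighborSet (π v) := hπ.2.2 v ▸ mem_image_of_mem π h
  exact hw

lemma IsCoverMap.injOn_neighborSet (hπ : IsCoverMap Gt G o x π) (ht : IsReg Gt (b + 1))
    (hreg : IsReg G (b + 1)) (w : T) : InjOn π (Gt.neighborSet w) := by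
  have hcard : (Gt.neighborSet w).ncard = b + 1 := ht w
  refine injOn_of_ncard_image_eq ?_ (finite_of_ncard_pos (by omega))
  rw [hπ.2.2, hcard]
  exact hreg (π w)

variable [Fintype V] {β : ℝ} {m : ℕ} {y z : T}

lemma IsCoverMap.sum_transP_mul [Gt.LocallyFinite] (hπ : IsCoverMap Gt G o x π)
    (ht : IsReg Gt (b + 1)) (hreg : IsReg G (b + 1)) (f : V → ℝ) (w : T) :
    ∑ u, transP G (b + 1) (π w) u * f u =
      ((b : ℝ) + 1)⁻¹ * ∑ v ∈ Gt.neighborFinset w, f (π v) := by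
  have himage : G.neighborFinset (π w) = (Gt.neighborFinset w).image π := by
    rw [← Finset.coe_inj]
    simp [hπ.2.2]
  rw [GFF.sum_transP_mul, himage, Finset.sum_image, Nat.cast_add_one]
  simpa using hπ.injOn_neighborSet ht hreg w

lemma abs_zGreen_sub_pushSum_truncGreen_le [Gt.LocallyFinite] (hb : 2 ≤ b)
    (ht : IsRegTree Gt (b + 1)) (hreg : IsReg G (b + 1)) (hc : G.Connected)
    (hgap : SpectralGapLB G (b + 1) β) (hβ : 0 < β) (hπ : IsCoverMap Gt G o x π) {B : Finset T}
    (hB : ∀ w, w ∈ B ↔ Gt.dist z w ≤ m + 1) (hinj : InjOn π B) (v : V) :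
    |zGreen G (b + 1) (Fintype.card V) v (π z) -
        pushSum π B (fun w => truncGreen b m (Gt.dist z w)) v| ≤
      β⁻¹ * √((b : ℝ)⁻¹ ^ (m + 1)) + 3 * (m + 1) / (Fintype.card V : ℝ) := by
  let A := pushSum π B fun w => truncGreen b m (Gt.dist z w)
  let ν := pushSum π B fun w => sphereWeight b m (Gt.dist z w)
  have hgreen := abs_zGreen_sub_le hreg (by omega) hc hgap hβ (z := π z) (A := A) (ν := ν)
    (fun f => by
      rw [sum_pushSum_mul, sum_pushSum_mul,
        ← sum_truncGreen_mul_sub_average hb ht hB fun w => f (π w)]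
      simp_rw [hπ.sum_transP_mul ht.2.2 hreg]) v
  have hsum : ∑ u, A u = ∑ w ∈ B, truncGreen b m (Gt.dist z w) := by
    simpa using sum_pushSum_mul (π := π) (B := B) (a := fun w => truncGreen b m (Gt.dist z w)) 1
  have hsum0 : 0 ≤ ∑ u, A u := hsum ▸ Finset.sum_nonneg fun w _ => truncGreen_nonneg hb
  refine hgreen.trans ?_
  rw [abs_of_nonneg hsum0, hsum, sum_pushSum_sq hinj]
  gcongr
  · exact sum_sphereWeight_sq_le hb ht hB
  · exact sum_truncGreen_le hb ht hB

lemma abs_zGreen_sub_treeGreen_le (hb : 2 ≤ b) (ht : IsRegTree Gt (b + 1))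
    (hreg : IsReg G (b + 1)) (hc : G.Connected) (hgap : SpectralGapLB G (b + 1) β) (hβ : 0 < β)
    (hπ : IsCoverMap Gt G o x π) (hinj : InjOn π (gball Gt z (m + 1)))
    (hy : y ∈ gball Gt z (m + 1)) :
    |zGreen G (b + 1) (Fintype.card V) (π y) (π z) - treeGreen Gt (b + 1) y z| ≤
      β⁻¹ * √((b : ℝ)⁻¹ ^ (m + 1)) + 2 * (b : ℝ)⁻¹ ^ (m + 1) +
        3 * (m + 1) / (Fintype.card V : ℝ) := by
  have hb' : (2 : ℝ) ≤ b := by exact_mod_cast hb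
  have : Gt.LocallyFinite := fun v =>
    have : Finite (Gt.neighborSet v) := Nat.finite_of_card_ne_zero (by rw [ht.2.2 v]; omega)
    Fintype.ofFinite _
  let B := (finite_gball ht.1 (by omega) ht.2.2 z (m + 1)).toFinset
  have hB (w : T) : w ∈ B ↔ Gt.dist z w ≤ m + 1 := Set.Finite.mem_toFinset _
  have hinjB : InjOn π B := by simpa [B] using hinj
  let A := pushSum π B fun w => truncGreen b m (Gt.dist z w)
  have hgreen := abs_zGreen_sub_pushSum_truncGreen_le hb ht hreg hc hgap hβ hπ hB hinjB (π y)
  have hAy : treeGreen Gt (b + 1) y z - A (π y) = (b : ℝ) / (b - 1) * (b : ℝ)⁻¹ ^ (m + 1) := by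
    have hdist : Gt.dist z y ≤ m + 1 := hy
    simp only [A]
    rw [pushSum_apply hinjB ((hB y).2 hdist), truncGreen_of_le hdist, treeGreen,
      SimpleGraph.dist_comm (u := y)]
    push_cast
    ring_nf
  have hratio : (b : ℝ) / (b - 1) ≤ 2 := by rw [div_le_iff₀ (by linarith)]; linarith
  have hratio0 : 0 ≤ (b : ℝ) / (b - 1) := div_nonneg (by linarith) (by linarith)
  calc _ ≤ |zGreen G (b + 1) (Fintype.card V) (π y) (π z) - A (π y)| +
          |treeGreen Gt (b + 1) y z - A (π y)| := by
        rw [abs_sub_comm (treeGreen Gt (b + 1) y z)]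
        exact abs_sub_le _ _ _
    _ ≤ β⁻¹ * √((b : ℝ)⁻¹ ^ (m + 1)) + 3 * (m + 1) / (Fintype.card V : ℝ) +
          2 * (b : ℝ)⁻¹ ^ (m + 1) := by
        rw [hAy, abs_of_nonneg (mul_nonneg hratio0 (by positivity))]
        exact add_le_add hgreen (mul_le_mul_of_nonneg_right hratio (by positivity))
    _ = _ := by ring

end CoverTree

/-! ### Balls with few cycles -/

section Balls

variable {V : Type*} {G : SimpleGraph V} {x y : V} {k m : ℕ}

lemma mem_gball_self (x : V) (m : ℕ) : x ∈ gball G x m := by simp [gball]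

lemma gball_subset_gball (hc : G.Connected) (h : G.dist x y + m ≤ k) :
    gball G y m ⊆ gball G x k := by
  intro v (hv : G.dist y v ≤ m)
  have htri := hc.dist_triangle (u := x) (v := y) (w := v)
  exact show G.dist x v ≤ k by omega

lemma disjoint_gball (hc : G.Connected) (h : k + m < G.dist x y) :
    Disjoint (gball G x k) (gball G y m) := by
  refine disjoint_left.2 fun v (hx : G.dist x v ≤ k) (hy : G.dist y v ≤ m) => ?_
  have htri := hc.dist_triangle (u := x) (v := v) (w := y)
  rw [SimpleGraph.dist_comm (u := v)] at htri
  omega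

lemma gball_mono (x : V) (h : k ≤ m) : gball G x k ⊆ gball G x m :=
  fun v (hv : G.dist x v ≤ k) => show G.dist x v ≤ m from hv.trans h

/-- `p` fixes the root `x` and maps every other vertex to one of its neighbours closer to `x`. -/
structure IsParentMap (G : SimpleGraph V) (x : V) (p : V → V) : Prop where
  apply_root : p x = x
  adj : ∀ ⦃v⦄, v ≠ x → G.Adj v (p v)
  dist_eq : ∀ ⦃v⦄, v ≠ x → G.dist x v = G.dist x (p v) + 1

lemma exists_isParentMap (hc : G.Connected) (x : V) : ∃ p, IsParentMap G x p := by
  have hcloser (v : V) : ∃ u, v ≠ x → G.Adj v u ∧ G.dist x v = G.dist x u + 1 := by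
    by_cases hv : v = x
    · exact ⟨v, fun h => absurd hv h⟩
    · obtain ⟨j, hj⟩ := Nat.exists_eq_succ_of_ne_zero (hc.pos_dist_of_ne (Ne.symm hv)).ne'
      obtain ⟨u, hu, huj⟩ := exists_adj_dist_eq hc hj
      exact ⟨u, fun _ => ⟨hu, by rw [hj, huj]⟩⟩
  choose p hp using hcloser
  refine ⟨Function.update p x x, Function.update_self .., fun v hv => ?_, fun v hv => ?_⟩
  · rw [Function.update_of_ne hv]
    exact (hp v hv).1
  · rw [Function.update_of_ne hv]
    exact (hp v hv).2

lemma IsParentMap.apply_mem_gball {p : V → V} (hp : IsParentMap G x p) {v : V}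
    (hv : v ∈ gball G x m) : p v ∈ gball G x m := by
  have hvm : G.dist x v ≤ m := hv
  by_cases hvx : v = x
  · rw [hvx, hp.apply_root]
    exact mem_gball_self x m
  · have hdist := hp.dist_eq hvx
    exact show G.dist x (p v) ≤ m by omega

end Balls

section EdgeCounting

variable {V : Type*} [Finite V] {G : SimpleGraph V} {x y : V} {k m ρ : ℕ} {p : V → V}

/-- The ordered adjacent pairs inside `U`. -/
def adjPairSet {V : Type*} (G : SimpleGraph V) (U : Set V) : Set (V × V) :=
  {e | e.1 ∈ U ∧ e.2 ∈ U ∧ G.Adj e.1 e.2}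

lemma ncard_adjPairSet {V : Type*} (G : SimpleGraph V) (U : Set V) :
    (adjPairSet G U).ncard = adjPairs G U := rfl

lemma adjPairSet_mono {V : Type*} {G : SimpleGraph V} {U W : Set V} (h : U ⊆ W) :
    adjPairSet G U ⊆ adjPairSet G W :=
  fun _ he => ⟨h he.1, h he.2.1, he.2.2⟩

lemma IsParentMap.ncard_add_two_mul_ncard_le (hp : IsParentMap G x p) {D : Set V}
    {Q : Set (V × V)} (hQ : Q ⊆ adjPairSet G (gball G x m)) (hD : D ⊆ gball G x m) (hxD : x ∉ D)
    (hQD : ∀ v ∈ D, (v, p v) ∉ Q ∧ (p v, v) ∉ Q) :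
    Q.ncard + 2 * D.ncard ≤ adjPairs G (gball G x m) := by
  have hne (v : V) (hv : v ∈ D) : v ≠ x := ne_of_mem_of_not_mem hv hxD
  set up : Set (V × V) := (fun v => (v, p v)) '' D
  set down : Set (V × V) := (fun v => (p v, v)) '' D
  have hup : up.ncard = D.ncard :=
    ncard_image_of_injective _ fun _ _ h => (Prod.ext_iff.1 h).1
  have hdown : down.ncard = D.ncard :=
    ncard_image_of_injective _ fun _ _ h => (Prod.ext_iff.1 h).2
  have hdisj : Disjoint Q up := by
    rw [disjoint_right]
    rintro _ ⟨v, hv, rfl⟩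
    exact (hQD v hv).1
  have hdisj' : Disjoint (Q ∪ up) down := by
    rw [disjoint_right]
    rintro _ ⟨v, hv, rfl⟩ (h | ⟨u, hu, h⟩)
    · exact (hQD v hv).2 h
    · obtain ⟨rfl, hpv⟩ := Prod.mk.inj h
      have hdist := hp.dist_eq (hne v hv)
      have hdist' := hp.dist_eq (hne _ hu)
      rw [hpv] at hdist'
      omega
  have hsub : Q ∪ up ∪ down ⊆ adjPairSet G (gball G x m) := by
    rintro _ ((h | ⟨v, hv, rfl⟩) | ⟨v, hv, rfl⟩)
    · exact hQ h
    · exact ⟨hD hv, hp.apply_mem_gball (hD hv), hp.adj (hne v hv)⟩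
    · exact ⟨hp.apply_mem_gball (hD hv), hD hv, (hp.adj (hne v hv)).symm⟩
  have hcard := ncard_le_ncard hsub (toFinite _)
  rw [ncard_union_eq hdisj', ncard_union_eq hdisj, hup, hdown, ncard_adjPairSet] at hcard
  omega

lemma adjPairs_add_two_mul_ncard_sdiff_le (hc : G.Connected) {U : Set V} (hU : U ⊆ gball G x m)
    (hx : x ∈ U) :
    adjPairs G U + 2 * (gball G x m \ U).ncard ≤ adjPairs G (gball G x m) := by
  obtain ⟨p, hp⟩ := exists_isParentMap hc x
  exact hp.ncard_add_two_mul_ncard_le (adjPairSet_mono hU) sdiff_subset (fun h => h.2 hx)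
    fun v hv => ⟨fun h => hv.2 h.1, fun h => hv.2 h.2.1⟩

lemma adjPairs_gball_le_of_le (hc : G.Connected) (hm : m ≤ ρ)
    (hρ : adjPairs G (gball G x ρ) ≤ 2 * (gball G x ρ).ncard) :
    adjPairs G (gball G x m) ≤ 2 * (gball G x m).ncard := by
  have hsub := gball_mono (G := G) x hm
  have hexcess := adjPairs_add_two_mul_ncard_sdiff_le hc hsub (mem_gball_self x m)
  have hcard := ncard_sdiff_add_ncard_of_subset hsub
  omega

lemma IsParentMap.two_mul_ncard_le_adjPairs (hp : IsParentMap G x p) {u v : V}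
    (huv : (u, v) ∈ adjPairSet G (gball G x m)) (hu : p u ≠ v) (hv : p v ≠ u) :
    2 * (gball G x m).ncard ≤ adjPairs G (gball G x m) := by
  have hQ : ({(u, v), (v, u)} : Set (V × V)) ⊆ adjPairSet G (gball G x m) := by
    rintro _ (rfl | rfl)
    · exact huv
    · exact ⟨huv.2.1, huv.1, huv.2.2.symm⟩
  have hQp (a : V) : (a, p a) ∉ ({(u, v), (v, u)} : Set (V × V)) := by
    simp only [mem_insert_iff, mem_singleton_iff, Prod.mk.injEq, not_or]
    exact ⟨by rintro ⟨rfl, h⟩; exact hu h, by rintro ⟨rfl, h⟩; exact hv h⟩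
  have hQp' (a : V) : (p a, a) ∉ ({(u, v), (v, u)} : Set (V × V)) := by
    simp only [mem_insert_iff, mem_singleton_iff, Prod.mk.injEq, not_or]
    exact ⟨by rintro ⟨h, rfl⟩; exact hv h, by rintro ⟨h, rfl⟩; exact hu h⟩
  have hcount := hp.ncard_add_two_mul_ncard_le hQ (D := gball G x m \ {x}) sdiff_subset (by simp)
    fun a _ => ⟨hQp a, hQp' a⟩
  have hcardQ : ({(u, v), (v, u)} : Set (V × V)).ncard = 2 := ncard_pair (by simp [huv.2.2.ne])
  rw [hcardQ, ncard_sdiff_singleton_of_mem (mem_gball_self x m)] at hcount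
  omega

lemma two_mul_ncard_le_adjPairs_of_not_txZero (hc : G.Connected)
    (htx : ¬ TxZero G (gball G x k)) :
    2 * (gball G x k).ncard ≤ adjPairs G (gball G x k) := by
  obtain ⟨p, hp⟩ := exists_isParentMap hc x
  by_contra hlt
  have hparent : ∀ e ∈ adjPairSet G (gball G x k), p e.1 = e.2 ∨ p e.2 = e.1 := by
    rintro ⟨u, v⟩ huv
    by_contra! h
    exact hlt (hp.two_mul_ncard_le_adjPairs huv h.1 h.2)
  set D := gball G x k \ {x}
  have hD : D.ncard = (gball G x k).ncard - 1 :=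
    ncard_sdiff_singleton_of_mem (mem_gball_self x k)
  have hsub : adjPairSet G (gball G x k) ⊆
      (fun v => (v, p v)) '' D ∪ (fun v => (p v, v)) '' D := by
    rintro ⟨u, v⟩ huv
    have hor : p u = v ∨ p v = u := hparent _ huv
    rcases hor with rfl | rfl
    · refine .inl ⟨u, ⟨huv.1, fun h => huv.2.2.ne ?_⟩, rfl⟩
      rw [mem_singleton_iff.1 h, hp.apply_root]
    · refine .inr ⟨v, ⟨huv.2.1, fun h => huv.2.2.ne ?_⟩, rfl⟩
      rw [mem_singleton_iff.1 h, hp.apply_root]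
  have hupper := (ncard_le_ncard hsub (toFinite _)).trans (ncard_union_le _ _)
  have hup := ncard_image_le (f := fun v => (v, p v)) (toFinite D)
  have hdown := ncard_image_le (f := fun v => (p v, v)) (toFinite D)
  have hlower := hp.ncard_add_two_mul_ncard_le (empty_subset _) (D := D) sdiff_subset (by simp [D])
    (by simp)
  rw [ncard_empty] at hlower
  rw [ncard_adjPairSet] at hupper
  exact htx (show adjPairs G (gball G x k) = 2 * ((gball G x k).ncard - 1) by omega)

lemma eq_of_txZero_of_dist_le (hc : G.Connected) (htx : TxZero G (gball G x k)) {u v w : V}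
    (hu : G.dist x u ≤ k) (huv : G.Adj u v) (huw : G.Adj u w) (hv : G.dist x v ≤ G.dist x u)
    (hw : G.dist x w ≤ G.dist x u) : v = w := by
  obtain ⟨p, hp⟩ := exists_isParentMap hc x
  have hpos : 0 < (gball G x k).ncard := (ncard_pos).2 ⟨x, mem_gball_self x k⟩
  have hux : u ≠ x := by
    rintro rfl
    rw [SimpleGraph.dist_self, Nat.le_zero, hc.dist_eq_zero_iff] at hv
    exact huv.ne hv
  have hparent (a : V) (hua : G.Adj u a) (ha : G.dist x a ≤ G.dist x u) : p u = a := by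
    by_contra hne
    have hpa : p a ≠ u := by
      rintro rfl
      by_cases hax : a = x
      · exact hux (by rw [hax, hp.apply_root])
      · have := hp.dist_eq hax
        omega
    have hcount := hp.two_mul_ncard_le_adjPairs
      (show (u, a) ∈ adjPairSet G (gball G x k) from ⟨hu, ha.trans hu, hua⟩) hne hpa
    rw [show adjPairs G (gball G x k) = _ from htx] at hcount
    omega
  rw [← hparent v huv hv, ← hparent w huw hw]

-- Two disjoint balls with a cycle and the path joining them would give the large ball two cycles.
lemma lt_dist_add_of_not_txZero (hc : G.Connected) (hx : ¬ TxZero G (gball G x k))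
    (hy : ¬ TxZero G (gball G y k)) (hxy : k + k < G.dist x y)
    (hρ : adjPairs G (gball G x ρ) ≤ 2 * (gball G x ρ).ncard) : ρ < G.dist x y + k := by
  by_contra! hle
  obtain ⟨p, hp⟩ := exists_isParentMap hc x
  set Bx := gball G x k
  set By := gball G y k
  have hBx : Bx ⊆ gball G x ρ := gball_mono x (by omega)
  have hBy : By ⊆ gball G x ρ := gball_subset_gball hc hle
  have hdisj : Disjoint Bx By := disjoint_gball hc hxy
  have hdisjPairs : Disjoint (adjPairSet G Bx) (adjPairSet G By) :=
    disjoint_left.2 fun e h h' => disjoint_left.1 hdisj h.1 h'.1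
  obtain ⟨v, hv, hmin⟩ := exists_min_image By (G.dist x) (toFinite _) ⟨y, mem_gball_self y k⟩
  have hxBx : x ∈ Bx := mem_gball_self x k
  have hvBx : v ∉ Bx := disjoint_right.1 hdisj hv
  have hpv : p v ∉ By := fun h => by
    have hdist := hp.dist_eq (ne_of_mem_of_not_mem hxBx hvBx).symm
    have := hmin _ h
    omega
  set U := Bx ∪ By \ {v}
  have hU : U ⊆ gball G x ρ := union_subset hBx (sdiff_subset.trans hBy)
  have hcount := hp.ncard_add_two_mul_ncard_le (Q := adjPairSet G Bx ∪ adjPairSet G By)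
    (D := gball G x ρ \ U) (union_subset (adjPairSet_mono hBx) (adjPairSet_mono hBy)) sdiff_subset
    (fun h => h.2 (.inl hxBx)) fun a ha => by
      have haBx : a ∉ Bx := fun h => ha.2 (.inl h)
      have haBy (h : a ∈ By) : a = v := by_contra fun hav => ha.2 (.inr ⟨h, hav⟩)
      refine ⟨fun h => h.elim (fun h => haBx h.1) fun h => hpv ?_,
        fun h => h.elim (fun h => haBx h.2.1) fun h => hpv ?_⟩
      · exact haBy h.1 ▸ h.2.1
      · exact haBy h.2.1 ▸ h.1
  have hcardU : U.ncard = Bx.ncard + (By.ncard - 1) := by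
    rw [ncard_union_eq (hdisj.mono_right sdiff_subset), ncard_sdiff_singleton_of_mem hv]
  have hpos : 0 < By.ncard := (ncard_pos (toFinite _)).2 ⟨v, hv⟩
  have hcard := ncard_sdiff_add_ncard_of_subset hU
  rw [ncard_union_eq hdisjPairs, ncard_adjPairSet, ncard_adjPairSet] at hcount
  have hcx : 2 * Bx.ncard ≤ adjPairs G Bx := two_mul_ncard_le_adjPairs_of_not_txZero hc hx
  have hcy : 2 * By.ncard ≤ adjPairs G By := two_mul_ncard_le_adjPairs_of_not_txZero hc hy
  omega

end EdgeCounting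

section BallGrowth

variable {V : Type*} {G : SimpleGraph V} {x : V} {b k m t ρ : ℕ}

lemma ncard_adj_from (hreg : IsReg G (b + 1)) [Finite V] (U : Set V) :
    {e : V × V | e.1 ∈ U ∧ G.Adj e.1 e.2}.ncard = (b + 1) * U.ncard := by
  cases nonempty_fintype V
  have hsigma : {e : V × V | e.1 ∈ U ∧ G.Adj e.1 e.2} =
      (U.toFinset.sigma fun v => G.neighborFinset v).map
        (Equiv.sigmaEquivProd V V).toEmbedding := by
    ext ⟨u, v⟩
    simp
  rw [hsigma, ncard_coe_finset, Finset.card_map, Finset.card_sigma,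
    Finset.sum_congr rfl fun v _ => G.card_neighborFinset_eq_degree v,
    Finset.sum_congr rfl fun v _ => hreg.degree_eq v, Finset.sum_const, smul_eq_mul, mul_comm,
    ncard_eq_toFinset_card']

lemma mul_ncard_gball_le [Finite V] (hc : G.Connected) (hreg : IsReg G (b + 1))
    (hm : adjPairs G (gball G x (m + 1)) ≤ 2 * (gball G x (m + 1)).ncard) :
    b * (gball G x m).ncard ≤ (gball G x (m + 1)).ncard := by
  obtain ⟨p, hp⟩ := exists_isParentMap hc x
  have hsub : gball G x m ⊆ gball G x (m + 1) := gball_mono x m.le_succ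
  set shell := gball G x (m + 1) \ gball G x m
  set out : Set (V × V) := {e | e.1 ∈ gball G x m ∧ G.Adj e.1 e.2}
  set up : Set (V × V) := (fun v => (v, p v)) '' shell
  have hup : up.ncard = shell.ncard := ncard_image_of_injective _ fun _ _ h => (Prod.ext_iff.1 h).1
  have hdisj : Disjoint out up := by
    rw [disjoint_right]
    rintro _ ⟨v, hv, rfl⟩ h
    exact hv.2 h.1
  have hpairs : out ∪ up ⊆ adjPairSet G (gball G x (m + 1)) := by
    rintro ⟨u, w⟩ (⟨hu, hadj⟩ | ⟨v, hv, heq⟩)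
    · refine ⟨hsub hu, gball_subset_gball (y := u) (m := 1) hc (Nat.add_le_add_right hu 1) ?_, hadj⟩
      exact (SimpleGraph.dist_eq_one_iff_adj.2 hadj).le
    · have hvx : v ≠ x := by
        rintro rfl
        exact hv.2 (mem_gball_self v m)
      exact heq ▸ ⟨hv.1, hp.apply_mem_gball hv.1, hp.adj hvx⟩
  have hcount := ncard_le_ncard hpairs (toFinite _)
  rw [ncard_union_eq hdisj, ncard_adj_from hreg, hup, ncard_adjPairSet] at hcount
  have hshell : shell.ncard + _ = _ := ncard_sdiff_add_ncard_of_subset hsub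
  rw [Nat.add_one_mul] at hcount
  omega

lemma pow_mul_ncard_gball_le [Finite V] (hc : G.Connected) (hreg : IsReg G (b + 1))
    (hm : m + t ≤ ρ) (hρ : adjPairs G (gball G x ρ) ≤ 2 * (gball G x ρ).ncard) :
    b ^ t * (gball G x m).ncard ≤ (gball G x (m + t)).ncard := by
  induction t with
  | zero => simp
  | succ t ih =>
    calc b ^ (t + 1) * (gball G x m).ncard = b * (b ^ t * (gball G x m).ncard) := by ring
      _ ≤ b * (gball G x (m + t)).ncard := Nat.mul_le_mul_left _ (ih (by omega))
      _ ≤ _ := mul_ncard_gball_le hc hreg (adjPairs_gball_le_of_le hc hm hρ)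

lemma exists_separated_cover (G : SimpleGraph V) (A : Finset V) (r : ℕ) :
    ∃ S ⊆ A, (S : Set V).Pairwise (fun s s' => r < G.dist s s') ∧
      ∀ a ∈ A, ∃ s ∈ S, a ∈ gball G s r := by
  obtain ⟨S, hS, hmax⟩ := Finset.exists_max_image
    (A.powerset.filter fun S : Finset V => (S : Set V).Pairwise fun s s' => r < G.dist s s')
    Finset.card ⟨∅, by simp⟩
  rw [Finset.mem_filter, Finset.mem_powerset] at hS
  refine ⟨S, hS.1, hS.2, fun a ha => ?_⟩
  by_contra! hfar
  have haS : a ∉ S := fun h => hfar a h (mem_gball_self a r)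
  have hlt (s : V) (hs : s ∈ S) : r < G.dist s a := not_le.1 (hfar s hs)
  have hinsert := hmax (insert a S) <| Finset.mem_filter.2
    ⟨Finset.mem_powerset.2 (Finset.insert_subset ha hS.1), by
      rw [Finset.coe_insert, pairwise_insert_of_notMem haS]
      exact ⟨hS.2, fun s hs => ⟨SimpleGraph.dist_comm ▸ hlt s hs, hlt s hs⟩⟩⟩
  rw [Finset.card_insert_of_notMem haS] at hinsert
  omega

lemma pow_mul_card_not_txZero_le [Fintype V] (hc : G.Connected) (hreg : IsReg G (b + 1))
    (hk : 5 * k + 2 * t ≤ ρ)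
    (hρ : ∀ x, adjPairs G (gball G x ρ) ≤ 2 * (gball G x ρ).ncard) :
    b ^ t * Finset.card {x | ¬ TxZero G (gball G x k)} ≤ Fintype.card V := by
  obtain ⟨S, hS, hsep, hcover⟩ :=
    exists_separated_cover G {x | ¬ TxZero G (gball G x k)} (k + k)
  have hbad (s : V) (hs : s ∈ S) : ¬ TxZero G (gball G s k) := by simpa using hS hs
  have hdisj : (S : Set V).PairwiseDisjoint fun s => (gball G s (k + k + t)).toFinset := by
    intro s hs s' hs' hne
    have hfar := lt_dist_add_of_not_txZero hc (hbad s hs) (hbad s' hs') (hsep hs hs' hne) (hρ s)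
    exact disjoint_toFinset.2 (disjoint_gball hc (by omega))
  calc b ^ t * Finset.card {x | ¬ TxZero G (gball G x k)}
      ≤ b ^ t * (S.biUnion fun s => (gball G s (k + k)).toFinset).card := by
        gcongr
        intro a ha
        simpa using hcover a ha
    _ ≤ b ^ t * ∑ s ∈ S, (gball G s (k + k)).ncard := by
        simp_rw [ncard_eq_toFinset_card']
        gcongr
        exact Finset.card_biUnion_le
    _ ≤ ∑ s ∈ S, (gball G s (k + k + t)).ncard := by
        rw [Finset.mul_sum]
        exact Finset.sum_le_sum fun s _ => pow_mul_ncard_gball_le hc hreg (by omega) (hρ s)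
    _ = (S.biUnion fun s => (gball G s (k + k + t)).toFinset).card := by
        simp_rw [ncard_eq_toFinset_card']
        exact (Finset.card_biUnion hdisj).symm
    _ ≤ Fintype.card V := Finset.card_le_univ _

end BallGrowth

namespace IsCoverMap

variable {T V : Type*} [Finite V] {Gt : SimpleGraph T} {G : SimpleGraph V} {o : T} {x : V}
  {π : T → V} {b k : ℕ}

lemma dist_apply (hπ : IsCoverMap Gt G o x π) (ht : IsRegTree Gt (b + 1)) (hc : G.Connected)
    (hreg : IsReg G (b + 1)) (htx : TxZero G (gball G x k)) :
    ∀ {j w}, Gt.dist o w = j → j ≤ k → G.dist x (π w) = j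
  | 0, w, hw, _ => by
    rw [ht.1.dist_eq_zero_iff] at hw
    rw [← hw, hπ.1, SimpleGraph.dist_self]
  | 1, w, hw, _ => by
    rw [SimpleGraph.dist_eq_one_iff_adj] at hw ⊢
    exact hπ.1 ▸ hπ.adj hw
  | j + 2, w, hw, hj => by
    obtain ⟨c, hwc, hc'⟩ := exists_adj_dist_eq ht.1 hw
    obtain ⟨a, hca, ha'⟩ := exists_adj_dist_eq ht.1 hc'
    have hcdist := dist_apply hπ ht hc hreg htx hc' (by omega)
    have hadist := dist_apply hπ ht hc hreg htx ha' (by omega)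
    have htri := hc.dist_triangle (u := x) (v := π c) (w := π w)
    rw [SimpleGraph.dist_eq_one_iff_adj.2 (hπ.adj hwc.symm)] at htri
    by_contra hne
    have heq : π w = π a := eq_of_txZero_of_dist_le hc htx (by omega) (hπ.adj hwc.symm)
      (hπ.adj hca) (by omega) (by omega)
    rw [hπ.injOn_neighborSet ht.2.2 hreg c hwc.symm hca heq] at hw
    omega

lemma eq_of_dist_eq (hπ : IsCoverMap Gt G o x π) (ht : IsRegTree Gt (b + 1)) (hc : G.Connected)
    (hreg : IsReg G (b + 1)) (htx : TxZero G (gball G x k)) :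
    ∀ {j w w'}, Gt.dist o w = j → Gt.dist o w' = j → j ≤ k → π w = π w' → w = w'
  | 0, w, w', hw, hw', _, _ => by
    rw [ht.1.dist_eq_zero_iff] at hw hw'
    rw [← hw, hw']
  | j + 1, w, w', hw, hw', hj, heq => by
    obtain ⟨c, hwc, hc'⟩ := exists_adj_dist_eq ht.1 hw
    obtain ⟨c', hwc', hc''⟩ := exists_adj_dist_eq ht.1 hw'
    have hcdist := hπ.dist_apply ht hc hreg htx hc' (by omega)
    have hcdist' := hπ.dist_apply ht hc hreg htx hc'' (by omega)
    have hwdist := hπ.dist_apply ht hc hreg htx hw hj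
    have hparent : π c = π c' := eq_of_txZero_of_dist_le hc htx (by omega) (hπ.adj hwc)
      (heq ▸ hπ.adj hwc') (by omega) (by omega)
    rw [← eq_of_dist_eq hπ ht hc hreg htx hc' hc'' (by omega) hparent] at hwc'
    exact hπ.injOn_neighborSet ht.2.2 hreg c hwc.symm hwc'.symm heq

lemma injOn_gball (hπ : IsCoverMap Gt G o x π) (ht : IsRegTree Gt (b + 1)) (hc : G.Connected)
    (hreg : IsReg G (b + 1)) (htx : TxZero G (gball G x k)) : InjOn π (gball Gt o k) := by
  intro w hw w' hw' heq
  have hdist := hπ.dist_apply ht hc hreg htx rfl hw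
  rw [heq, hπ.dist_apply ht hc hreg htx rfl hw'] at hdist
  exact hπ.eq_of_dist_eq ht hc hreg htx hdist.symm rfl hw' heq

end IsCoverMap

/-! ### Comparison of the two Gaussian fields around a vertex -/

section MesoEvent

variable {T V : Type*} {Gt : SimpleGraph T} {G : SimpleGraph V} {o obar : T} {x : V} {π : T → V}

/-- The event `A_x^{G,h,γ}` of the paper, read through the cover map `π` at `x`, for a sphere of
radius `r` and with a real number `X` in place of the threshold `N ^ γ`. -/
def mesoEvent (Gt : SimpleGraph T) (G : SimpleGraph V) (o obar : T) (π : T → V) (h : ℝ) (x : V)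
    (r : ℕ) (X : ℝ) : Set (V → ℝ) :=
  {ω | X ≤ ((levelComp G h ω x ∩ π '' spherePlus Gt o obar r).ncard : ℝ)}

lemma IsCoverMap.apply_mem_levelComp (hπ : IsCoverMap Gt G o x π) {h : ℝ} {ω : V → ℝ} {z : T}
    (hz : z ∈ levelComp Gt h (fun y => ω (π y)) o) : π z ∈ levelComp G h ω x := by
  obtain ⟨p, hp⟩ := hz
  obtain ⟨rfl, -⟩ := id hπ
  let φ : Gt →g G := ⟨π, hπ.adj⟩
  refine ⟨p.map φ, fun v hv => ?_⟩
  rw [SimpleGraph.Walk.support_map, List.mem_map] at hv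
  obtain ⟨y, hy, rfl⟩ := hv
  exact hp y hy

variable [Finite V] {b r : ℕ} {ch : T → T → Fin b → T}

lemma survivorCount_le_ncard (hG : Gt.IsTree) (hch : IsChildEnum Gt ch) (hq : Gt.Adj o obar)
    (hπ : IsCoverMap Gt G o x π) (hinj : InjOn π (gball Gt o r)) (h : ℝ) (ω : V → ℝ) :
    survivorCount h (fun w : Word b r => ω (π (wordVertex ch obar o w))) ≤
      (levelComp G h ω x ∩ π '' spherePlus Gt o obar r).ncard := by
  have hball (w : Word b r) : wordVertex ch obar o w ∈ gball Gt o r :=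
    (dist_wordVertex hG hch hq w).trans_le w.depth_le
  refine ncard_le_ncard_of_injOn (fun w => π (wordVertex ch obar o w)) (fun w hw => ?_)
    (fun w _ w' _ heq => wordVertex_injective hG hch hq (hinj (hball w) (hball w') heq))
    (toFinite _)
  have ⟨hmem, hdepth⟩ := mem_levelComp_of_survives (ω := fun y => ω (π y)) hch hq hw
  refine ⟨hπ.apply_mem_levelComp hmem, _, ⟨?_, ?_⟩, rfl⟩
  · change Gt.dist _ obar = Gt.dist _ o + 1
    rw [SimpleGraph.dist_comm, dist_parent_wordVertex hG hch hq, SimpleGraph.dist_comm,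
      dist_wordVertex hG hch hq]
  · rw [dist_wordVertex hG hch hq, hdepth]

end MesoEvent

lemma posSemidef_treeGreen_wordVertex {T : Type*} {Gt : SimpleGraph T} {o obar : T} {b r : ℕ}
    {ch : T → T → Fin b → T} (hb : 2 ≤ b) (hG : Gt.IsTree) (hch : IsChildEnum Gt ch)
    (hq : Gt.Adj o obar) :
    (Matrix.of fun w w' : Word b r =>
      treeGreen Gt (b + 1) (wordVertex ch obar o w) (wordVertex ch obar o w')).PosSemidef := by
  refine posSemidef_of_covForm_nonneg
    (fun w w' => by simp only [treeGreen, SimpleGraph.dist_comm]) fun c => ?_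
  simp_rw [treeGreen_wordVertex hb hG hch hq]
  rw [covForm_const_mul, covForm_treeDist]
  exact mul_nonneg NNReal.zero_le_coe
    (add_nonneg (sq_nonneg _) (innovationVar_nonneg (one_sub_inv_sq_pos hb).le c))

section CouplingError

variable {b N r : ℕ} {β : ℝ}

/-- The distance between the Green functions of the tree and of a graph with `N` vertices and
spectral gap `β`, at pairs of vertices for which balls of radius `m` are trees. -/
noncomputable def greenError (b : ℕ) (β : ℝ) (N m : ℕ) : ℝ :=
  β⁻¹ * √((b : ℝ)⁻¹ ^ m) + 2 * (b : ℝ)⁻¹ ^ m + 3 * m / N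

/-- The error in the comparison of the two Gaussian fields up to distance `r`, if `ε` is the change
of level. -/
noncomputable def couplingError (b : ℕ) (β ε : ℝ) (r : ℕ) : ℝ :=
  32 / ε ^ 2 * (β⁻¹ * √((b : ℝ)⁻¹) ^ r + 2 * (b : ℝ)⁻¹ ^ r + 15 * (r * (b : ℝ)⁻¹ ^ r))

lemma greenError_nonneg (hβ : 0 < β) (b N m : ℕ) : 0 ≤ greenError b β N m := by
  unfold greenError
  positivity

lemma couplingError_nonneg (hβ : 0 < β) (b : ℕ) (ε : ℝ) (r : ℕ) : 0 ≤ couplingError b β ε r := by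
  unfold couplingError
  positivity

lemma tendsto_couplingError (hb : 2 ≤ b) (β ε : ℝ) :
    Tendsto (couplingError b β ε) atTop (nhds 0) := by
  have hb0 : (0 : ℝ) ≤ (b : ℝ)⁻¹ := by positivity
  have hb1 : (b : ℝ)⁻¹ < 1 := inv_lt_one_of_one_lt₀ (by exact_mod_cast hb)
  have hsqrt := tendsto_pow_atTop_nhds_zero_of_lt_one (Real.sqrt_nonneg (b : ℝ)⁻¹)
    ((Real.sqrt_lt' one_pos).2 (by simpa using hb1))
  unfold couplingError
  simpa only [mul_zero, add_zero] using
    (((hsqrt.const_mul β⁻¹).add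
      ((tendsto_pow_atTop_nhds_zero_of_lt_one hb0 hb1).const_mul 2)).add
        ((tendsto_self_mul_const_pow_of_lt_one hb0 hb1).const_mul 15)).const_mul (32 / ε ^ 2)

lemma pow_mul_greenError_le (hb : 2 ≤ b) (hN : (b : ℝ) ^ (3 * r) ≤ N) :
    (b : ℝ) ^ (2 * r) * greenError b β N (5 * r) ≤
      β⁻¹ * √((b : ℝ)⁻¹) ^ r + 2 * (b : ℝ)⁻¹ ^ r + 15 * (r * (b : ℝ)⁻¹ ^ r) := by
  have hb' : (2 : ℝ) ≤ b := by exact_mod_cast hb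
  have hsqrt : (b : ℝ) ^ (2 * r) * √((b : ℝ)⁻¹ ^ (5 * r)) = √((b : ℝ)⁻¹) ^ r := by
    have hpow : (b : ℝ)⁻¹ ^ (5 * r) = ((b : ℝ)⁻¹ ^ (2 * r)) ^ 2 * (√((b : ℝ)⁻¹) ^ r) ^ 2 := by
      rw [← pow_mul √_, mul_comm r, pow_mul √_, Real.sq_sqrt (by positivity)]
      ring
    rw [hpow, ← mul_pow, Real.sqrt_sq (by positivity), ← mul_assoc, ← mul_pow,
      mul_inv_cancel₀ (by positivity), one_pow, one_mul]
  have hpow : (b : ℝ) ^ (2 * r) * (b : ℝ)⁻¹ ^ (5 * r) ≤ (b : ℝ)⁻¹ ^ r := by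
    rw [show 5 * r = 2 * r + 3 * r by ring, pow_add, ← mul_assoc, ← mul_pow,
      mul_inv_cancel₀ (by positivity), one_pow, one_mul]
    exact pow_le_pow_of_le_one (by positivity) (inv_le_one_of_one_le₀ (by linarith)) (by omega)
  have hcard : (b : ℝ) ^ (2 * r) * (N : ℝ)⁻¹ ≤ (b : ℝ)⁻¹ ^ r := by
    calc (b : ℝ) ^ (2 * r) * (N : ℝ)⁻¹ ≤ (b : ℝ) ^ (2 * r) * ((b : ℝ) ^ (3 * r))⁻¹ := by gcongr
      _ = (b : ℝ)⁻¹ ^ r := by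
        rw [show 3 * r = 2 * r + r by ring, pow_add, mul_inv, inv_pow,
          mul_inv_cancel_left₀ (by positivity)]
  calc (b : ℝ) ^ (2 * r) * greenError b β N (5 * r)
      = β⁻¹ * ((b : ℝ) ^ (2 * r) * √((b : ℝ)⁻¹ ^ (5 * r))) +
          2 * ((b : ℝ) ^ (2 * r) * (b : ℝ)⁻¹ ^ (5 * r)) +
          15 * (r * ((b : ℝ) ^ (2 * r) * (N : ℝ)⁻¹)) := by
        rw [greenError]
        push_cast
        ring
    _ ≤ _ := by rw [hsqrt]; gcongr

lemma card_word_mul_greenError_le (hb : 2 ≤ b) (hβ : 0 < β) (hN : (b : ℝ) ^ (3 * r) ≤ N) (ε : ℝ) :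
    2 * (Fintype.card (Word b r) * ((Fintype.card (Word b r) + 1) *
      greenError b β N (5 * r) / (ε / 2) ^ 2)) ≤ couplingError b β ε r := by
  have hcard : (Fintype.card (Word b r) : ℝ) + 1 ≤ 2 * (b : ℝ) ^ r := by
    exact_mod_cast card_add_one_le hb r
  have hgreen := greenError_nonneg hβ b N (5 * r)
  calc 2 * (Fintype.card (Word b r) * ((Fintype.card (Word b r) + 1) *
        greenError b β N (5 * r) / (ε / 2) ^ 2))
      ≤ 2 * (2 * (b : ℝ) ^ r * (2 * (b : ℝ) ^ r * greenError b β N (5 * r) / (ε / 2) ^ 2)) := by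
        gcongr
        linarith
    _ = 32 / ε ^ 2 * ((b : ℝ) ^ (2 * r) * greenError b β N (5 * r)) := by ring
    _ ≤ couplingError b β ε r :=
        mul_le_mul_of_nonneg_left (pow_mul_greenError_le hb hN) (by positivity)

end CouplingError

section LocalComparison

variable {T V : Type*} [Fintype V] {Gt : SimpleGraph T} {G : SimpleGraph V} {o obar : T} {x : V}
  {π : T → V} {b r k : ℕ} {β : ℝ}

lemma abs_zGreen_sub_treeGreen_le_greenError (hb : 2 ≤ b) (ht : IsRegTree Gt (b + 1))
    (hc : G.Connected) (hreg : IsReg G (b + 1)) (hgap : SpectralGapLB G (b + 1) β) (hβ : 0 < β)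
    (hπ : IsCoverMap Gt G o x π) (hinj : InjOn π (gball Gt o (6 * r))) (hr : 1 ≤ r) {y z : T}
    (hy : y ∈ gball Gt o r) (hz : z ∈ gball Gt o r) :
    |zGreen G (b + 1) (Fintype.card V) (π y) (π z) - treeGreen Gt (b + 1) y z| ≤
      greenError b β (Fintype.card V) (5 * r) := by
  replace hy : Gt.dist o y ≤ r := hy
  replace hz : Gt.dist o z ≤ r := hz
  have htri := ht.1.dist_triangle (u := z) (v := o) (w := y)
  rw [SimpleGraph.dist_comm (u := z) (v := o)] at htri
  obtain ⟨m, hm⟩ : ∃ m, 5 * r = m + 1 := ⟨5 * r - 1, by omega⟩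
  rw [hm, greenError, Nat.cast_add_one]
  exact abs_zGreen_sub_treeGreen_le hb ht hreg hc hgap hβ hπ
    (hinj.mono (gball_subset_gball ht.1 (by omega))) (show Gt.dist z y ≤ m + 1 by omega)

lemma branchLaw_le_measure_mesoEvent_add (hb : 2 ≤ b) (ht : IsRegTree Gt (b + 1))
    (hq : Gt.Adj o obar) (hc : G.Connected) (hreg : IsReg G (b + 1))
    (hgap : SpectralGapLB G (b + 1) β) (hβ : 0 < β) {μ : Measure (V → ℝ)}
    (hμ : IsGaussianField μ (zGreen G (b + 1) (Fintype.card V))) (hπ : IsCoverMap Gt G o x π)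
    (hinj : InjOn π (gball Gt o (6 * r))) (hr : 1 ≤ r)
    (hN : (b : ℝ) ^ (3 * r) ≤ Fintype.card V) (h : ℝ) {ε : ℝ} (hε : 0 < ε) (X : ℝ) :
    branchLaw b (treeVar b) (treeCondVar b) r {f | X ≤ survivorCount (h + ε) f} ≤
      μ (mesoEvent Gt G o obar π h x r X) + ENNReal.ofReal (couplingError b β ε r) := by
  have hG : Gt.IsTree := ⟨ht.1, ht.2.1⟩
  obtain ⟨ch, hch⟩ := exists_isChildEnum ht.2.2
  have hball (w : Word b r) : wordVertex ch obar o w ∈ gball Gt o r :=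
    (dist_wordVertex hG hch hq w).trans_le w.depth_le
  have htree := isGaussianField_branchLaw (b := b) (coe_treeCondVar hb) r
  simp_rw [← treeGreen_wordVertex hb hG hch hq] at htree
  have hcompare := (hμ.comp_index fun w : Word b r =>
    π (wordVertex ch obar o w)).measure_le_measure_thickening_add htree
      ((posSemidef_zGreen hreg b.succ_ne_zero hc hgap hβ).submatrix _)
      (posSemidef_treeGreen_wordVertex hb hG hch hq) (greenError_nonneg hβ b _ (5 * r))
      (fun w w' => abs_zGreen_sub_treeGreen_le_greenError hb ht hc hreg hgap hβ hπ hinj hr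
        (hball w) (hball w')) {f | X ≤ survivorCount (h + ε) f} (half_pos hε)
  refine hcompare.trans (add_le_add ?_
    (ENNReal.ofReal_le_ofReal (card_word_mul_greenError_le hb hβ hN ε)))
  rw [Measure.map_apply (by fun_prop) Metric.isOpen_thickening.measurableSet]
  refine measure_mono fun ω hω => ?_
  obtain ⟨f, hf, hdist⟩ := Metric.mem_thickening_iff.1 hω
  rw [mul_div_cancel₀ ε two_ne_zero, dist_pi_lt_iff hε] at hdist
  have hlevel : survivorCount (h + ε) f ≤
      survivorCount h fun w : Word b r => ω (π (wordVertex ch obar o w)) :=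
    survivorCount_mono fun w hw => by linarith [(abs_lt.1 (hdist w)).1]
  exact (show X ≤ survivorCount (h + ε) f from hf).trans (Nat.cast_le.2 (hlevel.trans
    (survivorCount_le_ncard hG hch hq hπ
      (hinj.mono (gball_mono o (by omega))) h ω)))

end LocalComparison

/-! ### The scales `r_n` and `R_n` -/

section Scales

variable {b N : ℕ} {α β q : ℝ}

lemma rn_succ (b : ℕ) (α β : ℝ) (N : ℕ) :
    rn (b + 1) α β N = max 1 ⌊c0 (b + 1) α β / 18 * Real.logb b N⌋₊ := by
  rw [rn, Nat.cast_add_one, add_sub_cancel_right]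

lemma Rn_succ (b : ℕ) (α β : ℝ) (N : ℕ) :
    Rn (b + 1) α β N = max 1 ⌊c0 (b + 1) α β / 6 * Real.logb b N⌋₊ := by
  rw [Rn, Nat.cast_add_one, add_sub_cancel_right]

lemma c0_mul_logb_lt_rn_add_one (b : ℕ) (α β : ℝ) (N : ℕ) :
    c0 (b + 1) α β / 18 * Real.logb b N < rn (b + 1) α β N + 1 := by
  rw [rn_succ, Nat.cast_max]
  exact (Nat.lt_floor_add_one _).trans_le (by gcongr; exact le_max_right _ _)

lemma rn_le (hN : 18 ≤ c0 (b + 1) α β * Real.logb b N) :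
    (rn (b + 1) α β N : ℝ) ≤ c0 (b + 1) α β / 18 * Real.logb b N := by
  rw [rn_succ, Nat.cast_max, Nat.cast_one]
  exact max_le (by linarith) (Nat.floor_le (by linarith))

lemma Rn_le (hN : 6 ≤ c0 (b + 1) α β * Real.logb b N) :
    (Rn (b + 1) α β N : ℝ) ≤ c0 (b + 1) α β / 6 * Real.logb b N := by
  rw [Rn_succ, Nat.cast_max, Nat.cast_one]
  exact max_le (by linarith) (Nat.floor_le (by linarith))

lemma three_mul_rn_le_Rn (hN : 18 ≤ c0 (b + 1) α β * Real.logb b N) :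
    3 * rn (b + 1) α β N ≤ Rn (b + 1) α β N := by
  have hr := rn_le hN
  rw [Rn_succ]
  refine le_max_of_le_right (Nat.le_floor ?_)
  push_cast
  linarith

lemma pow_three_mul_rn_le (hb : 2 ≤ b) (hc0 : c0 (b + 1) α β ≤ 1) (hN1 : 1 ≤ N)
    (hN : 18 ≤ c0 (b + 1) α β * Real.logb b N) : (b : ℝ) ^ (3 * rn (b + 1) α β N) ≤ N := by
  have hb' : (1 : ℝ) < b := by exact_mod_cast hb
  have hN1' : (1 : ℝ) ≤ N := by exact_mod_cast hN1
  have hlog : c0 (b + 1) α β * Real.logb b N ≤ 1 * Real.logb b N :=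
    mul_le_mul_of_nonneg_right hc0 (Real.logb_nonneg hb' hN1')
  rw [← Real.rpow_natCast, ← Real.le_logb_iff_rpow_le hb' (by linarith)]
  push_cast
  linarith [rn_le hN]

lemma rpow_le_pow_rn_add_one (hb : 2 ≤ b) (hN : 1 ≤ N) (hq : 1 < q) :
    (N : ℝ) ^ (c0 (b + 1) α β / 18 * Real.logb b q) ≤ q ^ (rn (b + 1) α β N + 1) := by
  have hb' : (1 : ℝ) < b := by exact_mod_cast hb
  have hN' : (1 : ℝ) ≤ N := by exact_mod_cast hN
  have hlog : Real.logb b ((N : ℝ) ^ (c0 (b + 1) α β / 18 * Real.logb b q)) =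
      c0 (b + 1) α β / 18 * Real.logb b N * Real.logb b q := by
    rw [Real.logb_rpow_eq_mul_logb_of_pos (by linarith)]
    ring
  rw [← Real.logb_le_logb hb' (by positivity) (by positivity), hlog, Real.logb_pow]
  push_cast
  exact mul_le_mul_of_nonneg_right (c0_mul_logb_lt_rn_add_one b α β N).le
    (Real.logb_nonneg hb' hq.le)

lemma c0_succ (b : ℕ) (α β : ℝ) : c0 (b + 1) α β = α * β / b := by
  rw [c0, Nat.cast_add_one, add_sub_cancel_right]

lemma c0_le_half (hb : 2 ≤ b) (hα : 0 ≤ α) (hβ : β ≤ 1) : c0 (b + 1) α β ≤ α / 2 := by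
  rw [c0_succ]
  exact div_le_div₀ hα (mul_le_of_le_one_right hα hβ) two_pos (by exact_mod_cast hb)

end Scales

/-! ### Sequences of graphs -/

/-- The standing assumptions of the paper on the graphs `G n`, which have `N n` vertices and are
`(b + 1)`-regular: `α` is the scale of the balls with at most one cycle and `β` the lower bound on
the spectral gap. -/
structure IsExpanderSeq {V : ℕ → Type*} [∀ n, Fintype (V n)] (G : ∀ n, SimpleGraph (V n))
    (N : ℕ → ℕ) (b : ℕ) (α β : ℝ) : Prop where
  alpha_pos : 0 < α
  alpha_le_one : α ≤ 1
  beta_pos : 0 < β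
  strictMono : StrictMono N
  card_eq : ∀ n, Fintype.card (V n) = N n
  connected : ∀ n, (G n).Connected
  isReg : ∀ n, IsReg (G n) (b + 1)
  adjPairs_gball_le : ∀ n x, adjPairs (G n) (gball (G n) x ⌊α * Real.logb b (N n)⌋₊) ≤
    2 * (gball (G n) x ⌊α * Real.logb b (N n)⌋₊).ncard
  spectralGapLB : ∀ n, SpectralGapLB (G n) (b + 1) β

namespace IsExpanderSeq

variable {V : ℕ → Type*} [∀ n, Fintype (V n)] {G : ∀ n, SimpleGraph (V n)} {N : ℕ → ℕ} {b : ℕ}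
  {α β : ℝ}

lemma one_le_card (hG : IsExpanderSeq G N b α β) (n : ℕ) : 1 ≤ N n := by
  have := (hG.connected n).nonempty
  exact hG.card_eq n ▸ Fintype.card_pos

lemma tendsto_card (hG : IsExpanderSeq G N b α β) : Tendsto (fun n => (N n : ℝ)) atTop atTop :=
  tendsto_natCast_atTop_atTop.comp hG.strictMono.tendsto_atTop

lemma tendsto_logb (hG : IsExpanderSeq G N b α β) (hb : 2 ≤ b) :
    Tendsto (fun n => Real.logb b (N n)) atTop atTop :=
  (Real.tendsto_logb_atTop (by exact_mod_cast hb)).comp hG.tendsto_card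

lemma beta_le_one (hG : IsExpanderSeq G N b α β) : β ≤ 1 := by
  by_contra! hlt
  obtain ⟨n, hn⟩ := ((hG.tendsto_card.const_mul_atTop (sub_pos.2 hlt)).eventually_gt_atTop β).exists
  have htrace :=
    mul_card_sub_one_le_card (hG.isReg n) b.succ_ne_zero (hG.connected n) (hG.spectralGapLB n)
  rw [hG.card_eq] at htrace
  linarith

lemma c0_pos (hG : IsExpanderSeq G N b α β) (hb : 2 ≤ b) : 0 < c0 (b + 1) α β := by
  rw [c0_succ]
  have := hG.alpha_pos
  have := hG.beta_pos
  positivity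

lemma c0_le_one (hG : IsExpanderSeq G N b α β) (hb : 2 ≤ b) : c0 (b + 1) α β ≤ 1 := by
  linarith [c0_le_half hb hG.alpha_pos.le hG.beta_le_one, hG.alpha_le_one]

lemma eventually_le_c0_mul_logb (hG : IsExpanderSeq G N b α β) (hb : 2 ≤ b) :
    ∀ᶠ n in atTop, 18 ≤ c0 (b + 1) α β * Real.logb b (N n) :=
  ((hG.tendsto_logb hb).const_mul_atTop (hG.c0_pos hb)).eventually_ge_atTop 18

lemma tendsto_rn (hG : IsExpanderSeq G N b α β) (hb : 2 ≤ b) :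
    Tendsto (fun n => rn (b + 1) α β (N n)) atTop atTop := by
  rw [← tendsto_natCast_atTop_iff (R := ℝ)]
  have hc0 := hG.c0_pos hb
  refine tendsto_atTop_mono (fun n => ?_) (tendsto_atTop_add_const_right atTop (-1)
    ((hG.tendsto_logb hb).const_mul_atTop (show 0 < c0 (b + 1) α β / 18 by positivity)))
  linarith [c0_mul_logb_lt_rn_add_one b α β (N n)]

lemma tendsto_card_not_txZero (hG : IsExpanderSeq G N b α β) (hb : 2 ≤ b) :
    Tendsto (fun n => (N n : ℝ)⁻¹ *
      Finset.card {x | ¬ TxZero (G n) (gball (G n) x (2 * Rn (b + 1) α β (N n)))})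
      atTop (nhds 0) := by
  have hα := hG.alpha_pos
  have hb1 : (b : ℝ)⁻¹ < 1 := inv_lt_one_of_one_lt₀ (by exact_mod_cast hb)
  set t : ℕ → ℕ := fun n => ⌊α / 24 * Real.logb b (N n)⌋₊
  have ht : Tendsto t atTop atTop := tendsto_nat_floor_atTop.comp
    ((hG.tendsto_logb hb).const_mul_atTop (by positivity))
  refine squeeze_zero' (.of_forall fun n => by positivity) ?_
    ((tendsto_pow_atTop_nhds_zero_of_lt_one (by positivity) hb1).comp ht)
  filter_upwards [hG.eventually_le_c0_mul_logb hb,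
    (hG.tendsto_logb hb).eventually_ge_atTop 0] with n hn hlog
  have hc0 := mul_le_mul_of_nonneg_right (c0_le_half hb hα.le hG.beta_le_one) hlog
  have htn : (t n : ℝ) ≤ α / 24 * Real.logb b (N n) := Nat.floor_le (by positivity)
  have := mul_nonneg hα.le hlog
  have hscales : 5 * (2 * Rn (b + 1) α β (N n)) + 2 * t n ≤ ⌊α * Real.logb b (N n)⌋₊ := by
    refine Nat.le_floor ?_
    push_cast
    linarith [Rn_le (hn.trans' (by norm_num : (6 : ℝ) ≤ 18))]
  have hbad := pow_mul_card_not_txZero_le (hG.connected n) (hG.isReg n) hscales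
    (hG.adjPairs_gball_le n)
  rw [hG.card_eq] at hbad
  have hN : (0 : ℝ) < N n := by exact_mod_cast hG.one_le_card n
  rw [Function.comp_apply, inv_pow, inv_mul_le_iff₀ hN, ← div_eq_mul_inv,
    le_div_iff₀ (by positivity), mul_comm]
  exact_mod_cast hbad

end IsExpanderSeq

/-! ### The mesoscopic event -/

-- With marks of probability `q⁻¹ ^ (2 * r)`, both losses in the survival bound become small.
lemma one_div_mul_pow_add_mul_le {q X : ℝ} {r : ℕ} (hq : 1 < q) (hX : X ≤ q ^ (r + 1)) :
    1 / (q⁻¹ ^ (2 * r) * (q ^ 4) ^ r) + q⁻¹ ^ (2 * r) * X ≤ (1 + q) * q⁻¹ ^ r := by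
  have hloss : 1 / (q⁻¹ ^ (2 * r) * (q ^ 4) ^ r) = q⁻¹ ^ r * q⁻¹ ^ r := by
    rw [← pow_mul, show 4 * r = 2 * r + (r + r) by ring, pow_add, ← mul_assoc, ← mul_pow,
      inv_mul_cancel₀ (by positivity), one_pow, one_mul, pow_add, one_div, mul_inv, inv_pow]
  calc 1 / (q⁻¹ ^ (2 * r) * (q ^ 4) ^ r) + q⁻¹ ^ (2 * r) * X
      ≤ 1 * q⁻¹ ^ r + q⁻¹ ^ (2 * r) * q ^ (r + 1) := by
        rw [hloss]
        gcongr
        exact pow_le_one₀ (by positivity) (inv_le_one_of_one_le₀ hq.le)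
    _ = (1 + q) * q⁻¹ ^ r := by
        rw [two_mul, pow_add, pow_succ, ← mul_assoc, mul_assoc (q⁻¹ ^ r) (q⁻¹ ^ r), ← mul_pow,
          inv_mul_cancel₀ (by positivity), one_pow]
        ring

lemma etaPlus_sub_le_measureReal_mesoEvent {T V : Type*} [Fintype V] {Gt : SimpleGraph T}
    {G : SimpleGraph V} {o obar : T} {x : V} {π : T → V} {b r : ℕ} {β δ q h ε X : ℝ}
    {μT : Measure (T → ℝ)} {μ : Measure (V → ℝ)} (hb : 2 ≤ b) (ht : IsRegTree Gt (b + 1))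
    (hq : Gt.Adj o obar) (hμT : IsGaussianField μT (treeGreen Gt (b + 1))) (hc : G.Connected)
    (hreg : IsReg G (b + 1)) (hgap : SpectralGapLB G (b + 1) β) (hβ : 0 < β)
    (hμ : IsGaussianField μ (zGreen G (b + 1) (Fintype.card V))) (hπ : IsCoverMap Gt G o x π)
    (hinj : InjOn π (gball Gt o (6 * r))) (hr : 1 ≤ r)
    (hN : (b : ℝ) ^ (3 * r) ≤ Fintype.card V) (hε : 0 < ε)
    (hδ : HasSurvivalBound b (h + ε) δ) (hδ0 : 0 < δ) (hδ1 : δ ≤ 1) (hq1 : 1 < q)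
    (hqδ : q ^ 4 = 1 + δ ^ 2) (hX0 : 0 ≤ X) (hX : X ≤ q ^ (r + 1)) :
    etaPlus Gt o obar μT (h + ε) - ((1 + q) * q⁻¹ ^ r + couplingError b β ε r) ≤
      μ.real (mesoEvent Gt G o obar π h x r X) := by
  have := hμ.1
  have hcompare := ENNReal.toReal_mono (by finiteness)
    (branchLaw_le_measure_mesoEvent_add hb ht hq hc hreg hgap hβ hμ hπ hinj hr hN h hε X)
  rw [ENNReal.toReal_add (by finiteness) (by finiteness),
    ENNReal.toReal_ofReal (couplingError_nonneg hβ b ε r)] at hcompare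
  have hsurvive := hδ.reachProb_sub_le_measureReal hb hδ0 hδ1 r (t := q⁻¹ ^ (2 * r))
    (by positivity) (pow_le_one₀ (by positivity) (inv_le_one_of_one_le₀ hq1.le)) hX0
  rw [← hqδ] at hsurvive
  have hloss := one_div_mul_pow_add_mul_le hq1 hX
  have heta := etaPlus_le_reachProb hb ht hq hμT (h + ε) r
  simp only [measureReal_def] at hsurvive ⊢
  linarith

lemma exists_one_lt_pow_four_eq {a : ℝ} (ha : 1 < a) : ∃ q : ℝ, 1 < q ∧ q ^ 4 = a := by
  refine ⟨√√a, ?_, ?_⟩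
  · rwa [Real.lt_sqrt zero_le_one, one_pow, Real.lt_sqrt zero_le_one, one_pow]
  · rw [show 4 = 2 * 2 from rfl, pow_mul, Real.sq_sqrt (Real.sqrt_nonneg _),
      Real.sq_sqrt (by linarith)]

lemma le_liminf_average_of_forall_sub_le {ι : ℕ → Type*} [∀ n, Fintype (ι n)]
    [∀ n, Nonempty (ι n)] {p : ∀ n, ι n → ℝ} {good : ∀ n, ι n → Prop} {η : ℝ}
    (hp0 : ∀ n x, 0 ≤ p n x) (hp1 : ∀ n x, p n x ≤ 1)
    (hbad : Tendsto (fun n => (Fintype.card (ι n) : ℝ)⁻¹ * Finset.card {x | ¬ good n x})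
      atTop (nhds 0))
    (hgood : ∀ ζ > 0, ∀ᶠ n in atTop, ∀ x, good n x → η - ζ ≤ p n x) :
    η ≤ liminf (fun n => (Fintype.card (ι n) : ℝ)⁻¹ * ∑ x, p n x) atTop := by
  have hcard (n : ℕ) : (0 : ℝ) < Fintype.card (ι n) := by exact_mod_cast Fintype.card_pos
  have hle_one (n : ℕ) : (Fintype.card (ι n) : ℝ)⁻¹ * ∑ x, p n x ≤ 1 := by
    rw [inv_mul_le_iff₀ (hcard n), mul_one]
    simpa using Finset.sum_le_card_nsmul Finset.univ (p n) 1 fun x _ => hp1 n x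
  refine le_of_forall_pos_sub_le fun ζ hζ => ?_
  have hlim : Tendsto (fun n => (η - ζ) * (1 - (Fintype.card (ι n) : ℝ)⁻¹ *
      Finset.card {x | ¬ good n x})) atTop (nhds (η - ζ)) := by
    simpa using (hbad.const_sub 1).const_mul (η - ζ)
  rw [← hlim.liminf_eq]
  refine liminf_le_liminf ?_ hlim.isBoundedUnder_ge
    (isBoundedUnder_of ⟨1, hle_one⟩ : IsBoundedUnder (· ≤ ·) atTop _).isCoboundedUnder_ge
  filter_upwards [hgood ζ hζ] with n hn
  have hsplit : (Finset.card {x | good n x} : ℝ) + Finset.card {x | ¬ good n x} =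
      Fintype.card (ι n) := by
    exact_mod_cast Finset.card_filter_add_card_filter_not (s := Finset.univ) (good n)
  calc (η - ζ) * (1 - (Fintype.card (ι n) : ℝ)⁻¹ * Finset.card {x | ¬ good n x})
      = (Fintype.card (ι n) : ℝ)⁻¹ * (Finset.card {x | good n x} * (η - ζ)) := by
        rw [eq_sub_of_add_eq hsplit, ← mul_assoc, mul_sub _ (Fintype.card _ : ℝ),
          inv_mul_cancel₀ (hcard n).ne', mul_comm]
    _ ≤ (Fintype.card (ι n) : ℝ)⁻¹ * ∑ x with good n x, p n x := by
        gcongr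
        rw [← nsmul_eq_mul]
        exact Finset.card_nsmul_le_sum _ _ _ fun x hx => hn x (Finset.mem_filter.1 hx).2
    _ ≤ (Fintype.card (ι n) : ℝ)⁻¹ * ∑ x, p n x := by
        gcongr
        · exact fun x _ _ => hp0 n x
        · exact Finset.filter_subset _ _

namespace IsExpanderSeq

variable {V : ℕ → Type*} [∀ n, Fintype (V n)] {G : ∀ n, SimpleGraph (V n)} {N : ℕ → ℕ} {b : ℕ}
  {α β h : ℝ} {T : Type*} {Gt : SimpleGraph T} {o obar : T} {μT : Measure (T → ℝ)}

lemma exists_eventually_etaPlus_sub_le (hG : IsExpanderSeq G N b α β) (hb : 2 ≤ b)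
    (ht : IsRegTree Gt (b + 1)) (hq : Gt.Adj o obar)
    (hμT : IsGaussianField μT (treeGreen Gt (b + 1))) {μ : ∀ n, Measure (V n → ℝ)}
    (hμ : ∀ n, IsGaussianField (μ n) (zGreen (G n) (b + 1) (N n))) {π : ∀ n, V n → T → V n}
    (hπ : ∀ n x, IsCoverMap Gt (G n) o x (π n x)) (hh : h < hstar Gt o μT) :
    ∃ c : ℝ, 0 < c ∧ ∀ ε ζ, 0 < ε → ε < (hstar Gt o μT - h) / 2 → 0 < ζ →
      ∀ᶠ n in atTop, ∀ x, TxZero (G n) (gball (G n) x (2 * Rn (b + 1) α β (N n))) →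
        etaPlus Gt o obar μT (h + ε) - ζ ≤
          (μ n).real (mesoEvent Gt (G n) o obar (π n x) h x (rn (b + 1) α β (N n)) (N n ^ c)) := by
  obtain ⟨δ, hδ0, hδ1, hδ⟩ := exists_hasSurvivalBound_of_lt_hstar hb ht hq hμT hh
  obtain ⟨q, hq1, hqδ⟩ := exists_one_lt_pow_four_eq (show 1 < 1 + δ ^ 2 by nlinarith)
  have hlogq : 0 < Real.logb b q := Real.logb_pos (by exact_mod_cast hb) hq1
  have hc0 := hG.c0_pos hb
  refine ⟨c0 (b + 1) α β / 18 * Real.logb b q, by positivity, fun ε ζ hε hεh hζ => ?_⟩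
  have herror : Tendsto (fun r => (1 + q) * q⁻¹ ^ r + couplingError b β ε r) atTop (nhds 0) := by
    simpa using ((tendsto_pow_atTop_nhds_zero_of_lt_one (by positivity)
      (inv_lt_one_of_one_lt₀ hq1)).const_mul (1 + q)).add (tendsto_couplingError hb β ε)
  filter_upwards [hG.eventually_le_c0_mul_logb hb,
    (herror.comp (hG.tendsto_rn hb)).eventually_lt_const hζ] with n hn hsmall x hx
  have hinj := (hπ n x).injOn_gball ht (hG.connected n) (hG.isReg n) hx
  have hscales : 6 * rn (b + 1) α β (N n) ≤ 2 * Rn (b + 1) α β (N n) := by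
    have := three_mul_rn_le_Rn hn
    omega
  refine (sub_le_sub_left hsmall.le _).trans (etaPlus_sub_le_measureReal_mesoEvent hb ht hq hμT
    (hG.connected n) (hG.isReg n) (hG.spectralGapLB n) hG.beta_pos (hG.card_eq n ▸ hμ n) (hπ n x)
    (hinj.mono (gball_mono o hscales)) (le_max_left _ _) ?_ hε (hδ _ ⟨?_, ?_⟩) hδ0 hδ1 hq1 hqδ
    (by positivity) (rpow_le_pow_rn_add_one hb (hG.one_le_card n) hq1))
  · rw [hG.card_eq]
    exact pow_three_mul_rn_le hb (hG.c0_le_one hb) (hG.one_le_card n) hn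
  · linarith
  · linarith

lemma etaPlus_le_liminf (hG : IsExpanderSeq G N b α β) (hb : 2 ≤ b) (ht : IsRegTree Gt (b + 1))
    (hq : Gt.Adj o obar) (hμT : IsGaussianField μT (treeGreen Gt (b + 1)))
    (hh : h < hstar Gt o μT) {p : ∀ n, V n → ℝ} (hp0 : ∀ n x, 0 ≤ p n x) (hp1 : ∀ n x, p n x ≤ 1)
    (hp : ∀ ε ζ, 0 < ε → ε < (hstar Gt o μT - h) / 2 → 0 < ζ → ∀ᶠ n in atTop, ∀ x,
      TxZero (G n) (gball (G n) x (2 * Rn (b + 1) α β (N n))) →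
        etaPlus Gt o obar μT (h + ε) - ζ ≤ p n x) :
    etaPlus Gt o obar μT h ≤ liminf (fun n => (N n : ℝ)⁻¹ * ∑ x, p n x) atTop := by
  have (n : ℕ) := (hG.connected n).nonempty
  have hbad := hG.tendsto_card_not_txZero hb
  simp_rw [← hG.card_eq] at hbad hp ⊢
  refine le_liminf_average_of_forall_sub_le hp0 hp1 hbad fun ζ hζ => ?_
  have hright : h < h + (hstar Gt o μT - h) / 2 := by linarith
  obtain ⟨h', heta, hlt, hlt'⟩ := ((eventually_etaPlus_sub_le_etaPlus hb ht hq hμT hh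
    (half_pos hζ)).and (Ioo_mem_nhdsGT hright)).exists
  filter_upwards [hp (h' - h) (ζ / 2) (by linarith) (by linarith) (half_pos hζ)] with n hn x hx
  have := hn x hx
  rw [add_sub_cancel] at this
  linarith

end IsExpanderSeq

end GFF

/-- lower bound on the probability of the mesoscopic event
`A_x^{G_n,h,c_h}` in the supercritical phase, and the resulting first-moment bound. -/
theorem supercritical_event_probability_lower_bound
    (d : ℕ) (hd : 3 ≤ d)
    (V : ℕ → Type) [∀ n, Fintype (V n)]
    (G : ∀ n, SimpleGraph (V n)) (N : ℕ → ℕ) (α β : ℝ)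
    (hα : 0 < α ∧ α ≤ 1) (hβ : 0 < β ∧ β ≤ 2)
    (hNmono : StrictMono N) (hNpos : ∀ n, 1 ≤ N n)
    (hcard : ∀ n, Nat.card (V n) = N n)
    (hconn : ∀ n, (G n).Connected)
    (hreg : ∀ n, GFF.IsReg (G n) d)
    (hcyc : ∀ n (x : V n),
      GFF.adjPairs (G n) (GFF.gball (G n) x ⌊α * Real.logb ((d : ℝ) - 1) (N n : ℝ)⌋₊) ≤
        2 * (GFF.gball (G n) x ⌊α * Real.logb ((d : ℝ) - 1) (N n : ℝ)⌋₊).ncard)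
    (hgap : ∀ n, GFF.SpectralGapLB (G n) d β)
    (μ : ∀ n, Measure (V n → ℝ))
    (hμ : ∀ n, GFF.IsGaussianField (μ n) (GFF.zGreen (G n) d (N n)))
    (T : Type) (Gt : SimpleGraph T) (o obar : T) (hobar : Gt.Adj o obar)
    (htree : GFF.IsRegTree Gt d)
    (μT : Measure (T → ℝ)) (hμT : GFF.IsGaussianField μT (GFF.treeGreen Gt d))
    (cov : ∀ n, V n → T → V n) (hcov : ∀ n x, GFF.IsCoverMap Gt (G n) o x (cov n x))
    (h : ℝ) (hh : h < GFF.hstar Gt o μT) :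
    ∃ c : ℝ, 0 < c ∧
      (∀ ε ζ : ℝ, 0 < ε → ε < (GFF.hstar Gt o μT - h) / 2 → 0 < ζ →
        ∃ n₀ : ℕ, ∀ n ≥ n₀, ∀ x : V n,
          GFF.TxZero (G n) (GFF.gball (G n) x (2 * GFF.Rn d α β (N n))) →
          ENNReal.ofReal (GFF.etaPlus Gt o obar μT (h + ε) - ζ) ≤
            μ n {ω | (N n : ℝ) ^ c ≤
              ((GFF.levelComp (G n) h ω x ∩
                cov n x '' GFF.spherePlus Gt o obar (GFF.rn d α β (N n))).ncard : ℝ)}) ∧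
      (GFF.etaPlus Gt o obar μT h ≤
          Filter.liminf
            (fun n => (N n : ℝ)⁻¹ * ∑ x : V n,
              (μ n {ω | (N n : ℝ) ^ c ≤
                ((GFF.levelComp (G n) h ω x ∩
                  cov n x '' GFF.spherePlus Gt o obar (GFF.rn d α β (N n))).ncard : ℝ)}).toReal)
            Filter.atTop ∧
        0 < GFF.etaPlus Gt o obar μT h) := by
  obtain ⟨b, rfl⟩ : ∃ b, d = b + 1 := ⟨d - 1, by omega⟩
  have hb : 2 ≤ b := by omega
  simp only [Nat.cast_add_one, add_sub_cancel_right] at hcyc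
  have hG : GFF.IsExpanderSeq G N b α β :=
    ⟨hα.1, hα.2, hβ.1, hNmono, fun n => Nat.card_eq_fintype_card.symm.trans (hcard n), hconn, hreg,
      hcyc, hgap⟩
  have (n : ℕ) := (hμ n).1
  obtain ⟨c, hc, hmeso⟩ := hG.exists_eventually_etaPlus_sub_le hb htree hobar hμT hμ hcov hh
  refine ⟨c, hc, fun ε ζ hε hεh hζ => ?_, ?_, GFF.etaPlus_pos hb htree hobar hμT hh⟩
  · obtain ⟨n₀, hn₀⟩ := eventually_atTop.1 (hmeso ε ζ hε hεh hζ)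
    exact ⟨n₀, fun n hn x hx => ENNReal.ofReal_le_of_le_toReal (hn₀ n hn x hx)⟩
  · exact hG.etaPlus_le_liminf hb htree hobar hμT hh (fun _ _ => measureReal_nonneg)
      (fun _ _ => measureReal_le_one) hmeso
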